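/- arXiv:0911.3565 — 2 statements merged into one kernel-verified Lean document; each statement's English description precedes it below -/
import Mathlib

section
/- Let λ ∈ K∖{0,1} satisfy λ^2 − λ + 1 ≠ 0, and let L_λ = y_2^2 y_3 − y_1(y_1 − y_3)(y_1 − λy_3) ∈ K[y_1,y_2,y_3]. Then Ann_R(L_λ) = (x_1x_2, H_1, H_2), where H_1 = λ^2x_1^2 + λ(1+λ)x_1x_3 + (λ^2−λ+1)x_3^2 and H_2 = λ^2x_2^2 + λx_1x_3 + (1+λ)x_3^2; in particular this ideal is a complete intersection and R/Ann_R(L_λ) has Hilbert function {1,3,3,1}. -/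
/-- The contraction (derivative) action of the power series ring
`R = K[[x_1,…,x_n]]` on the polynomial ring `P = K[y_1,…,y_n]`:
`f ∘ g = f(∂/∂y_1, …, ∂/∂y_n)(g)`.  It is defined on the monomial basis by
`x^α ∘ y^β = (∏ i, (β i)!/(β i - α i)!) y^(β-α)` (zero unless `α ≤ β`), the honest
iterated partial derivative, and extended `K`-linearly. -/
noncomputable def contract {K : Type*} [Field K] {n : ℕ} (f : MvPowerSeries (Fin n) K) :
    MvPolynomial (Fin n) K →ₗ[K] MvPolynomial (Fin n) K :=
  (MvPolynomial.basisMonomials (Fin n) K).constr K fun β =>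
    ∑ α ∈ Finset.Iic β,
      (MvPowerSeries.coeff α f * ∏ i, ((β i).descFactorial (α i) : K)) •
        MvPolynomial.monomial (β - α) (1 : K)

theorem contract_add {K : Type*} [Field K] {n : ℕ} (f g : MvPowerSeries (Fin n) K) :
    contract (f + g) = contract f + contract g := by
  unfold contract
  rw [← map_add]
  congr 1
  funext β
  simp only [Pi.add_apply]
  rw [← Finset.sum_add_distrib]
  exact Finset.sum_congr rfl fun α _ => by rw [map_add, add_mul, add_smul]

theorem contract_zero {K : Type*} [Field K] {n : ℕ} :
    contract (0 : MvPowerSeries (Fin n) K) = 0 := by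
  unfold contract
  convert map_zero ((MvPolynomial.basisMonomials (Fin n) K).constr
    (M' := MvPolynomial (Fin n) K) K) using 2
  funext β
  simp

/-- The annihilator `Ann_R(F) = Ann_R(⟨F⟩_R)` of (the cyclic `R`-submodule of
`P` generated by) a polynomial `F` under the contraction action; an ideal of
`R = K[[x_1,…,x_n]]`.  The Artinian Gorenstein local algebra associated to `F`
is `A_F = R ⧸ annR F`. -/
noncomputable def annR {K : Type*} [Field K] {n : ℕ} (F : MvPolynomial (Fin n) K) :
    Ideal (MvPowerSeries (Fin n) K) where
  carrier := {f | ∀ u : MvPowerSeries (Fin n) K, contract (u * f) F = 0}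
  zero_mem' := fun u => by rw [mul_zero, contract_zero]; rfl
  add_mem' := fun {a b} ha hb u => by
    rw [mul_add, contract_add, LinearMap.add_apply, ha u, hb u, add_zero]
  smul_mem' := fun c f hf u => by
    rw [smul_eq_mul, ← mul_assoc]; exact hf (u * c)

/-- The maximal ideal `M = (x_1, …, x_n)` of `R = K[[x_1,…,x_n]]`,
i.e. the ideal of power series with zero constant term. -/
noncomputable def mxR (K : Type*) [Field K] (n : ℕ) : Ideal (MvPowerSeries (Fin n) K) :=
  RingHom.ker (MvPowerSeries.constantCoeff (σ := Fin n) (R := K))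

/-- The Hilbert function of `A = R/I` where `R = K[[x_1,…,x_n]]`:
`HF_A(i) = dim_K (m^i/m^(i+1)) = dim_K A/m^(i+1) - dim_K A/m^i`, computed via
`A/m^j = R/(I + M^j)` where `M = (x_1,…,x_n)`. -/
noncomputable def hilbQ {K : Type*} [Field K] {n : ℕ}
    (I : Ideal (MvPowerSeries (Fin n) K)) (i : ℕ) : ℕ :=
  Module.finrank K (MvPowerSeries (Fin n) K ⧸ (I ⊔ mxR K n ^ (i + 1))) -
    Module.finrank K (MvPowerSeries (Fin n) K ⧸ (I ⊔ mxR K n ^ i))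

/-- The variable `x_i` of `R = K[[x_1,…,x_n]]`. -/
noncomputable def psX {K : Type*} [Field K] {n : ℕ} (i : Fin n) :
    MvPowerSeries (Fin n) K := MvPowerSeries.X i

/-- The Legendre cubic `L_λ = y_2^2 y_3 - y_1(y_1 - y_3)(y_1 - λ y_3)`. -/
noncomputable def legendreCubic {K : Type*} [Field K] (lam : K) :
    MvPolynomial (Fin 3) K :=
  MvPolynomial.X 1 ^ 2 * MvPolynomial.X 2 -
    MvPolynomial.X 0 * (MvPolynomial.X 0 - MvPolynomial.X 2) *
      (MvPolynomial.X 0 - MvPolynomial.C lam * MvPolynomial.X 2)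

/-- `H_1 = λ^2 x_1^2 + λ(1+λ) x_1 x_3 + (λ^2-λ+1) x_3^2`. -/
noncomputable def legH1 {K : Type*} [Field K] (lam : K) : MvPowerSeries (Fin 3) K :=
  lam ^ 2 • psX 0 ^ 2 + (lam * (1 + lam)) • (psX 0 * psX 2) +
    (lam ^ 2 - lam + 1) • psX 2 ^ 2

/-- `H_2 = λ^2 x_2^2 + λ x_1 x_3 + (1+λ) x_3^2`. -/
noncomputable def legH2 {K : Type*} [Field K] (lam : K) : MvPowerSeries (Fin 3) K :=
  lam ^ 2 • psX 1 ^ 2 + lam • (psX 0 * psX 2) + (1 + lam) • psX 2 ^ 2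

section LegendreProof
open MvPowerSeries

noncomputable def ee (i j k : ℕ) : Fin 3 →₀ ℕ := Finsupp.equivFunOnFinite.symm ![i, j, k]

@[simp] lemma ee_0 (i j k : ℕ) : ee i j k 0 = i := rfl
@[simp] lemma ee_1 (i j k : ℕ) : ee i j k 1 = j := rfl
@[simp] lemma ee_2 (i j k : ℕ) : ee i j k 2 = k := rfl

lemma ee_ext {α β : Fin 3 →₀ ℕ} (h0 : α 0 = β 0) (h1 : α 1 = β 1) (h2 : α 2 = β 2) : α = β := by
  ext i; fin_cases i <;> assumption

lemma eq_ee (γ : Fin 3 →₀ ℕ) : γ = ee (γ 0) (γ 1) (γ 2) := ee_ext rfl rfl rfl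

@[simp] lemma ee_le (i j k i' j' k' : ℕ) : ee i j k ≤ ee i' j' k' ↔ i ≤ i' ∧ j ≤ j' ∧ k ≤ k' := by
  rw [Finsupp.le_def]
  constructor
  · intro h; exact ⟨h 0, h 1, h 2⟩
  · rintro ⟨h0, h1, h2⟩ i; fin_cases i <;> assumption

@[simp] lemma ee_inj (i j k i' j' k' : ℕ) : ee i j k = ee i' j' k' ↔ i = i' ∧ j = j' ∧ k = k' := by
  constructor
  · intro h; exact ⟨DFunLike.congr_fun h 0, DFunLike.congr_fun h 1, DFunLike.congr_fun h 2⟩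
  · rintro ⟨rfl, rfl, rfl⟩; rfl

@[simp] lemma ee_sub (i j k i' j' k' : ℕ) :
    ee i j k - ee i' j' k' = ee (i - i') (j - j') (k - k') := ee_ext rfl rfl rfl

@[simp] lemma ee_add (i j k i' j' k' : ℕ) :
    ee i j k + ee i' j' k' = ee (i + i') (j + j') (k + k') := ee_ext rfl rfl rfl

lemma ee_zero : (0 : Fin 3 →₀ ℕ) = ee 0 0 0 := ee_ext rfl rfl rfl

lemma single0 (n : ℕ) : Finsupp.single (0 : Fin 3) n = ee n 0 0 := ee_ext (by simp) (by simp) (by simp)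
lemma single1 (n : ℕ) : Finsupp.single (1 : Fin 3) n = ee 0 n 0 := ee_ext (by simp) (by simp) (by simp)
lemma single2 (n : ℕ) : Finsupp.single (2 : Fin 3) n = ee 0 0 n := ee_ext (by simp) (by simp) (by simp)

variable {K : Type*} [Field K]

lemma psX0 : (psX 0 : MvPowerSeries (Fin 3) K) = monomial (ee 1 0 0) 1 := by
  rw [psX, X, single0]
lemma psX1 : (psX 1 : MvPowerSeries (Fin 3) K) = monomial (ee 0 1 0) 1 := by
  rw [psX, X, single1]
lemma psX2 : (psX 2 : MvPowerSeries (Fin 3) K) = monomial (ee 0 0 1) 1 := by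
  rw [psX, X, single2]

lemma coeff_contract {n : ℕ} (f : MvPowerSeries (Fin n) K) (β γ : Fin n →₀ ℕ) :
    MvPolynomial.coeff γ (contract f (MvPolynomial.monomial β 1)) =
      if γ ≤ β then coeff (β - γ) f * ∏ i, ((β i).descFactorial ((β - γ) i) : K) else 0 := by
  classical
  have : MvPolynomial.monomial β (1 : K) = MvPolynomial.basisMonomials (Fin n) K β := by simp
  rw [this, contract, Module.Basis.constr_basis, MvPolynomial.coeff_sum]
  simp only [MvPolynomial.coeff_smul, MvPolynomial.coeff_monomial, smul_eq_mul, mul_ite, mul_one,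
    mul_zero]
  split_ifs with h
  · rw [Finset.sum_eq_single (β - γ)]
    · rw [if_pos (tsub_tsub_cancel_of_le h)]
    · intro α hα hne
      rw [if_neg]
      rintro rfl
      exact hne (tsub_tsub_cancel_of_le (Finset.mem_Iic.1 hα)).symm
    · intro h'; exact absurd (Finset.mem_Iic.2 tsub_le_self) h'
  · apply Finset.sum_eq_zero
    intro α _
    rw [if_neg]
    rintro rfl
    exact h tsub_le_self

lemma legendre_eq (lam : K) : legendreCubic lam =
    MvPolynomial.monomial (ee 0 2 1) 1 - MvPolynomial.monomial (ee 3 0 0) 1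
    + (1 + lam) • MvPolynomial.monomial (ee 2 0 1) 1
    - lam • MvPolynomial.monomial (ee 1 0 2) 1 := by
  have e0 : (MvPolynomial.X 0 : MvPolynomial (Fin 3) K) = MvPolynomial.monomial (ee 1 0 0) 1 := by
    rw [MvPolynomial.X, single0]
  have e1 : (MvPolynomial.X 1 : MvPolynomial (Fin 3) K) = MvPolynomial.monomial (ee 0 1 0) 1 := by
    rw [MvPolynomial.X, single1]
  have e2 : (MvPolynomial.X 2 : MvPolynomial (Fin 3) K) = MvPolynomial.monomial (ee 0 0 1) 1 := by
    rw [MvPolynomial.X, single2]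
  have m1 : MvPolynomial.monomial (ee 0 2 1) (1 : K) = MvPolynomial.X 1 ^ 2 * MvPolynomial.X 2 := by
    simp [e1, e2, pow_two, MvPolynomial.monomial_mul]
  have m2 : MvPolynomial.monomial (ee 3 0 0) (1 : K) = MvPolynomial.X 0 ^ 3 := by
    simp [e0, pow_succ, MvPolynomial.monomial_mul]
  have m3 : MvPolynomial.monomial (ee 2 0 1) (1 : K) = MvPolynomial.X 0 ^ 2 * MvPolynomial.X 2 := by
    simp [e0, e2, pow_succ, MvPolynomial.monomial_mul]
  have m4 : MvPolynomial.monomial (ee 1 0 2) (1 : K) = MvPolynomial.X 0 * MvPolynomial.X 2 ^ 2 := by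
    simp [e0, e2, pow_succ, MvPolynomial.monomial_mul]
  rw [m1, m2, m3, m4, legendreCubic]
  simp only [MvPolynomial.smul_eq_C_mul, map_add, map_one]
  ring

/-- the eight coordinates -/
noncomputable def phi (lam : K) : MvPowerSeries (Fin 3) K →ₗ[K] (Fin 8 → K) :=
  LinearMap.pi ![coeff (ee 0 0 0), coeff (ee 1 0 0), coeff (ee 0 1 0), coeff (ee 0 0 1),
    (-3 : K) • coeff (ee 2 0 0) + (1 + lam) • coeff (ee 1 0 1) - lam • coeff (ee 0 0 2),
    coeff (ee 0 1 1),
    (1 + lam) • coeff (ee 2 0 0) - lam • coeff (ee 1 0 1) + coeff (ee 0 2 0),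
    (-3 : K) • coeff (ee 3 0 0) + (1 + lam) • coeff (ee 2 0 1) - lam • coeff (ee 1 0 2)
      + coeff (ee 0 2 1)]

lemma phi_eq_zero (lam : K) (f : MvPowerSeries (Fin 3) K) : phi lam f = 0 ↔
    coeff (ee 0 0 0) f = 0 ∧ coeff (ee 1 0 0) f = 0 ∧ coeff (ee 0 1 0) f = 0 ∧
    coeff (ee 0 0 1) f = 0 ∧
    -3 * coeff (ee 2 0 0) f + (1 + lam) * coeff (ee 1 0 1) f - lam * coeff (ee 0 0 2) f = 0 ∧
    coeff (ee 0 1 1) f = 0 ∧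
    (1 + lam) * coeff (ee 2 0 0) f - lam * coeff (ee 1 0 1) f + coeff (ee 0 2 0) f = 0 ∧
    -3 * coeff (ee 3 0 0) f + (1 + lam) * coeff (ee 2 0 1) f - lam * coeff (ee 1 0 2) f
      + coeff (ee 0 2 1) f = 0 := by
  rw [funext_iff]
  simp [Fin.forall_fin_succ, phi, Matrix.vecHead, Matrix.vecTail]

lemma coeff_contract_leg (lam : K) (f : MvPowerSeries (Fin 3) K) (γ : Fin 3 →₀ ℕ) :
    MvPolynomial.coeff γ (contract f (legendreCubic lam)) =
     MvPolynomial.coeff γ (contract f (MvPolynomial.monomial (ee 0 2 1) 1))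
     - MvPolynomial.coeff γ (contract f (MvPolynomial.monomial (ee 3 0 0) 1))
     + (1 + lam) * MvPolynomial.coeff γ (contract f (MvPolynomial.monomial (ee 2 0 1) 1))
     - lam * MvPolynomial.coeff γ (contract f (MvPolynomial.monomial (ee 1 0 2) 1)) := by
  rw [legendre_eq]
  simp only [map_add, map_sub, map_smul, MvPolynomial.coeff_add, MvPolynomial.coeff_sub,
    MvPolynomial.coeff_smul, smul_eq_mul]

lemma phi_of_contract [CharZero K] (lam : K) (h0 : lam ≠ 0) (f : MvPowerSeries (Fin 3) K)
    (h : contract f (legendreCubic lam) = 0) : phi lam f = 0 := by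
  have key : ∀ i j k : ℕ, MvPolynomial.coeff (ee i j k) (contract f (legendreCubic lam)) = 0 := by
    intro i j k; rw [h]; simp
  simp only [coeff_contract_leg, coeff_contract, ee_le, ee_sub, Fin.prod_univ_three, ee_0, ee_1,
    ee_2] at key
  rw [phi_eq_zero]
  have k1 := key 0 2 1
  have k2 := key 0 0 2
  have k3 := key 0 1 1
  have k4 := key 0 2 0
  have k5 := key 1 0 0
  have k6 := key 0 1 0
  have k7 := key 0 0 1
  have k8 := key 0 0 0
  norm_num [Nat.descFactorial, h0] at k1 k2 k3 k4 k5 k6 k7 k8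
  refine ⟨k1, k2, k3, k4, ?_, k6, ?_, ?_⟩
  · linear_combination k5 / 2
  · linear_combination k7 / 2
  · linear_combination k8 / 2

lemma contract_of_phi (lam : K) (f : MvPowerSeries (Fin 3) K)
    (h : phi lam f = 0) : contract f (legendreCubic lam) = 0 := by
  rw [phi_eq_zero] at h
  obtain ⟨k1, k2, k3, k4, k5, k6, k7, k8⟩ := h
  ext γ
  rw [MvPolynomial.coeff_zero, eq_ee γ]
  generalize γ 0 = i, γ 1 = j, γ 2 = k
  simp only [coeff_contract_leg, coeff_contract, ee_le, ee_sub, Fin.prod_univ_three, ee_0, ee_1,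
    ee_2]
  by_cases hi : i ≤ 3
  swap
  · rw [if_neg (by omega), if_neg (by omega), if_neg (by omega), if_neg (by omega)]; ring
  by_cases hj : j ≤ 2
  swap
  · rw [if_neg (by omega), if_neg (by omega), if_neg (by omega), if_neg (by omega)]; ring
  by_cases hk : k ≤ 2
  swap
  · rw [if_neg (by omega), if_neg (by omega), if_neg (by omega), if_neg (by omega)]; ring
  interval_cases i <;> interval_cases j <;> interval_cases k <;>
    norm_num [Nat.descFactorial, k1, k2, k3, k4, k6] <;>
    first | linear_combination 2 * k5 | linear_combination 2 * k7 | linear_combination 2 * k8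

lemma phi_gen1 (lam : K) (u : MvPowerSeries (Fin 3) K) : phi lam (u * (psX 0 * psX 1)) = 0 := by
  rw [phi_eq_zero, psX0, psX1, monomial_mul_monomial]
  simp [coeff_mul_monomial]

lemma phi_gen2 (lam : K) (u : MvPowerSeries (Fin 3) K) : phi lam (u * legH1 lam) = 0 := by
  rw [phi_eq_zero, legH1, psX0, psX2]
  simp only [pow_two (monomial _ _), monomial_mul_monomial, mul_add, mul_smul_comm, map_add,
    map_smul, smul_eq_mul, coeff_mul_monomial, ee_le, ee_add, ee_sub]
  norm_num
  refine ⟨?_, ?_, ?_⟩ <;> ring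

lemma phi_gen3 (lam : K) (u : MvPowerSeries (Fin 3) K) : phi lam (u * legH2 lam) = 0 := by
  rw [phi_eq_zero, legH2, psX0, psX1, psX2]
  simp only [pow_two (monomial _ _), monomial_mul_monomial, mul_add, mul_smul_comm, map_add,
    map_smul, smul_eq_mul, coeff_mul_monomial, ee_le, ee_add, ee_sub]
  norm_num
  refine ⟨?_, ?_, ?_⟩ <;> ring

lemma phi_of_span (lam : K) (f : MvPowerSeries (Fin 3) K)
    (hf : f ∈ Ideal.span {psX 0 * psX 1, legH1 lam, legH2 lam}) : phi lam f = 0 := by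
  rw [Ideal.mem_span_insert] at hf
  obtain ⟨p, z, hz, rfl⟩ := hf
  obtain ⟨q, r, rfl⟩ := Ideal.mem_span_pair.1 hz
  rw [map_add, map_add, phi_gen1, phi_gen2, phi_gen3]; simp

lemma split_var (j : Fin 3) (y : MvPowerSeries (Fin 3) K) :
    ∃ p r : MvPowerSeries (Fin 3) K, y = psX j * p + r ∧
      ∀ α, coeff α r = if α j = 0 then coeff α y else 0 := by
  let r : MvPowerSeries (Fin 3) K := fun α => if α j = 0 then coeff α y else 0
  have hr : ∀ α, coeff α r = if α j = 0 then coeff α y else 0 := fun α => rfl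
  have : (X j : MvPowerSeries (Fin 3) K) ∣ y - r := by
    rw [X_dvd_iff]
    intro m hm
    rw [map_sub, hr, if_pos hm, sub_self]
  obtain ⟨p, hp⟩ := this
  exact ⟨p, r, by rw [psX, ← hp]; ring, hr⟩

lemma decomp3 (f : MvPowerSeries (Fin 3) K) : ∃ (k : K) (p q r : MvPowerSeries (Fin 3) K),
    f = k • 1 + psX 0 * p + psX 1 * q + psX 2 * r := by
  obtain ⟨p, f1, e1, h1⟩ := split_var 0 f
  obtain ⟨q, f2, e2, h2⟩ := split_var 1 f1
  obtain ⟨r, f3, e3, h3⟩ := split_var 2 f2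
  refine ⟨coeff 0 f, p, q, r, ?_⟩
  have : f3 = coeff 0 f • 1 := by
    ext α
    rw [h3, h2, h1, coeff_smul, coeff_one]
    by_cases h : α = 0
    · subst h; simp
    · rw [if_neg h]
      have : ¬ (α 0 = 0 ∧ α 1 = 0 ∧ α 2 = 0) := fun ⟨a, b, c⟩ => h (ee_ext a b c)
      split_ifs with u v w
      · exact absurd ⟨w, v, u⟩ this
      all_goals rw [mul_zero]
  rw [← this]
  linear_combination e1 + e2 + e3

lemma nf_span {A : Type*} [CommRing A] [Algebra K A] (lam : K) (h0 : lam ≠ 0)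
    (hj : lam ^ 2 - lam + 1 ≠ 0) (a b c : A) (hab : a * b = 0)
    (hH1 : lam ^ 2 • a ^ 2 + (lam * (1 + lam)) • (a * c) + (lam ^ 2 - lam + 1) • c ^ 2 = 0)
    (hH2 : lam ^ 2 • b ^ 2 + lam • (a * c) + (1 + lam) • c ^ 2 = 0)
    (hd : ∀ f : A, ∃ (k : K) (p q r : A), f = k • 1 + a * p + b * q + c * r) (f : A) :
    f ∈ Submodule.span K (Set.range ![1, a, b, c, a * c, b * c, c ^ 2, a * c ^ 2]) := by
  set v := ![1, a, b, c, a * c, b * c, c ^ 2, a * c ^ 2] with hv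
  set N := Submodule.span K (Set.range v) with hN
  have hm : ∀ i, v i ∈ N := fun i => Submodule.subset_span ⟨i, rfl⟩
  have m0 : (1 : A) ∈ N := hm 0
  have m1 : a ∈ N := hm 1
  have m2 : b ∈ N := hm 2
  have m3 : c ∈ N := hm 3
  have m4 : a * c ∈ N := hm 4
  have m5 : b * c ∈ N := hm 5
  have m6 : c ^ 2 ∈ N := hm 6
  have m7 : a * c ^ 2 ∈ N := hm 7
  clear_value v N
  have inv : ∀ {k : K} {x y : A}, k ≠ 0 → k • x = y → y ∈ N → x ∈ N := by
    intro k x y hk e hy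
    rw [← e] at hy
    exact (Submodule.smul_mem_iff N hk).1 hy
  have inv0 : ∀ {k : K} {x : A}, k ≠ 0 → k • x = 0 → x = 0 := by
    intro k x hk e
    exact (smul_eq_zero_iff_right hk).1 e
  simp only [Algebra.smul_def, map_add, map_mul, map_sub, map_pow, map_one] at hH1 hH2
  have c3 : c ^ 3 = 0 := by
    apply inv0 hj
    simp only [Algebra.smul_def, map_add, map_mul, map_sub, map_pow, map_one]
    linear_combination c * hH1 - algebraMap K A lam * a * hH2 + algebraMap K A lam ^ 3 * b * hab
  have bcc : b * c ^ 2 = 0 := by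
    apply inv0 hj
    simp only [Algebra.smul_def, map_add, map_mul, map_sub, map_pow, map_one]
    linear_combination b * hH1 - (algebraMap K A lam ^ 2 * a
      + algebraMap K A lam * (1 + algebraMap K A lam) * c) * hab
  have aac : lam • (a ^ 2 * c) = -(1 + lam) • (a * c ^ 2) := by
    simp only [Algebra.smul_def, map_add, map_mul, map_sub, map_pow, map_one, map_neg]
    linear_combination a * hH2 - algebraMap K A lam ^ 2 * b * hab
  have aacc : a ^ 2 * c ^ 2 = 0 := by
    apply inv0 h0
    simp only [Algebra.smul_def, map_add, map_mul, map_sub, map_pow, map_one, map_neg] at aac ⊢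
    linear_combination c * aac - (1 + algebraMap K A lam) * a * c3
  simp only [Algebra.smul_def, map_add, map_mul, map_sub, map_pow, map_one, map_neg] at aac
  have s7 : ∀ f, a * c ^ 2 * f ∈ N := by
    intro f
    obtain ⟨k, p, q, r, rfl⟩ := hd f
    have : a * c ^ 2 * (k • 1 + a * p + b * q + c * r) = k • (a * c ^ 2) := by
      simp only [Algebra.smul_def]
      linear_combination p * aacc + c ^ 2 * q * hab + a * r * c3
    rw [this]; exact N.smul_mem _ m7
  have s6 : ∀ f, c ^ 2 * f ∈ N := by
    intro f
    obtain ⟨k, p, q, r, rfl⟩ := hd f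
    have : c ^ 2 * (k • 1 + a * p + b * q + c * r) = k • (c ^ 2) + a * c ^ 2 * p := by
      simp only [Algebra.smul_def]
      linear_combination q * bcc + r * c3
    rw [this]; exact N.add_mem (N.smul_mem _ m6) (s7 _)
  have s5 : ∀ f, b * c * f ∈ N := by
    intro f
    obtain ⟨k, p, q, r, rfl⟩ := hd f
    have e : (lam ^ 2) • (b ^ 2 * c * q) = (- lam) • (a * c ^ 2 * q) := by
      simp only [Algebra.smul_def, map_neg, map_pow]
      linear_combination c * q * hH2 - (1 + algebraMap K A lam) * q * c3
    have : b * c * (k • 1 + a * p + b * q + c * r) = k • (b * c) + b ^ 2 * c * q := by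
      simp only [Algebra.smul_def]
      linear_combination c * p * hab + r * bcc
    rw [this]
    exact N.add_mem (N.smul_mem _ m5) (inv (pow_ne_zero 2 h0) e (N.smul_mem _ (s7 _)))
  have s4 : ∀ f, a * c * f ∈ N := by
    intro f
    obtain ⟨k, p, q, r, rfl⟩ := hd f
    have e : lam • (a ^ 2 * c * p) = (- (1 + lam)) • (a * c ^ 2 * p) := by
      simp only [Algebra.smul_def, map_neg, map_add, map_one]
      linear_combination p * aac
    have : a * c * (k • 1 + a * p + b * q + c * r) = k • (a * c) + a ^ 2 * c * p + a * c ^ 2 * r := by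
      simp only [Algebra.smul_def]
      linear_combination c * q * hab
    rw [this]
    exact N.add_mem (N.add_mem (N.smul_mem _ m4) (inv h0 e (N.smul_mem _ (s7 _)))) (s7 _)
  have s3 : ∀ f, c * f ∈ N := by
    intro f
    obtain ⟨k, p, q, r, rfl⟩ := hd f
    have : c * (k • 1 + a * p + b * q + c * r) = k • c + a * c * p + b * c * q + c ^ 2 * r := by
      simp only [Algebra.smul_def]
      ring
    rw [this]
    exact N.add_mem (N.add_mem (N.add_mem (N.smul_mem _ m3) (s4 _)) (s5 _)) (s6 _)
  have s2 : ∀ f, b * f ∈ N := by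
    intro f
    obtain ⟨k, p, q, r, rfl⟩ := hd f
    have e : (lam ^ 2) • (b ^ 2 * q) = (- lam) • (a * c * q) + (-(1 + lam)) • (c ^ 2 * q) := by
      simp only [Algebra.smul_def, map_neg, map_pow, map_add, map_one]
      linear_combination q * hH2
    have : b * (k • 1 + a * p + b * q + c * r) = k • b + b ^ 2 * q + b * c * r := by
      simp only [Algebra.smul_def]
      linear_combination p * hab
    rw [this]
    exact N.add_mem (N.add_mem (N.smul_mem _ m2) (inv (pow_ne_zero 2 h0) e
      (N.add_mem (N.smul_mem _ (s4 _)) (N.smul_mem _ (s6 _))))) (s5 _)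
  have s1 : ∀ f, a * f ∈ N := by
    intro f
    obtain ⟨k, p, q, r, rfl⟩ := hd f
    have e : (lam ^ 2) • (a ^ 2 * p) = (- (lam * (1 + lam))) • (a * c * p)
        + (-(lam ^ 2 - lam + 1)) • (c ^ 2 * p) := by
      simp only [Algebra.smul_def, map_neg, map_pow, map_add, map_one, map_sub, map_mul]
      linear_combination p * hH1
    have : a * (k • 1 + a * p + b * q + c * r) = k • a + a ^ 2 * p + a * c * r := by
      simp only [Algebra.smul_def]
      linear_combination q * hab
    rw [this]
    exact N.add_mem (N.add_mem (N.smul_mem _ m1) (inv (pow_ne_zero 2 h0) e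
      (N.add_mem (N.smul_mem _ (s4 _)) (N.smul_mem _ (s6 _))))) (s4 _)
  obtain ⟨k, p, q, r, rfl⟩ := hd f
  exact N.add_mem (N.add_mem (N.add_mem (N.smul_mem _ m0) (s1 _)) (s2 _)) (s3 _)

noncomputable def nf (p : Fin 8 → K) : MvPowerSeries (Fin 3) K :=
  p 0 • 1 + p 1 • psX 0 + p 2 • psX 1 + p 3 • psX 2 + p 4 • (psX 0 * psX 2) +
    p 5 • (psX 1 * psX 2) + p 6 • psX 2 ^ 2 + p 7 • (psX 0 * psX 2 ^ 2)

lemma exists_nf (lam : K) (h0 : lam ≠ 0) (hj : lam ^ 2 - lam + 1 ≠ 0)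
    (f : MvPowerSeries (Fin 3) K) : ∃ p : Fin 8 → K,
      f - nf p ∈ Ideal.span {psX 0 * psX 1, legH1 lam, legH2 lam} := by
  set J : Ideal (MvPowerSeries (Fin 3) K) := Ideal.span {psX 0 * psX 1, legH1 lam, legH2 lam}
    with hJ
  let π := Ideal.Quotient.mkₐ K J
  have hπ : ∀ x, π x = 0 ↔ x ∈ J := fun x => Ideal.Quotient.eq_zero_iff_mem
  have g1 : psX 0 * psX 1 ∈ J := Ideal.subset_span (by simp)
  have g2 : legH1 lam ∈ J := Ideal.subset_span (by simp)
  have g3 : legH2 lam ∈ J := Ideal.subset_span (by simp)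
  rw [← hπ] at g1 g2 g3
  have := nf_span lam h0 hj (π (psX 0)) (π (psX 1)) (π (psX 2)) (by simpa using g1)
    (by simpa [legH1] using g2) (by simpa [legH2] using g3) (by
      intro f
      obtain ⟨f, rfl⟩ := Ideal.Quotient.mkₐ_surjective K J f
      obtain ⟨k, p, q, r, e⟩ := decomp3 f
      refine ⟨k, π p, π q, π r, ?_⟩
      change π f = _
      rw [e]; simp only [map_add, map_mul, map_smul, map_one]) (π f)
  rw [Submodule.mem_span_range_iff_exists_fun] at this
  obtain ⟨p, hp⟩ := this
  refine ⟨p, ?_⟩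
  rw [← hπ, map_sub, ← hp, sub_eq_zero]
  simp [nf, Fin.sum_univ_eight]

lemma phi_nf (lam : K) (p : Fin 8 → K) : phi lam (nf p) =
    ![p 0, p 1, p 2, p 3, (1 + lam) * p 4 - lam * p 6, p 5, - lam * p 4, - lam * p 7] := by
  have h1 : (1 : MvPowerSeries (Fin 3) K) = monomial (ee 0 0 0) 1 := by
    rw [← ee_zero]; rfl
  funext i
  fin_cases i <;>
  simp [phi, nf, h1, psX0, psX1, psX2, pow_two, monomial_mul_monomial, coeff_monomial]

lemma mem_mx_pow (n : ℕ) (f : MvPowerSeries (Fin 3) K) (hf : f ∈ mxR K 3 ^ n) :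
    ∀ α : Fin 3 →₀ ℕ, α 0 + α 1 + α 2 < n → coeff α f = 0 := by
  induction n generalizing f with
  | zero => intro α h; omega
  | succ n ih =>
    rw [pow_succ] at hf
    refine Submodule.mul_induction_on hf ?_ ?_
    · intro x hx y hy α hα
      classical
      rw [coeff_mul]
      apply Finset.sum_eq_zero
      rintro ⟨β, γ⟩ h
      rw [Finset.HasAntidiagonal.mem_antidiagonal] at h
      by_cases hγ : γ = 0
      · have : coeff γ y = 0 := by rw [hγ]; exact hy
        simp [this]
      · rw [ih x hx β, zero_mul]
        have : ¬ (γ 0 = 0 ∧ γ 1 = 0 ∧ γ 2 = 0) := fun ⟨a, b, c⟩ => hγ (ee_ext a b c)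
        simp only at h
        rw [← h] at hα
        simp only [Finsupp.add_apply] at hα
        omega
    · intro x y hx hy α hα
      rw [map_add, hx α hα, hy α hα, add_zero]

lemma psX_mem (i : Fin 3) : psX i ∈ mxR K 3 := by
  simp [mxR, psX]

lemma span_eq_ker (lam : K) (h0 : lam ≠ 0) (hj : lam ^ 2 - lam + 1 ≠ 0)
    (f : MvPowerSeries (Fin 3) K) :
    f ∈ Ideal.span {psX 0 * psX 1, legH1 lam, legH2 lam} ↔ phi lam f = 0 := by
  refine ⟨phi_of_span lam f, fun h => ?_⟩
  obtain ⟨p, hp⟩ := exists_nf lam h0 hj f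
  have e := phi_of_span lam _ hp
  rw [map_sub, h, zero_sub, neg_eq_zero, phi_nf] at e
  have e' := fun i => congrFun e i
  simp [Fin.forall_fin_succ, h0] at e'
  obtain ⟨a0, a1, a2, a3, a4, a5, a6, a7⟩ := e'
  rw [a6] at a4
  simp [h0] at a4
  have : nf p = 0 := by simp [nf, *]
  rwa [this, sub_zero] at hp

lemma ann_eq [CharZero K] (lam : K) (h0 : lam ≠ 0) (hj : lam ^ 2 - lam + 1 ≠ 0) :
    annR (legendreCubic lam) = Ideal.span {psX 0 * psX 1, legH1 lam, legH2 lam} := by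
  ext f
  constructor
  · intro h
    have := h 1
    rw [one_mul] at this
    exact (span_eq_ker lam h0 hj f).2 (phi_of_contract lam h0 f this)
  · intro h u
    exact contract_of_phi _ _ (phi_of_span lam _ (Ideal.mul_mem_left _ u h))

lemma phi_surj (lam : K) (h0 : lam ≠ 0) : Function.Surjective (phi lam) := by
  intro y
  refine ⟨nf ![y 0, y 1, y 2, y 3, - y 6 / lam, y 5, (- (1 + lam) * y 6 / lam - y 4) / lam,
    - y 7 / lam], ?_⟩
  rw [phi_nf]
  funext i
  fin_cases i <;> simp <;> field_simp
  ring

lemma finrank_quot (lam : K) (h0 : lam ≠ 0) (I : Ideal (MvPowerSeries (Fin 3) K)) (d : ℕ)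
    (hd : d ≤ 8) (h : ∀ f, f ∈ I ↔ ∀ t : Fin d, phi lam f (Fin.castLE hd t) = 0) :
    Module.finrank K (MvPowerSeries (Fin 3) K ⧸ I) = d := by
  let ψ := (LinearMap.funLeft K K (Fin.castLE hd)).comp (phi lam)
  have hs : Function.Surjective ψ :=
    (LinearMap.funLeft_surjective_of_injective K K _ (Fin.castLE_injective hd)).comp
      (phi_surj lam h0)
  have hk : I.restrictScalars K = LinearMap.ker ψ := by
    ext f
    rw [Submodule.restrictScalars_mem, h, LinearMap.mem_ker, funext_iff]
    rfl
  have e1 := (Submodule.Quotient.restrictScalarsEquiv K I).finrank_eq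
  rw [← e1, hk, (ψ.quotKerEquivOfSurjective hs).finrank_eq]
  simp

lemma finrank_sup (lam : K) (h0 : lam ≠ 0) (hj : lam ^ 2 - lam + 1 ≠ 0) (n d : ℕ) (hd : d ≤ 8)
    (h1 : ∀ f ∈ mxR K 3 ^ n, ∀ t : Fin d, phi lam f (Fin.castLE hd t) = 0)
    (h2 : ∀ p : Fin 8 → K, (∀ t : Fin d, phi lam (nf p) (Fin.castLE hd t) = 0) →
      nf p ∈ mxR K 3 ^ n) :
    Module.finrank K (MvPowerSeries (Fin 3) K ⧸
      (Ideal.span {psX 0 * psX 1, legH1 lam, legH2 lam} ⊔ mxR K 3 ^ n)) = d := by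
  apply finrank_quot lam h0 _ d hd
  intro f
  constructor
  · intro hf t
    obtain ⟨x, hx, y, hy, rfl⟩ := Submodule.mem_sup.1 hf
    rw [map_add, phi_of_span lam x hx, zero_add, h1 y hy]
  · intro hf
    obtain ⟨p, hp⟩ := exists_nf lam h0 hj f
    have e := phi_of_span lam _ hp
    rw [map_sub, sub_eq_zero] at e
    rw [e] at hf
    exact Submodule.mem_sup.2 ⟨_, hp, _, h2 p hf, by ring⟩

lemma fr0 (lam : K) (h0 : lam ≠ 0) (hj : lam ^ 2 - lam + 1 ≠ 0) :
    Module.finrank K (MvPowerSeries (Fin 3) K ⧸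
      (Ideal.span {psX 0 * psX 1, legH1 lam, legH2 lam} ⊔ mxR K 3 ^ 0)) = 0 :=
  finrank_sup lam h0 hj 0 0 (by norm_num) (fun _ _ t => t.elim0) (by simp)

lemma fr1 (lam : K) (h0 : lam ≠ 0) (hj : lam ^ 2 - lam + 1 ≠ 0) :
    Module.finrank K (MvPowerSeries (Fin 3) K ⧸
      (Ideal.span {psX 0 * psX 1, legH1 lam, legH2 lam} ⊔ mxR K 3 ^ 1)) = 1 := by
  apply finrank_sup lam h0 hj 1 1 (by norm_num)
  · intro f hf t
    have := mem_mx_pow 1 f hf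
    fin_cases t
    simp [phi, this]
  · intro p hp
    rw [phi_nf] at hp
    simp [Fin.forall_fin_succ] at hp
    rw [pow_one]
    simp [nf, hp, mxR, psX]

lemma m2 (i j : Fin 3) : psX i * psX j ∈ mxR K 3 ^ 2 := by
  rw [pow_two]; exact Ideal.mul_mem_mul (psX_mem i) (psX_mem j)

lemma m2' (i : Fin 3) : psX i ^ 2 ∈ mxR K 3 ^ 2 := Ideal.pow_mem_pow (psX_mem i) 2

lemma m3 (i j : Fin 3) : psX i * psX j ^ 2 ∈ mxR K 3 ^ 3 := by
  rw [pow_succ', ]; exact Ideal.mul_mem_mul (psX_mem i) (m2' j)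

lemma smul_mem_ideal (I : Ideal (MvPowerSeries (Fin 3) K)) (k : K) {x : MvPowerSeries (Fin 3) K}
    (h : x ∈ I) : k • x ∈ I := (I.restrictScalars K).smul_mem k h

lemma fr2 (lam : K) (h0 : lam ≠ 0) (hj : lam ^ 2 - lam + 1 ≠ 0) :
    Module.finrank K (MvPowerSeries (Fin 3) K ⧸
      (Ideal.span {psX 0 * psX 1, legH1 lam, legH2 lam} ⊔ mxR K 3 ^ 2)) = 4 := by
  apply finrank_sup lam h0 hj 2 4 (by norm_num)
  · intro f hf t
    have := mem_mx_pow 2 f hf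
    fin_cases t <;> simp [phi, this]
  · intro p hp
    rw [phi_nf] at hp
    simp [Fin.forall_fin_succ] at hp
    obtain ⟨p0, p1, p2, p3⟩ := hp
    simp only [nf, p0, p1, p2, p3, zero_smul, zero_add]
    exact Ideal.add_mem _ (Ideal.add_mem _ (Ideal.add_mem _ (smul_mem_ideal _ _ (m2 _ _))
      (smul_mem_ideal _ _ (m2 _ _))) (smul_mem_ideal _ _ (m2' _)))
      (smul_mem_ideal _ _ (Ideal.pow_le_pow_right (by norm_num) (m3 0 2)))

lemma fr3 (lam : K) (h0 : lam ≠ 0) (hj : lam ^ 2 - lam + 1 ≠ 0) :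
    Module.finrank K (MvPowerSeries (Fin 3) K ⧸
      (Ideal.span {psX 0 * psX 1, legH1 lam, legH2 lam} ⊔ mxR K 3 ^ 3)) = 7 := by
  apply finrank_sup lam h0 hj 3 7 (by norm_num)
  · intro f hf t
    have := mem_mx_pow 3 f hf
    fin_cases t <;> simp [phi, this]
  · intro p hp
    rw [phi_nf] at hp
    simp [Fin.forall_fin_succ, h0] at hp
    obtain ⟨p0, p1, p2, p3, p4, p5, p6⟩ := hp
    rw [p6] at p4
    simp [h0] at p4
    simp only [nf, p0, p1, p2, p3, p4, p5, p6, zero_smul, zero_add]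
    exact (smul_mem_ideal _ _ (m3 0 2))

lemma mx4 (lam : K) (f : MvPowerSeries (Fin 3) K) (hf : f ∈ mxR K 3 ^ 4) : phi lam f = 0 := by
  have := mem_mx_pow 4 f hf
  rw [phi_eq_zero]
  simp [this]

lemma fr4 (lam : K) (h0 : lam ≠ 0) (hj : lam ^ 2 - lam + 1 ≠ 0) :
    Module.finrank K (MvPowerSeries (Fin 3) K ⧸
      (Ideal.span {psX 0 * psX 1, legH1 lam, legH2 lam} ⊔ mxR K 3 ^ 4)) = 8 := by
  apply finrank_sup lam h0 hj 4 8 (by norm_num)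
  · intro f hf t
    rw [mx4 lam f hf]; rfl
  · intro p hp
    rw [phi_nf] at hp
    simp [Fin.forall_fin_succ, h0] at hp
    obtain ⟨p0, p1, p2, p3, p4, p5, p6, p7⟩ := hp
    rw [p6] at p4
    simp [h0] at p4
    simp only [nf, p0, p1, p2, p3, p4, p5, p6, p7, zero_smul, zero_add]
    exact Ideal.zero_mem _

lemma cancel1 (i j : Fin 3) (hij : i ≠ j) (y : MvPowerSeries (Fin 3) K)
    (h : psX j ∣ psX i * y) : psX j ∣ y := by
  rw [psX, X_dvd_iff] at *
  intro m hm
  have := h (Finsupp.single i 1 + m) (by simp [hm, hij])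
  rwa [psX, X, coeff_add_monomial_mul, one_mul] at this

lemma mem_pair (j k : Fin 3) (y : MvPowerSeries (Fin 3) K)
    (h : ∀ α : Fin 3 →₀ ℕ, α j = 0 → α k = 0 → coeff α y = 0) :
    ∃ p q, y = psX j * p + psX k * q := by
  obtain ⟨p, r, e, hr⟩ := split_var j y
  have : psX k ∣ r := by
    rw [psX, X_dvd_iff]
    intro α hα
    rw [hr]
    split_ifs with h'
    · exact h α h' hα
    · rfl
  obtain ⟨q, rfl⟩ := this
  exact ⟨p, q, e⟩

lemma cancel2 (i j k : Fin 3) (hij : i ≠ j) (hik : i ≠ k) (y p q : MvPowerSeries (Fin 3) K)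
    (h : psX i * y = psX j * p + psX k * q) : ∃ p q, y = psX j * p + psX k * q := by
  apply mem_pair
  intro α hj hk
  have e : coeff (Finsupp.single i 1 + α) (psX i * y) = coeff α y := by
    rw [psX, X, coeff_add_monomial_mul, one_mul]
  rw [← e, h, map_add]
  have h1 := (X_dvd_iff (s := j) (φ := psX j * p)).1 ⟨p, rfl⟩ (Finsupp.single i 1 + α)
    (by simp [hj, hij])
  have h2 := (X_dvd_iff (s := k) (φ := psX k * q)).1 ⟨q, rfl⟩ (Finsupp.single i 1 + α)
    (by simp [hk, hik])
  rw [h1, h2, add_zero]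

lemma psX_prime (j : Fin 3) (x y : MvPowerSeries (Fin 3) K) (hx : ¬ psX j ∣ x)
    (h : psX j ∣ x * y) : psX j ∣ y := by
  have key : ∀ f : MvPowerSeries (Fin 3) K, psX j ∣ f ↔ f.weightedOrder (Pi.single j 1) ≠ 0 := by
    intro f
    have hw : ∀ d : Fin 3 →₀ ℕ, Finsupp.weight (Pi.single j 1 : Fin 3 → ℕ) d = d j := by
      intro d
      rw [Finsupp.weight_apply, Finsupp.sum_fintype _ _ (by simp)]
      simp [Pi.single_apply]
    rw [psX, X_dvd_iff, ← ENat.one_le_iff_ne_zero]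
    constructor
    · intro h
      apply le_weightedOrder
      intro d hd
      rw [hw] at hd
      apply h
      exact_mod_cast ENat.lt_one_iff_eq_zero.1 hd
    · intro h d hd
      apply coeff_eq_zero_of_lt_weightedOrder (Pi.single j 1 : Fin 3 → ℕ)
      rw [hw, hd]
      exact lt_of_lt_of_le (by simp) h
  rw [key, weightedOrder_mul] at h
  rw [key, not_not] at hx
  rw [hx, zero_add] at h
  exact (key y).2 h

lemma reg3 {A : Type*} [CommRing A] (a b c l li g gi : A) (hl : l * li = 1)
    (hg : g * gi = 1) (hgl : g = l ^ 2 - l + 1)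
    (hac : ∀ y, a ∣ c * y → a ∣ y)
    (hbc : ∀ y, b ∣ c * y → b ∣ y)
    (hba : ∀ y, b ∣ a * y → b ∣ y)
    (Hc : ∀ y p q, c * y = a * p + b * q → ∃ p q, y = a * p + b * q)
    (Ha : ∀ y p q, a * y = b * p + c * q → ∃ p q, y = b * p + c * q)
    (Hb : ∀ y p q, b * y = a * p + c * q → ∃ p q, y = a * p + c * q)
    (H1 H2 : A) (h1 : H1 = l ^ 2 * a ^ 2 + l * (1 + l) * (a * c) + g * c ^ 2)
    (h2 : H2 = l ^ 2 * b ^ 2 + l * (a * c) + (1 + l) * c ^ 2)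
    (f u v : A) (hf : H2 * f = a * b * u + H1 * v) : ∃ u v, f = a * b * u + H1 * v := by
  have Hb2 : ∀ y p q, b * y = a * p + c ^ 2 * q → ∃ p q, y = a * p + c ^ 2 * q := by
    intro y p q e
    obtain ⟨p', q', rfl⟩ := Hb y p (c * q) (by linear_combination e)
    obtain ⟨t, ht⟩ := hac (b * q' - c * q) ⟨p - b * p', by linear_combination e⟩
    obtain ⟨p2, q2, rfl⟩ := Hb q' t q (by linear_combination ht)
    exact ⟨p' + c * p2, q2, by ring⟩
  -- step 1
  have S1 : ∃ p q, f = a * p + H1 * q := by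
    obtain ⟨p, q, e⟩ := Hb2 (b * (l ^ 2 * f)) (b * u + (l ^ 2 * a + l * (1 + l) * c) * v - l * c * f)
      (g * v - (1 + l) * f) (by rw [h1, h2] at hf; linear_combination hf)
    obtain ⟨p, q, e⟩ := Hb2 _ _ _ e
    refine ⟨li ^ 2 * p - (l ^ 2 * a + l * (1 + l) * c) * gi * li ^ 2 * q, gi * li ^ 2 * q, ?_⟩
    rw [h1]
    linear_combination li ^ 2 * e - f * (l * li + 1) * hl - c ^ 2 * li ^ 2 * q * hg
  have Cc : ∀ y p q, c * y = b * p + H1 * q → ∃ p q, y = b * p + H1 * q := by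
    intro y p q e
    rw [h1] at e
    obtain ⟨p1, q1, e1⟩ := Ha (a * (l ^ 2 * q)) (-p) (y - (l * (1 + l) * a + g * c) * q)
      (by linear_combination - e)
    obtain ⟨p2, q2, e2⟩ := Ha _ _ _ e1
    obtain ⟨t, ht⟩ := hbc (l ^ 2 * y - H1 * q2) ⟨l ^ 2 * p + H1 * p2, by
      rw [h1]
      linear_combination l ^ 2 * e + (l ^ 2 * a ^ 2 + l * (1 + l) * (a * c) + g * c ^ 2) * e2⟩
    refine ⟨li ^ 2 * t, li ^ 2 * q2, ?_⟩
    linear_combination li ^ 2 * ht - y * (l * li + 1) * hl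
  have Cl : ∀ y p q, (l * a + (1 + l) * c) * y = b * p + H1 * q → ∃ p q, y = b * p + H1 * q := by
    intro y p q e
    rw [h1] at e
    obtain ⟨z, hz⟩ : ∃ z, z = y - l * a * q := ⟨_, rfl⟩
    have ez : (l * a + (1 + l) * c) * z = b * p + c ^ 2 * (g * q) := by
      rw [hz]; linear_combination e
    obtain ⟨x1, z1, e1⟩ := Ha (l * z) p (c * g * q - (1 + l) * z) (by linear_combination ez)
    obtain ⟨t, ht⟩ := hbc ((l * a + (1 + l) * c) * z1 - l * c * g * q)
      ⟨l * p - (l * a + (1 + l) * c) * x1, by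
        linear_combination l * ez - (l * a + (1 + l) * c) * e1⟩
    obtain ⟨x2, z2, e2⟩ := Ha (l * z1) t (l * g * q - (1 + l) * z1) (by linear_combination ht)
    obtain ⟨t', ht'⟩ := hbc ((l * a + (1 + l) * c) * z2 - l ^ 2 * g * q)
      ⟨l * t - (l * a + (1 + l) * c) * x2, by
        linear_combination l * ht - (l * a + (1 + l) * c) * e2⟩
    have fin : l ^ 2 * g * y = H1 * z2 + b * (g * l * x1 + g * c * x2 - l * a * t') := by
      rw [h1]
      linear_combination (-l ^ 2 * g) * hz + g * l * e1 + g * c * e2 - l * a * ht'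
    refine ⟨li ^ 2 * gi * (g * l * x1 + g * c * x2 - l * a * t'), li ^ 2 * gi * z2, ?_⟩
    linear_combination li ^ 2 * gi * fin - y * (l * li + 1) * hl - y * l ^ 2 * li ^ 2 * hg
  have S2 : ∃ p q, f = b * p + H1 * q := by
    obtain ⟨p, q, e⟩ := Cc ((l * a + (1 + l) * c) * f) (a * u - l ^ 2 * b * f) v
      (by rw [h2] at hf; linear_combination hf)
    exact Cl _ _ _ e
  obtain ⟨p, q, ep⟩ := S1
  obtain ⟨r, s, er⟩ := S2
  have e : H1 * (q - s) = b * r - a * p := by linear_combination er - ep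
  obtain ⟨α, β, e1⟩ := Hc (c * (g * (q - s))) (-p - (l ^ 2 * a + l * (1 + l) * c) * (q - s)) r
    (by rw [h1] at e; linear_combination e)
  obtain ⟨α, β, e2⟩ := Hc _ _ _ e1
  -- t = q - a * gi * α
  obtain ⟨w, hw⟩ := hba (p + gi * α * H1) ⟨r - H1 * (gi * β), by
    linear_combination er - ep - H1 * gi * e2 + H1 * (q - s) * hg⟩
  exact ⟨w, q - a * gi * α, by linear_combination ep + a * hw⟩

lemma legH1_eq (lam : K) : legH1 lam = C lam ^ 2 * psX 0 ^ 2 + C lam * (1 + C lam) *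
    (psX 0 * psX 2) + (C lam ^ 2 - C lam + 1) * psX 2 ^ 2 := by
  simp [legH1, smul_eq_C_mul]

lemma legH2_eq (lam : K) : legH2 lam = C lam ^ 2 * psX 1 ^ 2 + C lam * (psX 0 * psX 2)
    + (1 + C lam) * psX 2 ^ 2 := by
  simp [legH2, smul_eq_C_mul]

lemma psX_ne (i : Fin 3) : (psX i : MvPowerSeries (Fin 3) K) ≠ 0 := by
  intro h
  have := congrArg (coeff (Finsupp.single i 1)) h
  simp [psX] at this

lemma reg2 (lam : K) (hj : lam ^ 2 - lam + 1 ≠ 0) (f : MvPowerSeries (Fin 3) K)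
    (h : psX 0 * psX 1 ∣ legH1 lam * f) : psX 0 * psX 1 ∣ f := by
  have hc : coeff (ee 0 0 2) (legH1 lam) ≠ 0 := by
    have : coeff (ee 0 0 2) (legH1 lam) = lam ^ 2 - lam + 1 := by
      rw [legH1, psX0, psX2]
      simp [pow_two (monomial _ _), monomial_mul_monomial, coeff_monomial]
    rwa [this]
  have n0 : ¬ psX 0 ∣ legH1 lam := by
    rw [psX, X_dvd_iff]
    exact fun h => hc (h _ rfl)
  have n1 : ¬ psX 1 ∣ legH1 lam := by
    rw [psX, X_dvd_iff]
    exact fun h => hc (h _ rfl)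
  obtain ⟨f', rfl⟩ := psX_prime 0 _ _ n0 (dvd_trans (dvd_mul_right _ _) h)
  have h' := psX_prime 1 _ _ n1 (dvd_trans (dvd_mul_left _ _) h)
  obtain ⟨w, rfl⟩ := cancel1 0 1 (by decide) _ h'
  exact ⟨w, by ring⟩

lemma reg_of {A : Type*} [CommRing A] (I : Ideal A) (r : A) (h : ∀ f, r * f ∈ I → f ∈ I) :
    IsSMulRegular (A ⧸ (I • ⊤ : Submodule A A)) r := by
  rw [isSMulRegular_quotient_iff_mem_of_smul_mem]
  simpa using h

lemma leg_regular (lam : K) (h0 : lam ≠ 0) (hj : lam ^ 2 - lam + 1 ≠ 0) :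
    RingTheory.Sequence.IsRegular (MvPowerSeries (Fin 3) K)
      [psX 0 * psX 1, legH1 lam, legH2 lam] := by
  refine ⟨⟨?_⟩, ?_⟩
  · intro i hi
    simp only [List.length_cons, List.length_nil] at hi
    apply reg_of
    interval_cases i
    · intro f hf
      simp at hf ⊢
      rcases hf with (h | h) | h
      · exact absurd h (psX_ne 0)
      · exact absurd h (psX_ne 1)
      · exact h
    · intro f hf
      simp [Ideal.mem_span_singleton] at hf ⊢
      exact reg2 lam hj f hf
    · intro f hf
      have e : ∀ x, x ∈ Ideal.ofList (List.take 2 [psX 0 * psX 1, legH1 lam, legH2 lam]) ↔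
          ∃ u v, x = psX 0 * psX 1 * u + legH1 lam * v := by
        intro x
        simp only [List.take_succ_cons, List.take_zero, Ideal.ofList_cons, Ideal.ofList_nil,
          sup_bot_eq]
        rw [← Ideal.span_union, Set.singleton_union, Ideal.mem_span_pair]
        constructor
        · rintro ⟨u, v, h⟩; exact ⟨u, v, by rw [← h]; ring⟩
        · rintro ⟨u, v, h⟩; exact ⟨u, v, by rw [h]; ring⟩
      rw [e] at hf ⊢
      obtain ⟨u, v, hf⟩ := hf
      refine reg3 (psX 0) (psX 1) (psX 2) (C lam) (C lam⁻¹) (C lam ^ 2 - C lam + 1)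
        (C (lam ^ 2 - lam + 1)⁻¹) ?_ ?_ rfl (cancel1 2 0 (by decide))
        (cancel1 2 1 (by decide)) (cancel1 0 1 (by decide)) (cancel2 2 0 1 (by decide) (by decide))
        (cancel2 0 1 2 (by decide) (by decide)) (cancel2 1 0 2 (by decide) (by decide))
        (legH1 lam) (legH2 lam) (legH1_eq lam) (legH2_eq lam) f u v hf
      · rw [← map_mul, mul_inv_cancel₀ h0, map_one]
      · rw [← map_pow, ← map_sub, ← map_one C, ← map_add, ← map_mul, mul_inv_cancel₀ hj]
  · intro h
    have h1 : (1 : MvPowerSeries (Fin 3) K) ∈ (Ideal.ofList [psX 0 * psX 1, legH1 lam, legH2 lam] •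
        ⊤ : Submodule (MvPowerSeries (Fin 3) K) (MvPowerSeries (Fin 3) K)) := by
      rw [← h]; trivial
    have e : Ideal.ofList [psX 0 * psX 1, legH1 lam, legH2 lam] =
        Ideal.span {psX 0 * psX 1, legH1 lam, legH2 lam} := by
      rw [Ideal.ofList]; congr 1; ext; simp
    rw [smul_eq_mul, Ideal.mul_top, e] at h1
    have := ((phi_eq_zero lam _).1 (phi_of_span lam _ h1)).1
    rw [← ee_zero] at this
    simp at this

end LegendreProof

/-- For `λ ∉ {0,1}` with `λ^2 - λ + 1 ≠ 0`, one has
`Ann_R(L_λ) = (x_1x_2, H_1, H_2)`; in particular this ideal is a complete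
intersection (its three generators form a regular sequence in `R`) and
`R/Ann_R(L_λ)` has Hilbert function `{1,3,3,1}`. -/
theorem ann_legendre_cubic
    {K : Type*} [Field K] [IsAlgClosed K] [CharZero K]
    (lam : K) (h0 : lam ≠ 0) (h1 : lam ≠ 1) (hj : lam ^ 2 - lam + 1 ≠ 0) :
    annR (legendreCubic lam) =
      Ideal.span {psX 0 * psX 1, legH1 lam, legH2 lam} ∧
    RingTheory.Sequence.IsRegular (MvPowerSeries (Fin 3) K)
      [psX 0 * psX 1, legH1 lam, legH2 lam] ∧
    hilbQ (annR (legendreCubic lam)) 0 = 1 ∧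
    hilbQ (annR (legendreCubic lam)) 1 = 3 ∧
    hilbQ (annR (legendreCubic lam)) 2 = 3 ∧
    hilbQ (annR (legendreCubic lam)) 3 = 1 ∧
    mxR K 3 ^ 4 ≤ annR (legendreCubic lam) := by
  rw [ann_eq lam h0 hj]
  refine ⟨rfl, leg_regular lam h0 hj, ?_, ?_, ?_, ?_, ?_⟩
  · rw [hilbQ, fr1 lam h0 hj, fr0 lam h0 hj]
  · rw [hilbQ, fr2 lam h0 hj, fr1 lam h0 hj]
  · rw [hilbQ, fr3 lam h0 hj, fr2 lam h0 hj]
  · rw [hilbQ, fr4 lam h0 hj, fr3 lam h0 hj]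
  · intro f hf
    exact (span_eq_ker lam h0 hj f).2 (mx4 lam f hf)
end

section
/- Let (A, m) be an Artinian Gorenstein local K-algebra with m^4 = 0 and HF_A(1) = n ≥ 3. Suppose A admits an exact zero divisor, i.e. a nonzero element a ∈ m such that the annihilator (0 : a) is a principal ideal. Then the Poincaré series of A, P^A_K(z) = Σ_{j≥0} dim_K Tor_j^A(K,K) z^j, is a rational function, and it equals the Poincaré series of the associated graded ring gr_m(A). -/
/-- `dim_K` of the socle `(0 :_A m)` of `A = R/I`, where `m = M/I` is the
maximal ideal of `A`.  The Artinian local ring `A = R/I` is Gorenstein iff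
this equals `1`. -/
noncomputable def socDimQ {K : Type*} [Field K] {n : ℕ}
    (I : Ideal (MvPowerSeries (Fin n) K)) : ℕ :=
  Module.finrank K
    ((Submodule.colon (⊥ : Ideal (MvPowerSeries (Fin n) K ⧸ I))
      ((mxR K n).map (Ideal.Quotient.mk I))).restrictScalars K)

/-- The total degree `|α| = α 1 + ⋯ + α n` of a multi-index. -/
def degM {n : ℕ} (α : Fin n →₀ ℕ) : ℕ := ∑ i, α i

/-- The ideal `I^*` of `R` generated by the initial forms `f^*` of the elements
`f ∈ I` (for `f ≠ 0` of order `d`, `f^*` is the degree-`d` homogeneous component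
of `f`; the set below consists of all such initial forms, together with `0`).
For an ideal `I` with `R/I` Artinian, `R/I^*` is (canonically isomorphic to) the
associated graded ring `gr_m(R/I) = ⊕_{i ≥ 0} m^i/m^(i+1)` of `A = R/I`. -/
noncomputable def initialIdeal {K : Type*} [Field K] {n : ℕ}
    (I : Ideal (MvPowerSeries (Fin n) K)) : Ideal (MvPowerSeries (Fin n) K) :=
  Ideal.span { g | ∃ f ∈ I, ∃ d : ℕ,
    (∀ α : Fin n →₀ ℕ, degM α < d → MvPowerSeries.coeff α f = 0) ∧
    (∀ α : Fin n →₀ ℕ, MvPowerSeries.coeff α g =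
      if degM α = d then MvPowerSeries.coeff α f else 0) }

open CategoryTheory in
/-- The `j`-th Betti number `dim_K Tor_j^A(K, K)` of `A = R/I`, where the
residue field `K = A/m` of `A` is realized as `R/(I + M)`. -/
noncomputable def bettiQ {K : Type*} [Field K] {n : ℕ}
    (I : Ideal (MvPowerSeries (Fin n) K)) (j : ℕ) : ℕ :=
  letI : Algebra (MvPowerSeries (Fin n) K ⧸ I)
      (MvPowerSeries (Fin n) K ⧸ (I ⊔ mxR K n)) :=
    (Ideal.Quotient.factor (S := I) (T := I ⊔ mxR K n) le_sup_left).toAlgebra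
  Module.finrank K (RestrictScalars K (MvPowerSeries (Fin n) K ⧸ I)
    (((Tor (ModuleCat (MvPowerSeries (Fin n) K ⧸ I)) j).obj
        (ModuleCat.of _ (MvPowerSeries (Fin n) K ⧸ (I ⊔ mxR K n)))).obj
      (ModuleCat.of _ (MvPowerSeries (Fin n) K ⧸ (I ⊔ mxR K n)))))

/-- A formal power series is rational if it is the power series expansion of a
quotient of two polynomials. -/
def isRationalSeries (P : PowerSeries ℚ) : Prop :=
  ∃ p q : Polynomial ℚ, q ≠ 0 ∧ (q : PowerSeries ℚ) * P = (p : PowerSeries ℚ)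


set_option linter.style.haveILetI false
section HomPart
open CategoryTheory MonoidalCategory

universe u
variable {A : Type u} [CommRing A]

noncomputable def tcx {k : ModuleCat.{u} A} (P : ProjectiveResolution k) :
    ModuleCat.{u} A ⥤ ChainComplex (ModuleCat.{u} A) ℕ where
  obj X := (((tensoringLeft (ModuleCat.{u} A)).obj X).mapHomologicalComplex _).obj P.complex
  map f := (NatTrans.mapHomologicalComplex ((tensoringLeft (ModuleCat.{u} A)).map f) _).app P.complex
  map_id X := by ext; simp
  map_comp f g := by ext; simp

noncomputable def Hf {k : ModuleCat.{u} A} (P : ProjectiveResolution k) (j : ℕ) :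
    ModuleCat.{u} A ⥤ ModuleCat.{u} A :=
  tcx P ⋙ HomologicalComplex.homologyFunctor _ _ j

instance {k : ModuleCat.{u} A} (P : ProjectiveResolution k) : (tcx P).Additive where
  map_add := by
    intro X Y f g
    ext i : 1
    simp [tcx]
    rfl

instance {k : ModuleCat.{u} A} (P : ProjectiveResolution k) : (tcx P).PreservesZeroMorphisms := inferInstance

lemma tcx_shortExact {k : ModuleCat.{u} A} (P : ProjectiveResolution k)
    {S : ShortComplex (ModuleCat.{u} A)} (hS : S.ShortExact) : (S.map (tcx P)).ShortExact := by
  apply HomologicalComplex.shortExact_of_degreewise_shortExact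
  intro i
  have hp : Module.Projective A (P.complex.X i) :=
    (IsProjective.iff_projective (R := A) (P.complex.X i)).mpr (P.projective i)
  apply ModuleCat.shortComplex_shortExact
  · exact rTensor_exact (P.complex.X i) ((ShortComplex.ShortExact.moduleCat_exact_iff_function_exact _).mp hS.exact) hS.moduleCat_surjective_g
  · exact Module.Flat.rTensor_preserves_injective_linearMap S.f.hom hS.moduleCat_injective_f
  · exact LinearMap.rTensor_surjective _ hS.moduleCat_surjective_g

noncomputable def torIso {k : ModuleCat.{u} A} (P : ProjectiveResolution k) (j : ℕ) (X : ModuleCat.{u} A) :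
    ((Tor (ModuleCat.{u} A) j).obj X).obj k ≅ (Hf P j).obj X :=
  P.isoLeftDerivedObj ((tensoringLeft (ModuleCat.{u} A)).obj X) j

noncomputable def H0Iso {k : ModuleCat.{u} A} (P : ProjectiveResolution k) (X : ModuleCat.{u} A) :
    (Hf P 0).obj X ≅ X ⊗ k :=
  haveI : Limits.PreservesFiniteColimits ((tensoringLeft (ModuleCat.{u} A)).obj X) :=
    inferInstanceAs (Limits.PreservesFiniteColimits (tensorLeft X))
  (torIso P 0 X).symm ≪≫ (((tensoringLeft (ModuleCat.{u} A)).obj X).leftDerivedZeroIsoSelf).app k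

noncomputable def unitCx {k : ModuleCat.{u} A} (P : ProjectiveResolution k) :
    (tcx P).obj (𝟙_ _) ≅ P.complex :=
  (NatIso.mapHomologicalComplex (leftUnitorNatIso (ModuleCat.{u} A)) _).app P.complex ≪≫
    (Functor.mapHomologicalComplexIdIso _ _).app P.complex

lemma Hf_unit_zero {k : ModuleCat.{u} A} (P : ProjectiveResolution k) (j : ℕ) :
    Limits.IsZero ((Hf P (j+1)).obj (ModuleCat.of A A)) := by
  refine Limits.IsZero.of_iso ?_ ((HomologicalComplex.homologyFunctor _ _ (j+1)).mapIso (unitCx P))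
  have := P.complex_exactAt_succ j
  exact this.isZero_homology


variable {k : ModuleCat.{u} A} (P : ProjectiveResolution k)
variable {X Y Z X' Y' Z' : Type u} [AddCommGroup X] [Module A X] [AddCommGroup Y] [Module A Y]
  [AddCommGroup Z] [Module A Z] [AddCommGroup X'] [Module A X'] [AddCommGroup Y'] [Module A Y']
  [AddCommGroup Z'] [Module A Z']

noncomputable abbrev Ho (j : ℕ) (X : Type u) [AddCommGroup X] [Module A X] : ModuleCat.{u} A :=
  (Hf P j).obj (ModuleCat.of A X)

noncomputable def hm (j : ℕ) (f : X →ₗ[A] Y) : Ho P j X →ₗ[A] Ho P j Y :=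
  ((Hf P j).map (ModuleCat.ofHom f)).hom

lemma hm_comp (j : ℕ) (f : X →ₗ[A] Y) (g : Y →ₗ[A] Z) :
    hm P j (g ∘ₗ f) = hm P j g ∘ₗ hm P j f := by
  simp [hm]

lemma hm_id (j : ℕ) : hm P j (LinearMap.id : X →ₗ[A] X) = LinearMap.id := by
  simp [hm]

/-- short exactness of unbundled linear maps -/
structure SE (f : X →ₗ[A] Y) (g : Y →ₗ[A] Z) : Prop where
  inj : Function.Injective f
  ex : Function.Exact f g
  surj : Function.Surjective g

def SE.sc {f : X →ₗ[A] Y} {g : Y →ₗ[A] Z} (h : SE f g) : ShortComplex (ModuleCat.{u} A) :=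
  ShortComplex.mk (ModuleCat.ofHom f) (ModuleCat.ofHom g) (by
    ext x; exact (h.ex (f x)).mpr ⟨x, rfl⟩)

lemma SE.se {f : X →ₗ[A] Y} {g : Y →ₗ[A] Z} (h : SE f g) : h.sc.ShortExact :=
  ModuleCat.shortComplex_shortExact _ h.ex h.inj h.surj

noncomputable def SE.dl {f : X →ₗ[A] Y} {g : Y →ₗ[A] Z} (h : SE f g) (j : ℕ) :
    Ho P (j+1) Z →ₗ[A] Ho P j X :=
  ((tcx_shortExact P h.se).δ (j+1) j (by simp)).hom

lemma SE.ex2 {f : X →ₗ[A] Y} {g : Y →ₗ[A] Z} (h : SE f g) (j : ℕ) :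
    Function.Exact (hm P j f) (hm P j g) :=
  (ShortComplex.ShortExact.moduleCat_exact_iff_function_exact _).mp
    ((tcx_shortExact P h.se).homology_exact₂ j)

lemma SE.ex3 {f : X →ₗ[A] Y} {g : Y →ₗ[A] Z} (h : SE f g) (j : ℕ) :
    Function.Exact (hm P (j+1) g) (h.dl P j) :=
  (ShortComplex.ShortExact.moduleCat_exact_iff_function_exact _).mp
    ((tcx_shortExact P h.se).homology_exact₃ (j+1) j (by simp))

lemma SE.ex1 {f : X →ₗ[A] Y} {g : Y →ₗ[A] Z} (h : SE f g) (j : ℕ) :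
    Function.Exact (h.dl P j) (hm P j f) :=
  (ShortComplex.ShortExact.moduleCat_exact_iff_function_exact _).mp
    ((tcx_shortExact P h.se).homology_exact₁ (j+1) j (by simp))

lemma SE.surj0 {f : X →ₗ[A] Y} {g : Y →ₗ[A] Z} (h : SE f g) :
    Function.Surjective (hm P 0 g) := by
  have h1 := (tcx_shortExact P h.se).epi_g
  have := HomologicalComplex.epi_homologyMap_of_epi_of_not_rel (h.sc.map (tcx P)).g 0 (by simp)
  exact (ModuleCat.epi_iff_surjective _).mp this

lemma SE.nat {f : X →ₗ[A] Y} {g : Y →ₗ[A] Z} (h : SE f g)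
    {f' : X' →ₗ[A] Y'} {g' : Y' →ₗ[A] Z'} (h' : SE f' g')
    (u : X →ₗ[A] X') (v : Y →ₗ[A] Y') (w : Z →ₗ[A] Z') (h1 : f' ∘ₗ u = v ∘ₗ f)
    (h2 : g' ∘ₗ v = w ∘ₗ g) (j : ℕ) :
    h'.dl P j ∘ₗ hm P (j+1) w = hm P j u ∘ₗ h.dl P j := by
  let φ : h.sc ⟶ h'.sc :=
    { τ₁ := ModuleCat.ofHom u
      τ₂ := ModuleCat.ofHom v
      τ₃ := ModuleCat.ofHom w
      comm₁₂ := by ext x; exact LinearMap.congr_fun h1 x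
      comm₂₃ := by ext x; exact LinearMap.congr_fun h2 x }
  have := HomologicalComplex.HomologySequence.δ_naturality ((tcx P).mapShortComplex.map φ)
    (tcx_shortExact P h.se) (tcx_shortExact P h'.se) (j+1) j (by simp)
  exact (congrArg ModuleCat.Hom.hom this).symm

lemma Ho_self_sub (j : ℕ) : Subsingleton (Ho P (j+1) A) :=
  ModuleCat.subsingleton_of_isZero (Hf_unit_zero P j)


section Len
variable (K : Type u) [Field K] [Algebra K A]

@[reducible] noncomputable def km (A : Type u) [CommRing A] [Algebra K A]
    (M : Type u) [AddCommGroup M] [Module A M] : Module K M := Module.compHom M (algebraMap K A)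

noncomputable def ell (A : Type u) [CommRing A] [Algebra K A]
    (M : Type u) [AddCommGroup M] [Module A M] : ℕ∞ :=
  letI := km K A M
  Module.length K M

@[reducible] def rs (f : X →ₗ[A] Y) : letI := km K A X; letI := km K A Y; X →ₗ[K] Y :=
  letI := km K A X; letI := km K A Y
  { toFun := f
    map_add' := map_add f
    map_smul' := fun c x => map_smul f (algebraMap K A c) x }

lemma ell_add (f : X →ₗ[A] Y) (g : Y →ₗ[A] Z) (hf : Function.Injective f)
    (h : Function.Exact f g) (hg : Function.Surjective g) :
    ell K A Y = ell K A X + ell K A Z := by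
  letI := km K A X; letI := km K A Y; letI := km K A Z
  exact Module.length_eq_add_of_exact (rs K f) (rs K g) hf hg h

lemma ell_inj (f : X →ₗ[A] Y) (hf : Function.Injective f) : ell K A X ≤ ell K A Y := by
  letI := km K A X; letI := km K A Y
  exact Module.length_le_of_injective (rs K f) hf

lemma ell_surj (f : X →ₗ[A] Y) (hf : Function.Surjective f) : ell K A Y ≤ ell K A X := by
  letI := km K A X; letI := km K A Y
  exact Module.length_le_of_surjective (rs K f) hf

lemma ell_congr (f : X ≃ₗ[A] Y) : ell K A X = ell K A Y :=
  le_antisymm (ell_inj K f.toLinearMap f.injective) (ell_surj K f.toLinearMap f.surjective)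

lemma ell_mid (f : X →ₗ[A] Y) (g : Y →ₗ[A] Z) (h : Function.Exact f g) :
    ell K A Y ≤ ell K A X + ell K A Z := by
  rw [ell_add K (LinearMap.ker g).subtype g.rangeRestrict (Submodule.subtype_injective _)
    (by intro y; simp [Subtype.ext_iff]) g.surjective_rangeRestrict]
  refine add_le_add ?_ (ell_inj K (LinearMap.range g).subtype (Submodule.subtype_injective _))
  have := LinearMap.exact_iff.mp h
  rw [this]
  exact ell_surj K f.rangeRestrict f.surjective_rangeRestrict

lemma ell_zero (h : Subsingleton X) : ell K A X = 0 :=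
  letI := km K A X
  Module.length_eq_zero_iff.mpr h

noncomputable def tt (j : ℕ) (X : Type u) [AddCommGroup X] [Module A X] : ℕ∞ :=
  ell K A (Ho P j X)

lemma tt_congr (j : ℕ) (e : X ≃ₗ[A] Y) : tt P K j X = tt P K j Y :=
  ell_congr K (LinearEquiv.ofLinearMap (hm P j e.toLinearMap) (hm P j e.symm.toLinearMap)
    (by rw [← hm_comp]; simp [hm_id]) (by rw [← hm_comp]; simp [hm_id]))

lemma SE.mid {f : X →ₗ[A] Y} {g : Y →ₗ[A] Z} (h : SE f g) (j : ℕ) :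
    tt P K j Y ≤ tt P K j X + tt P K j Z := ell_mid K _ _ (h.ex2 P j)

lemma SE.thr {f : X →ₗ[A] Y} {g : Y →ₗ[A] Z} (h : SE f g) (j : ℕ) :
    tt P K (j+1) Z ≤ tt P K (j+1) Y + tt P K j X := ell_mid K _ _ (h.ex3 P j)

lemma SE.fst {f : X →ₗ[A] Y} {g : Y →ₗ[A] Z} (h : SE f g) (j : ℕ) :
    tt P K j X ≤ tt P K (j+1) Z + tt P K j Y := ell_mid K _ _ (h.ex1 P j)

lemma SE.zro {f : X →ₗ[A] Y} {g : Y →ₗ[A] Z} (h : SE f g) :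
    tt P K 0 Z ≤ tt P K 0 Y := ell_surj K _ (h.surj0 P)

/-- if H_j f injective for all j then additive -/
lemma SE.add_of_inj {f : X →ₗ[A] Y} {g : Y →ₗ[A] Z} (h : SE f g)
    (hi : ∀ j, Function.Injective (hm P j f)) (j : ℕ) :
    tt P K j Y = tt P K j X + tt P K j Z := by
  refine ell_add K _ _ (hi j) (h.ex2 P j) ?_
  cases j with
  | zero => exact h.surj0 P
  | succ j =>
    intro z
    rw [← Set.mem_range, ← (h.ex3 P j) z]
    apply hi j
    rw [map_zero]
    exact ((h.ex1 P j) _).mpr ⟨z, rfl⟩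

lemma SE.le_of_inj {f : X →ₗ[A] Y} {g : Y →ₗ[A] Z} (h : SE f g) (j : ℕ)
    (hi : Function.Injective (hm P j g)) : tt P K j X ≤ tt P K (j+1) Z := by
  refine ell_surj K (h.dl P j) ?_
  intro x
  rw [← Set.mem_range, ← (h.ex1 P j) x]
  apply hi
  rw [map_zero]
  exact ((h.ex2 P j) _).mpr ⟨x, rfl⟩

lemma SE.inj_shift {f : X →ₗ[A] Y} {g : Y →ₗ[A] Z} (h : SE f g)
    {f' : X' →ₗ[A] Y'} {g' : Y' →ₗ[A] Z'} (h' : SE f' g')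
    (u : X →ₗ[A] X') (v : Y →ₗ[A] Y') (w : Z →ₗ[A] Z') (h1 : f' ∘ₗ u = v ∘ₗ f)
    (h2 : g' ∘ₗ v = w ∘ₗ g) (j : ℕ) (hz : Subsingleton (Ho P (j+1) Y))
    (hi : Function.Injective (hm P j u)) : Function.Injective (hm P (j+1) w) := by
  have hd : Function.Injective (h.dl P j) := by
    rw [injective_iff_map_eq_zero]
    intro z hz'
    obtain ⟨y, rfl⟩ := (h.ex3 P j z).mp hz'
    rw [Subsingleton.elim y 0, map_zero]
  have := h.nat P h' u v w h1 h2 j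
  have h3 : Function.Injective (h'.dl P j ∘ₗ hm P (j+1) w) := by
    rw [this]; exact hi.comp hd
  rw [LinearMap.coe_comp] at h3
  exact Function.Injective.of_comp h3

lemma tt_prod (j : ℕ) : tt P K j (X × Y) = tt P K j X + tt P K j Y := by
  have h : SE (LinearMap.inl A X Y) (LinearMap.snd A X Y) :=
    ⟨LinearMap.inl_injective, Function.Exact.inl_snd, LinearMap.snd_surjective⟩
  refine h.add_of_inj P K (fun j => ?_) j
  have : hm P j (LinearMap.fst A X Y) ∘ₗ hm P j (LinearMap.inl A X Y) = LinearMap.id := by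
    rw [← hm_comp, LinearMap.fst_comp_inl, hm_id]
  intro x y hxy
  have h2 := congrArg (hm P j (LinearMap.fst A X Y)) hxy
  rwa [← LinearMap.comp_apply, ← LinearMap.comp_apply, this] at h2

lemma tt_sub (j : ℕ) [Subsingleton X] : tt P K j X = 0 := by
  apply ell_zero
  have : hm P j (LinearMap.id : X →ₗ[A] X) = 0 := by
    have h0 : (LinearMap.id : X →ₗ[A] X) = (0 : X →ₗ[A] X) := Subsingleton.elim _ _
    rw [h0]
    unfold hm
    have : (ModuleCat.ofHom (0 : X →ₗ[A] X)) = 0 := rfl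
    rw [this]
    simp [Hf]
    rfl
  rw [hm_id] at this
  exact ⟨fun x y => by
    have := fun x => LinearMap.congr_fun this x
    simp only [LinearMap.id_apply, LinearMap.zero_apply] at this
    rw [this x, this y]⟩

lemma tt_pow (j : ℕ) (d : ℕ) : tt P K j (Fin d → X) = d * tt P K j X := by
  induction d with
  | zero => rw [tt_sub]; simp
  | succ d ih =>
    rw [← tt_congr P K j (Fin.consLinearEquiv A (fun _ : Fin (d+1) => X)), tt_prod, ih]
    push_cast; ring

end Len

end HomPart

set_option linter.style.haveILetI false
section Num
open CategoryTheory
universe u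
variable {K : Type u} [Field K] {A : Type u} [CommRing A] [Algebra K A]
  {kk : Type u} [AddCommGroup kk] [Module A kk]

/-- multiplication by `a` as a map `A/b → m` -/
noncomputable def mulq {N : Type u} [AddCommGroup N] [Module A N] (J : Ideal A) (y : N)
    (h : ∀ r ∈ J, r • y = 0) : (A ⧸ J) →ₗ[A] N :=
  Submodule.liftQ J (LinearMap.toSpanSingleton A N y) (by
    intro r hr; simpa using h r hr)

lemma mulq_mk {N : Type u} [AddCommGroup N] [Module A N] (J : Ideal A) (y : N)
    (h : ∀ r ∈ J, r • y = 0) (r : A) : mulq J y h (Submodule.Quotient.mk r) = r • y := by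
  rw [mulq, Submodule.liftQ_apply]; rfl

lemma mulq_inj {N : Type u} [AddCommGroup N] [Module A N] (J : Ideal A) (y : N)
    (h : ∀ r ∈ J, r • y = 0) (h2 : ∀ r, r • y = 0 → r ∈ J) : Function.Injective (mulq J y h) := by
  rw [injective_iff_map_eq_zero]
  intro x
  obtain ⟨r, rfl⟩ := Submodule.Quotient.mk_surjective _ x
  rw [mulq_mk]
  intro hr
  exact (Submodule.Quotient.mk_eq_zero _).mpr (h2 r hr)

lemma SE_mkQ (J : Ideal A) : SE (J.subtype : J →ₗ[A] A) (Submodule.mkQ J) :=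
  ⟨Submodule.subtype_injective _, LinearMap.exact_subtype_mkQ J, Submodule.mkQ_surjective J⟩

lemma SE_mul (J : Ideal A) (y : A) (h : ∀ r, r * y = 0 ↔ r ∈ J) :
    SE (mulq J y (fun r hr => (h r).mpr hr)) (Submodule.mkQ (Ideal.span {y})) := by
  refine ⟨mulq_inj _ _ _ (fun r hr => (h r).mp hr), ?_, Submodule.mkQ_surjective _⟩
  intro x
  rw [Submodule.mkQ_apply, Submodule.Quotient.mk_eq_zero, Ideal.mem_span_singleton']
  constructor
  · rintro ⟨r, rfl⟩
    exact ⟨Submodule.Quotient.mk r, by rw [mulq_mk]; rfl⟩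
  · rintro ⟨z, rfl⟩
    obtain ⟨r, rfl⟩ := Submodule.Quotient.mk_surjective _ z
    exact ⟨r, by rw [mulq_mk]; rfl⟩

/-- the package of data about the residue field -/
structure Res (K : Type u) [Field K] [Algebra K A] (m : Ideal A) (π : A →ₗ[A] kk) : Prop where
  surj : Function.Surjective π
  ker : ∀ r, π r = 0 ↔ r ∈ m
  ne : m ≠ ⊤
  res : ∀ r : A, ∃ c : K, r - algebraMap K A c ∈ m

variable {m : Ideal A} {π : A →ₗ[A] kk}

lemma Res.SE (hR : Res K m π) : SE (m.subtype : m →ₗ[A] A) π := by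
  refine ⟨Submodule.subtype_injective _, ?_, hR.surj⟩
  intro x
  rw [hR.ker]
  exact ⟨fun h => ⟨⟨x, h⟩, rfl⟩, by rintro ⟨y, rfl⟩; exact y.2⟩

lemma Res.smul_kk (hR : Res K m π) {r : A} (hr : r ∈ m) (x : kk) : r • x = 0 := by
  obtain ⟨y, rfl⟩ := hR.surj x
  rw [← map_smul, hR.ker]
  exact m.mul_mem_right _ hr

lemma Res.pi_one (hR : Res K m π) : π 1 ≠ 0 := by
  rw [Ne, hR.ker, ← Ideal.eq_top_iff_one]; exact hR.ne

lemma Res.finrank (hR : Res K m π) : letI := km K A kk; Module.finrank K kk = 1 := by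
  letI := km K A kk
  rw [finrank_eq_one_iff']
  refine ⟨π 1, hR.pi_one, fun w => ?_⟩
  obtain ⟨r, rfl⟩ := hR.surj w
  obtain ⟨c, hc⟩ := hR.res r
  refine ⟨c, ?_⟩
  have h1 : π (r - algebraMap K A c) = 0 := (hR.ker _).mpr hc
  rw [map_sub, sub_eq_zero] at h1
  rw [h1]
  change algebraMap K A c • π 1 = _
  rw [← map_smul]; simp

lemma Res.ell (hR : Res K m π) : ell K A kk = 1 := by
  letI := km K A kk
  have h := hR.finrank
  have : Module.Finite K kk := Module.finite_of_finrank_eq_succ h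
  unfold _root_.ell
  rw [Module.length_eq_finrank, h]; rfl

lemma Res.semi (hR : Res K m π) {N : Type u} [AddCommGroup N] [Module A N]
    (hN : ∀ r ∈ m, ∀ x : N, r • x = 0) (d : ℕ) (hd : _root_.ell K A N = d) :
    Nonempty (N ≃ₗ[A] (Fin d → kk)) := by
  letI i1 := km K A kk
  letI i2 := km K A N
  have hk := hR.finrank
  have hfk : Module.Finite K kk := Module.finite_of_finrank_eq_succ hk
  unfold _root_.ell at hd
  have hfin : Module.Finite K N := by
    have h1 : Module.length K N ≠ ⊤ := by rw [hd]; simp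
    rw [Module.length_ne_top_iff] at h1
    have := (isFiniteLength_iff_isNoetherian_isArtinian.mp h1).1
    infer_instance
  have hr : Module.finrank K N = d := by
    rw [Module.length_eq_finrank] at hd
    exact_mod_cast hd
  have hr2 : Module.finrank K (Fin d → kk) = d := by
    rw [Module.finrank_pi_fintype]; simp [hk]
  let e : N ≃ₗ[K] (Fin d → kk) := LinearEquiv.ofFinrankEq _ _ (by rw [hr, hr2])
  refine ⟨{ e with map_smul' := ?_ }⟩
  intro r x
  obtain ⟨c, hc⟩ := hR.res r
  have h1 : r • x = c • x := by
    have := hN _ hc x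
    rw [sub_smul, sub_eq_zero] at this
    exact this
  have h2 : r • (e x) = c • (e x) := by
    ext i
    have := hR.smul_kk hc (e x i)
    rw [sub_smul, sub_eq_zero] at this
    exact this
  change e (r • x) = r • e x
  rw [h1, h2, map_smul]

variable (P : ProjectiveResolution (ModuleCat.of A kk))

lemma Res.tt_semi (hR : Res K m π) {N : Type u} [AddCommGroup N] [Module A N]
    (hN : ∀ r ∈ m, ∀ x : N, r • x = 0) (d : ℕ) (hd : _root_.ell K A N = d) (j : ℕ) :
    tt P K j N = d * tt P K j kk := by
  obtain ⟨e⟩ := hR.semi hN d hd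
  rw [tt_congr P K j e, tt_pow]

lemma Res.tt_self (hR : Res K m π) : tt P K 0 A = 1 := by
  rw [← hR.ell]
  refine ell_congr K ?_
  exact (H0Iso P (ModuleCat.of A A)).toLinearEquiv ≪≫ₗ TensorProduct.lid A kk

lemma Res.tt_kk (hR : Res K m π) : tt P K 0 kk = 1 := by
  apply le_antisymm
  · rw [← hR.tt_self P]
    exact hR.SE.zro P K
  · rw [← hR.ell]
    have e : Ho P 0 kk ≃ₗ[A] TensorProduct A kk kk := (H0Iso P (ModuleCat.of A kk)).toLinearEquiv
    unfold tt
    rw [ell_congr K e]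
    have hs : ∀ (x : kk), ∃ r : A, x = r • π 1 := fun x => by
      obtain ⟨r, rfl⟩ := hR.surj x
      exact ⟨r, by rw [← map_smul]; simp⟩
    -- the map `kk ⊗ kk → kk`
    have hk : m ≤ LinearMap.ker (LinearMap.toSpanSingleton A (kk →ₗ[A] kk) LinearMap.id) := by
      intro r hr
      ext x
      simp [hR.smul_kk hr]
    have hπ : LinearMap.ker π = m := by ext r; simp [hR.ker]
    let q : kk ≃ₗ[A] (A ⧸ m) := (Submodule.quotEquivOfEq _ _ hπ.symm ≪≫ₗ
      π.quotKerEquivOfSurjective hR.surj).symm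
    let f : TensorProduct A kk kk →ₗ[A] kk :=
      TensorProduct.lift ((Submodule.liftQ m _ hk) ∘ₗ q.toLinearMap)
    refine ell_surj K f ?_
    intro x
    refine ⟨TensorProduct.tmul A (π 1) x, ?_⟩
    have hq : q (π 1) = Submodule.Quotient.mk 1 := by
      rw [← LinearEquiv.eq_symm_apply]
      rfl
    change ((Submodule.liftQ m _ hk) (q (π 1))) x = x
    rw [hq, Submodule.liftQ_apply]; simp

lemma Res.inj_pi (hR : Res K m π) (j : ℕ) : Function.Injective (hm P j π) := by
  cases j with
  | succ j => 
    have := Ho_self_sub P j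
    exact Function.injective_of_subsingleton _
  | zero =>
    have hs := hR.SE.surj0 P
    have h1 : _root_.ell K A (Ho P 0 A) = 1 := hR.tt_self P
    have h2 : _root_.ell K A (Ho P 0 kk) = 1 := hR.tt_kk P
    have h3 := ell_add K (LinearMap.ker (hm P 0 π)).subtype (hm P 0 π)
      (Submodule.subtype_injective _) (LinearMap.exact_subtype_ker_map _) hs
    rw [h1, h2] at h3
    have h4 : _root_.ell K A (LinearMap.ker (hm P 0 π)) = 0 := by
      revert h3
      generalize _root_.ell K A (LinearMap.ker (hm P 0 π)) = t
      intro h3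
      cases t with
      | top => simp at h3
      | coe t => norm_cast at h3 ⊢; omega
    letI := km K A (LinearMap.ker (hm P 0 π))
    have h5 := Module.length_eq_zero_iff.mp h4
    rw [← LinearMap.ker_eq_bot]
    exact Submodule.subsingleton_iff_eq_bot.mp h5


lemma pair_inj (hR : Res K m π) (j : ℕ) : ∀ (a b : A) (ha : a ∈ m) (hb : b ∈ m)
    (_ : ∀ r, r * a = 0 ↔ r ∈ Ideal.span {b}) (_ : ∀ r, r * b = 0 ↔ r ∈ Ideal.span {a})
    (la lb : m →ₗ[A] kk) (_ : la ⟨a, ha⟩ = π 1) (_ : lb ⟨b, hb⟩ = π 1)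
    (pa : (A ⧸ Ideal.span {a}) →ₗ[A] kk) (_ : pa ∘ₗ Submodule.mkQ (Ideal.span {a}) = π)
    (ub : (A ⧸ Ideal.span {b}) →ₗ[A] m) (_ : ∀ r, ub (Submodule.Quotient.mk r) = r • ⟨a, ha⟩),
    Function.Injective (hm P j pa) ∧ Function.Injective (hm P j ub) := by
  induction j with
  | zero =>
    -- first the statement for the projections
    have key : ∀ (a : A) (pa : (A ⧸ Ideal.span {a}) →ₗ[A] kk)
        (_ : pa ∘ₗ Submodule.mkQ (Ideal.span {a}) = π), Function.Injective (hm P 0 pa) := by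
      intro a pa hpa
      have h1 := hR.inj_pi P 0
      rw [← hpa, hm_comp, LinearMap.coe_comp] at h1
      exact (Function.Injective.of_comp_iff' _
        ⟨Function.Injective.of_comp h1, (SE_mkQ (Ideal.span {a})).surj0 P⟩).mp h1
    intro a b ha hb hab hba la lb hla hlb pa hpa ub hub
    refine ⟨key a pa hpa, ?_⟩
    have h2 := key b (la ∘ₗ ub) (by
      ext
      simp [hla, show ub 1 = _ from hub 1])
    rw [hm_comp, LinearMap.coe_comp] at h2
    exact Function.Injective.of_comp h2
  | succ j ih =>
    have key : ∀ (a b : A) (ha : a ∈ m) (hb : b ∈ m)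
      (_ : ∀ r, r * a = 0 ↔ r ∈ Ideal.span {b}) (_ : ∀ r, r * b = 0 ↔ r ∈ Ideal.span {a})
      (la lb : m →ₗ[A] kk) (_ : la ⟨a, ha⟩ = π 1) (_ : lb ⟨b, hb⟩ = π 1)
      (pa : (A ⧸ Ideal.span {a}) →ₗ[A] kk) (_ : pa ∘ₗ Submodule.mkQ (Ideal.span {a}) = π),
      Function.Injective (hm P (j+1) pa) := by
      intro a b ha hb hab hba la lb hla hlb pa hpa
      have hz : ∀ r ∈ Ideal.span {b}, r • (⟨a, ha⟩ : m) = 0 := by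
        intro r hr; ext; exact (hab r).mpr hr
      have hub := mulq_mk (Ideal.span {b}) (⟨a, ha⟩ : m) hz
      have hi := (ih a b ha hb hab hba la lb hla hlb pa hpa _ hub).2
      refine (SE_mul (Ideal.span {b}) a hab).inj_shift P hR.SE (mulq _ _ hz) LinearMap.id pa ?_ ?_ j
        (Ho_self_sub P j) hi
      · apply Submodule.linearMap_qext
        ext
        have e1 := mulq_mk (Ideal.span {b}) (⟨a, ha⟩ : m) hz 1
        have e2 := mulq_mk (Ideal.span {b}) a (fun r hr => (hab r).mpr hr) 1
        simp only [LinearMap.comp_apply, Submodule.mkQ_apply, e1, e2]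
        simp
      · rw [hpa]; rfl
    intro a b ha hb hab hba la lb hla hlb pa hpa ub hub
    refine ⟨key a b ha hb hab hba la lb hla hlb pa hpa, ?_⟩
    have h2 := key b a hb ha hba hab lb la hlb hla (la ∘ₗ ub) (by
      ext
      simp [hla, show ub 1 = _ from hub 1])
    rw [hm_comp, LinearMap.coe_comp] at h2
    exact Function.Injective.of_comp h2

abbrev qq (J J' : Ideal A) : Type u := (↥J) ⧸ (Submodule.comap (Submodule.subtype J) J')

lemma SE_qq (J J' J'' : Ideal A) (h1 : J'' ≤ J') (h2 : J' ≤ J) :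
    ∃ (f : qq J' J'' →ₗ[A] qq J J'') (g : qq J J'' →ₗ[A] qq J J'), SE f g := by
  have hle : Submodule.comap (Submodule.subtype J') J'' ≤ Submodule.comap (Submodule.inclusion h2)
    (Submodule.comap (Submodule.subtype J) J'') := fun x hx => hx
  refine ⟨Submodule.mapQ _ _ (Submodule.inclusion h2) hle,
    Submodule.mapQ _ _ LinearMap.id (fun x hx => h1 hx), ?_, ?_, ?_⟩
  · rw [injective_iff_map_eq_zero]
    intro x
    obtain ⟨r, rfl⟩ := Submodule.Quotient.mk_surjective _ x
    rw [Submodule.mapQ_apply, Submodule.Quotient.mk_eq_zero, Submodule.Quotient.mk_eq_zero]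
    exact fun h => h
  · intro x
    obtain ⟨r, rfl⟩ := Submodule.Quotient.mk_surjective _ x
    rw [Submodule.mapQ_apply, Submodule.Quotient.mk_eq_zero]
    constructor
    · intro h
      exact ⟨Submodule.Quotient.mk ⟨r.1, h⟩, by rw [Submodule.mapQ_apply]; rfl⟩
    · rintro ⟨y, hy⟩
      obtain ⟨s, rfl⟩ := Submodule.Quotient.mk_surjective _ y
      rw [Submodule.mapQ_apply, Submodule.Quotient.eq] at hy
      have h3 : (s : A) - r ∈ J'' := hy
      have : (r : A) = s - (s - r) := by ring
      change (r : A) ∈ J'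
      rw [this]
      exact J'.sub_mem s.2 (h1 h3)
  · intro x
    obtain ⟨r, rfl⟩ := Submodule.Quotient.mk_surjective _ x
    exact ⟨Submodule.Quotient.mk r, by rw [Submodule.mapQ_apply]; rfl⟩

lemma SE_top (J' J'' : Ideal A) (h1 : J'' ≤ J') :
    ∃ (f : qq J' J'' →ₗ[A] (A ⧸ J'')) (g : (A ⧸ J'') →ₗ[A] (A ⧸ J')), SE f g := by
  refine ⟨Submodule.mapQ _ _ (Submodule.subtype J') (fun x hx => hx),
    Submodule.mapQ _ _ LinearMap.id (fun x hx => h1 hx), ?_, ?_, ?_⟩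
  · rw [injective_iff_map_eq_zero]
    intro x
    obtain ⟨r, rfl⟩ := Submodule.Quotient.mk_surjective _ x
    rw [Submodule.mapQ_apply, Submodule.Quotient.mk_eq_zero, Submodule.Quotient.mk_eq_zero]
    exact fun h => h
  · intro x
    obtain ⟨r, rfl⟩ := Submodule.Quotient.mk_surjective _ x
    rw [Submodule.mapQ_apply, Submodule.Quotient.mk_eq_zero]
    constructor
    · intro h
      exact ⟨Submodule.Quotient.mk ⟨r, h⟩, by rw [Submodule.mapQ_apply]; rfl⟩
    · rintro ⟨y, hy⟩
      obtain ⟨s, rfl⟩ := Submodule.Quotient.mk_surjective _ y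
      rw [Submodule.mapQ_apply, Submodule.Quotient.eq] at hy
      have h3 : (s : A) - r ∈ J'' := hy
      have : (r : A) = s - (s - r) := by ring
      change (r : A) ∈ J'
      rw [this]
      exact J'.sub_mem s.2 (h1 h3)
  · intro x
    obtain ⟨r, rfl⟩ := Submodule.Quotient.mk_surjective _ x
    exact ⟨Submodule.Quotient.mk r, by rw [Submodule.mapQ_apply]; rfl⟩

lemma SE_x (W L L' : Ideal A) (x : A) (hx : x ∈ W) (hW : ∀ r, r ∈ W ↔ r * x ∈ L)
    (hL : ∀ r, r ∈ L' ↔ ∃ s, r - s * x ∈ L) :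
    ∃ (f : (A ⧸ W) →ₗ[A] qq W L) (g : qq W L →ₗ[A] qq W L'), SE f g := by
  have hz : ∀ r ∈ W, r • (Submodule.Quotient.mk ⟨x, hx⟩ : qq W L) = 0 := by
    intro r hr
    rw [← Submodule.Quotient.mk_smul, Submodule.Quotient.mk_eq_zero]
    exact (hW r).mp hr
  refine ⟨mulq W (Submodule.Quotient.mk ⟨x, hx⟩) hz,
    Submodule.mapQ _ _ LinearMap.id (fun r hr => (hL _).mpr ⟨0, by simpa using hr⟩), ?_, ?_, ?_⟩
  · apply mulq_inj
    intro r hr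
    rw [← Submodule.Quotient.mk_smul, Submodule.Quotient.mk_eq_zero] at hr
    exact (hW r).mpr hr
  · intro y
    obtain ⟨r, rfl⟩ := Submodule.Quotient.mk_surjective _ y
    rw [Submodule.mapQ_apply, Submodule.Quotient.mk_eq_zero]
    constructor
    · intro h
      obtain ⟨s, hs⟩ := (hL _).mp h
      refine ⟨Submodule.Quotient.mk s, ?_⟩
      rw [mulq_mk, ← Submodule.Quotient.mk_smul, eq_comm, Submodule.Quotient.eq]
      exact hs
    · rintro ⟨z, hz⟩
      obtain ⟨s, rfl⟩ := Submodule.Quotient.mk_surjective _ z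
      rw [mulq_mk, ← Submodule.Quotient.mk_smul, eq_comm, Submodule.Quotient.eq] at hz
      exact (hL _).mpr ⟨s, hz⟩
  · intro y
    obtain ⟨r, rfl⟩ := Submodule.Quotient.mk_surjective _ y
    exact ⟨Submodule.Quotient.mk r, by rw [Submodule.mapQ_apply]; rfl⟩

lemma SE_a (a b : A) (ha : a ∈ m) (hab : ∀ r, r * a = 0 ↔ r ∈ Ideal.span {b})
    (hz : ∀ r ∈ Ideal.span {b}, r • (⟨a, ha⟩ : m) = 0) :
    SE (mulq (Ideal.span {b}) (⟨a, ha⟩ : m) hz)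
      (Submodule.mkQ (Submodule.comap (Submodule.subtype m) (Ideal.span {a}))) := by
  refine ⟨mulq_inj _ _ _ (fun r hr => (hab r).mp (congrArg Subtype.val hr)), ?_,
    Submodule.mkQ_surjective _⟩
  intro x
  rw [Submodule.mkQ_apply, Submodule.Quotient.mk_eq_zero, Submodule.mem_comap,
    Submodule.subtype_apply, Ideal.mem_span_singleton']
  constructor
  · rintro ⟨r, hr⟩
    exact ⟨Submodule.Quotient.mk r, by rw [mulq_mk]; ext; exact hr⟩
  · rintro ⟨z, rfl⟩
    obtain ⟨r, rfl⟩ := Submodule.Quotient.mk_surjective _ z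
    exact ⟨r, by rw [mulq_mk]; rfl⟩

/-- the expected Betti numbers -/
def cseq (e : ℕ) : ℕ → ℕ × ℕ
  | 0 => (1, 1)
  | j + 1 => (1 + (cseq e j).1 + e * (cseq e j).2,
      (1 + (cseq e j).1 + e * (cseq e j).2) + (cseq e j).2)

lemma cseq_rec (e j : ℕ) :
    (cseq e (j+2)).2 + (cseq e j).2 = 1 + (e + 2) * (cseq e (j+1)).2 := by
  have h1 : (cseq e (j+2)).2 = 1 + (cseq e (j+1)).1 + e * (cseq e (j+1)).2 + (cseq e (j+1)).2 := rfl
  have h2 : (cseq e (j+1)).2 = (cseq e (j+1)).1 + (cseq e j).2 := rfl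
  rw [h1]; nlinarith

lemma qq_smul {J J' : Ideal A} (h : ∀ r ∈ m, ∀ y ∈ J, r * y ∈ J') (r : A) (hr : r ∈ m)
    (x : qq J J') : r • x = 0 := by
  obtain ⟨y, rfl⟩ := Submodule.Quotient.mk_surjective _ x
  rw [← Submodule.Quotient.mk_smul, Submodule.Quotient.mk_eq_zero]
  exact h r hr y y.2

theorem numeric (hR : Res K m π) (e : ℕ) (a b : A) (ha : a ∈ m) (hb : b ∈ m)
    (hab : ∀ r, r * a = 0 ↔ r ∈ Ideal.span {b}) (hba : ∀ r, r * b = 0 ↔ r ∈ Ideal.span {a})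
    (la lb : m →ₗ[A] kk) (hla : la ⟨a, ha⟩ = π 1) (hlb : lb ⟨b, hb⟩ = π 1)
    (Q : Ideal A) (haQ : Ideal.span {a} ≤ Q) (hQm : Q ≤ m) (hmm : ∀ r ∈ m, ∀ y ∈ m, r * y ∈ Q)
    (hmQ : ∀ r ∈ m, ∀ y ∈ Q, r * y ∈ Ideal.span {a})
    (hQ1 : _root_.ell K A (qq Q (Ideal.span {a})) = (1 : ℕ))
    (hQe : _root_.ell K A (qq m Q) = (e + 2 : ℕ))
    (x : A) (W L : Ideal A) (hW : ∀ r, r ∈ W ↔ r * x ∈ Ideal.span {a}) (hx : x ∈ W)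
    (hWm : W ≤ m) (hQW : Q ≤ W) (hL : ∀ r, r ∈ L ↔ ∃ s, r - s * x ∈ Ideal.span {a})
    (hQL : Q ≤ L) (hW1 : _root_.ell K A (qq m W) = (1 : ℕ))
    (hWe : _root_.ell K A (qq W L) = e) (j : ℕ) :
    tt P K j kk = (cseq e j).2 := by
  have haW : Ideal.span {a} ≤ W := haQ.trans hQW
  -- the projections
  have hpi : ∀ a ∈ m, ∃ pa : (A ⧸ Ideal.span {a}) →ₗ[A] kk,
      pa ∘ₗ Submodule.mkQ (Ideal.span {a}) = π := by
    intro a ha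
    refine ⟨Submodule.liftQ _ π ?_, Submodule.liftQ_mkQ _ _ _⟩
    rw [Ideal.span_le, Set.singleton_subset_iff]
    exact (hR.ker a).mpr ha
  obtain ⟨pa, hpa⟩ := hpi a ha
  obtain ⟨pb, hpb⟩ := hpi b hb
  have hz : ∀ r ∈ Ideal.span {b}, r • (⟨a, ha⟩ : m) = 0 := by
    intro r hr; ext; exact (hab r).mpr hr
  have hz' : ∀ r ∈ Ideal.span {a}, r • (⟨b, hb⟩ : m) = 0 := by
    intro r hr; ext; exact (hba r).mpr hr
  have hinja := fun j => pair_inj P hR j a b ha hb hab hba la lb hla hlb pa hpa _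
    (mulq_mk (Ideal.span {b}) (⟨a, ha⟩ : m) hz)
  have hinjb := fun j => pair_inj P hR j b a hb ha hba hab lb la hlb hla pb hpb _
    (mulq_mk (Ideal.span {a}) (⟨b, hb⟩ : m) hz')
  -- cyclic modules
  have hA : ∀ j, tt P K (j+1) A = 0 := fun j => ell_zero K (Ho_self_sub P j)
  have h0 : ∀ (a : A) (pa : (A ⧸ Ideal.span {a}) →ₗ[A] kk)
      (_ : pa ∘ₗ Submodule.mkQ (Ideal.span {a}) = π), tt P K 0 (A ⧸ Ideal.span {a}) = 1 := by
    intro a pa hpa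
    apply le_antisymm
    · rw [← hR.tt_self P]; exact (SE_mkQ _).zro P K
    · rw [← hR.tt_kk P]
      refine ell_surj K (hm P 0 pa) ?_
      have h1 := hR.SE.surj0 P
      rw [← hpa, hm_comp, LinearMap.coe_comp] at h1
      exact Function.Surjective.of_comp h1
  have hinjm : ∀ (a : A) (pa : (A ⧸ Ideal.span {a}) →ₗ[A] kk)
      (_ : pa ∘ₗ Submodule.mkQ (Ideal.span {a}) = π) (j : ℕ),
      Function.Injective (hm P j (Submodule.mkQ (Ideal.span {a}))) := by
    intro a pa hpa j
    have h1 := hR.inj_pi P j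
    rw [← hpa, hm_comp, LinearMap.coe_comp] at h1
    exact Function.Injective.of_comp h1
  have hcyc : ∀ j, tt P K j (A ⧸ Ideal.span {a}) = 1 ∧ tt P K j (A ⧸ Ideal.span {b}) = 1 := by
    intro j
    induction j with
    | zero => exact ⟨h0 a pa hpa, h0 b pb hpb⟩
    | succ j ih =>
      constructor
      · apply le_antisymm
        · have := (SE_mul (Ideal.span {b}) a hab).thr P K j
          rwa [hA, zero_add, ih.2] at this
        · rw [← ih.2]
          exact (SE_mul (Ideal.span {b}) a hab).le_of_inj P K j (hinjm a pa hpa j)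
      · apply le_antisymm
        · have := (SE_mul (Ideal.span {a}) b hba).thr P K j
          rwa [hA, zero_add, ih.1] at this
        · rw [← ih.1]
          exact (SE_mul (Ideal.span {a}) b hba).le_of_inj P K j (hinjm b pb hpb j)
  -- `t_j(m) = t_{j+1}(k)`
  have hm1 : ∀ j, tt P K (j+1) kk = tt P K j m := by
    intro j
    apply le_antisymm
    · have := hR.SE.thr P K j
      rwa [hA, zero_add] at this
    · exact hR.SE.le_of_inj P K j (hR.inj_pi P j)
  have hm2 : ∀ j, tt P K (j+1) kk = 1 + tt P K j (qq m (Ideal.span {a})) := by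
    intro j
    rw [hm1, (SE_a a b ha hab hz).add_of_inj P K (fun j => (hinja j).2) j, (hcyc j).2]
  -- semisimple modules
  have s1 : ∀ j, tt P K j (qq Q (Ideal.span {a})) = tt P K j kk := fun j => by
    rw [hR.tt_semi P (qq_smul hmQ) 1 hQ1]; simp
  have s2 : ∀ j, tt P K j (qq m Q) = (e + 2 : ℕ) * tt P K j kk := fun j =>
    hR.tt_semi P (qq_smul hmm) _ hQe j
  have s3 : ∀ j, tt P K j (qq m W) = tt P K j kk := fun j => by
    rw [hR.tt_semi P (qq_smul (fun r hr y hy => hQW (hmm r hr y hy))) 1 hW1]; simp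
  have s4 : ∀ j, tt P K j (qq W L) = e * tt P K j kk := fun j =>
    hR.tt_semi P (qq_smul (fun r hr y hy => hQL (hmm r hr y (hWm hy)))) _ hWe j
  obtain ⟨f1, g1, S1⟩ := SE_top W (Ideal.span {a}) haW
  obtain ⟨f2, g2, S2⟩ := SE_x W (Ideal.span {a}) L x hx hW hL
  obtain ⟨f3, g3, S3⟩ := SE_qq m W (Ideal.span {a}) haW hWm
  obtain ⟨f4, g4, S4⟩ := SE_qq m Q (Ideal.span {a}) haQ hQm
  -- upper bound
  have ub1 : ∀ j, tt P K j (qq W (Ideal.span {a})) ≤ tt P K j (A ⧸ W) + e * tt P K j kk := by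
    intro j; have := S2.mid P K j; rwa [s4] at this
  have ub : ∀ j, tt P K j (A ⧸ W) ≤ (cseq e j).1 ∧ tt P K j kk ≤ (cseq e j).2 := by
    intro j
    induction j with
    | zero =>
      refine ⟨?_, ?_⟩
      · have := S1.zro P K
        rw [(hcyc 0).1] at this
        simpa [cseq] using this
      · rw [hR.tt_kk P]; simp [cseq]
    | succ j ih =>
      have h1 : tt P K j (qq W (Ideal.span {a})) ≤
          ((cseq e j).1 + e * (cseq e j).2 : ℕ) := by
        refine (ub1 j).trans ?_
        push_cast
        gcongr
        · exact ih.1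
        · exact ih.2
      constructor
      · refine (S1.thr P K j).trans ?_
        rw [(hcyc (j+1)).1]
        have : (cseq e (j+1)).1 = 1 + ((cseq e j).1 + e * (cseq e j).2) := by simp [cseq]; ring
        rw [this]
        push_cast at h1 ⊢
        gcongr
      · rw [hm2]
        have : (cseq e (j+1)).2 = 1 + (((cseq e j).1 + e * (cseq e j).2) + (cseq e j).2) := by
          simp [cseq]; ring
        rw [this]
        have h2 := S3.mid P K j
        rw [s3] at h2
        push_cast at h1 ⊢
        gcongr
        refine h2.trans ?_
        gcongr
        exact ih.2
  -- lower bound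
  induction j using Nat.strong_induction_on with
  | _ j ih =>
    apply le_antisymm (ub j).2
    match j, ih with
    | 0, _ => rw [hR.tt_kk P]; simp [cseq]
    | 1, ih =>
      rw [hm2]
      have := S4.zro P K
      rw [s2, hR.tt_kk P] at this
      refine le_trans ?_ (add_le_add le_rfl this)
      simp only [cseq]
      norm_cast
      omega
    | j+2, ih =>
      have h1 := ih j (by omega)
      have h2 := ih (j+1) (by omega)
      have h3 := S4.thr P K j
      rw [s2, s1, h1, h2] at h3
      have h4 := hm2 (j+1)
      have h5 := cseq_rec e j
      have h6 := (ub (j+2)).2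
      change tt P K (j+2) kk = _ at h4
      revert h3 h4 h6
      generalize tt P K (j+2) kk = t
      generalize tt P K (j+1) (qq m (Ideal.span {a})) = s
      intro h3 h6 h4
      cases t with
      | top => simp
      | coe t =>
        cases s with
        | top => simp at h4
        | coe s =>
          norm_cast at h3 h4 ⊢
          omega

end Num

set_option linter.style.haveILetI false
section Alg
open CategoryTheory
universe u
variable {K : Type u} [Field K] {A : Type u} [CommRing A] [Algebra K A]

lemma ell_le_one_gen {M : Type u} [AddCommGroup M] [Module A M] (v : M)
    (hs : ∀ w : M, ∃ c : K, algebraMap K A c • v = w) : _root_.ell K A M ≤ (1 : ℕ) := by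
  letI := km K A M
  have hf := finrank_le_one (R := K) (M := M) v hs
  have : Module.Finite K M := Module.Finite.of_surjective (LinearMap.toSpanSingleton K M v) hs
  unfold _root_.ell
  rw [Module.length_eq_finrank]
  exact_mod_cast hf

lemma ell_le_one {J J' : Ideal A} (φ : A →ₗ[K] K) (h : ∀ r ∈ J, φ r = 0 → r ∈ J') :
    _root_.ell K A (qq J J') ≤ (1 : ℕ) := by
  by_cases h0 : ∀ r ∈ J, φ r = 0
  · have : Subsingleton (qq J J') := by
      refine ⟨fun x y => ?_⟩
      obtain ⟨x, rfl⟩ := Submodule.Quotient.mk_surjective _ x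
      obtain ⟨y, rfl⟩ := Submodule.Quotient.mk_surjective _ y
      rw [Submodule.Quotient.eq]
      exact h _ (x - y).2 (h0 _ (x-y).2)
    rw [ell_zero K this]; simp
  · push Not at h0
    obtain ⟨r0, hr0, hne⟩ := h0
    refine ell_le_one_gen (Submodule.Quotient.mk ⟨r0, hr0⟩) ?_
    intro w
    obtain ⟨y, rfl⟩ := Submodule.Quotient.mk_surjective _ w
    refine ⟨φ y / φ r0, ?_⟩
    rw [← Submodule.Quotient.mk_smul, Submodule.Quotient.eq]
    refine h _ (algebraMap K A (φ y / φ r0) • (⟨r0, hr0⟩ : J) - y).2 ?_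
    change φ (algebraMap K A (φ y / φ r0) * r0 - y) = 0
    rw [← Algebra.smul_def, map_sub, map_smul, smul_eq_mul, div_mul_cancel₀ _ hne, sub_self]

lemma ell_one {J J' : Ideal A} (φ : A →ₗ[K] K) (h : ∀ r ∈ J, φ r = 0 → r ∈ J')
    (h2 : ∃ r ∈ J, r ∉ J') :
    _root_.ell K A (qq J J') = (1 : ℕ) := by
  apply le_antisymm (ell_le_one φ h)
  by_contra hc
  have h3 : _root_.ell K A (qq J J') = 0 := by
    rw [not_le] at hc
    simpa using hc
  letI := km K A (qq J J')
  have h5 := Module.length_eq_zero_iff.mp h3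
  obtain ⟨r, hr, hr2⟩ := h2
  have := Subsingleton.elim (Submodule.Quotient.mk ⟨r, hr⟩ : qq J J') 0
  rw [Submodule.Quotient.mk_eq_zero] at this
  exact hr2 this

lemma ell_zero_le {J J' : Ideal A} (h3 : _root_.ell K A (qq J J') = 0) : J ≤ J' := by
  letI := km K A (qq J J')
  have h5 := Module.length_eq_zero_iff.mp h3
  intro r hr
  have := Subsingleton.elim (Submodule.Quotient.mk ⟨r, hr⟩ : qq J J') 0
  rw [Submodule.Quotient.mk_eq_zero] at this
  exact this

lemma exists_fun (V : Submodule K A) (x : A) (hx : x ∉ V) :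
    ∃ φ : A →ₗ[K] K, φ x = 1 ∧ ∀ y ∈ V, φ y = 0 := by
  obtain ⟨f, hf, hV⟩ := Submodule.exists_le_ker_of_notMem hx
  refine ⟨(f x)⁻¹ • f, by simp [hf], fun y hy => ?_⟩
  have := hV hy
  rw [LinearMap.mem_ker] at this
  simp [this]

structure Gor0 (K : Type u) [Field K] [Algebra K A] (m : Ideal A) (n : ℕ) (s a b : A) : Prop where
  fin : _root_.ell K A A ≠ ⊤
  ne : m ≠ ⊤
  res : ∀ r : A, ∃ c : K, r - algebraMap K A c ∈ m
  m4 : m ^ 4 = ⊥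
  s0 : s ≠ 0
  soc : ∀ r, (∀ x ∈ m, r * x = 0) ↔ ∃ c : K, r = c • s
  hn : 3 ≤ n
  dim : _root_.ell K A (A ⧸ m ^ 2) = (n + 1 : ℕ)
  a0 : a ≠ 0
  am : a ∈ m
  hab : ∀ r, r * a = 0 ↔ r ∈ Ideal.span {b}

namespace Gor0
variable {m : Ideal A} {n : ℕ} {s a b : A}

lemma unit (G : Gor0 K m n s a b) {r : A} (hr : r ∉ m) : IsUnit r := by
  obtain ⟨c, hc⟩ := G.res r
  have hc0 : c ≠ 0 := by rintro rfl; simp at hc; exact hr hc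
  have h1 : IsNilpotent (r - algebraMap K A c) := ⟨4, by
    have := Ideal.pow_mem_pow hc 4
    rwa [G.m4, Ideal.mem_bot] at this⟩
  have h2 : IsUnit (algebraMap K A c) := (IsUnit.mk0 c hc0).map _
  have := h1.isUnit_add_left_of_commute h2 (Commute.all _ _)
  simpa using this

lemma bm (G : Gor0 K m n s a b) : b ∈ m := by
  by_contra h
  have h1 := G.unit h
  rw [← Ideal.span_singleton_eq_top] at h1
  have := (G.hab 1).mpr (by rw [h1]; trivial)
  exact G.a0 (by simpa using this)

lemma s_mem (G : Gor0 K m n s a b) (k : ℕ) : ∀ r, r ≠ 0 → (∀ y ∈ m ^ k, r * y = 0) →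
    ∃ t, r * t = s := by
  induction k with
  | zero => intro r hr h; exact absurd (by simpa using h 1 (by simp)) hr
  | succ k ih =>
    intro r hr h
    by_cases hs : ∀ x ∈ m, r * x = 0
    · obtain ⟨c, rfl⟩ := (G.soc r).mp hs
      have : c ≠ 0 := by rintro rfl; simp at hr
      exact ⟨algebraMap K A c⁻¹, by rw [mul_comm, ← Algebra.smul_def, smul_smul,
        inv_mul_cancel₀ this, one_smul]⟩
    · push Not at hs
      obtain ⟨x, hx, hne⟩ := hs
      obtain ⟨t, ht⟩ := ih (r * x) hne (fun y hy => by
        rw [mul_assoc]; exact h _ (by rw [pow_succ']; exact Ideal.mul_mem_mul hx hy))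
      exact ⟨x * t, by rw [← ht]; ring⟩

lemma s_of (G : Gor0 K m n s a b) {r : A} (hr : r ≠ 0) : ∃ t, r * t = s :=
  G.s_mem 4 r hr (by intro y hy; rw [G.m4, Ideal.mem_bot] at hy; simp [hy])

lemma four (G : Gor0 K m n s a b) {r : A} (hr : r ∈ m ^ 4) : r = 0 := by
  rwa [G.m4, Ideal.mem_bot] at hr

lemma m3soc (G : Gor0 K m n s a b) {r : A} (hr : r ∈ m ^ 3) : ∃ c : K, r = c • s := by
  rw [← G.soc]
  intro x hx
  exact G.four (by rw [show 4 = 3 + 1 from rfl, pow_succ]; exact Ideal.mul_mem_mul hr hx)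

lemma kfun (G : Gor0 K m n s a b) : ∃ ψ : A →ₗ[K] K, ψ s = 1 := by
  obtain ⟨φ, h, _⟩ := exists_fun (K := K) (⊥ : Submodule K A) s (by simpa using G.s0)
  exact ⟨φ, h⟩

lemma ell_m (G : Gor0 K m n s a b) : _root_.ell K A (A ⧸ m) = (1 : ℕ) := by
  have hR : Res K m (Submodule.mkQ m) := ⟨Submodule.mkQ_surjective _, fun r => by
    rw [Submodule.mkQ_apply, Submodule.Quotient.mk_eq_zero], G.ne, G.res⟩
  rw [hR.ell]; rfl

lemma fq (G : Gor0 K m n s a b) (J : Ideal A) : ∃ k : ℕ, _root_.ell K A (A ⧸ J) = k := by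
  have h1 := ell_surj K (Submodule.mkQ J) (Submodule.mkQ_surjective J)
  have : _root_.ell K A (A ⧸ J) ≠ ⊤ := ne_top_of_le_ne_top G.fin h1
  obtain ⟨k, hk⟩ := ENat.ne_top_iff_exists.mp this
  exact ⟨k, hk.symm⟩

lemma fqq (G : Gor0 K m n s a b) (J J' : Ideal A) (h : J' ≤ J) :
    ∃ k : ℕ, _root_.ell K A (qq J J') = k := by
  obtain ⟨f, g, S⟩ := SE_top J J' h
  have h1 := ell_inj K f S.inj
  obtain ⟨k', hk'⟩ := G.fq J'
  have : _root_.ell K A (qq J J') ≠ ⊤ := ne_top_of_le_ne_top (by rw [hk']; simp) h1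
  obtain ⟨k, hk⟩ := ENat.ne_top_iff_exists.mp this
  exact ⟨k, hk.symm⟩

lemma hba (G : Gor0 K m n s a b) (r : A) : r * b = 0 ↔ r ∈ Ideal.span {a} := by
  let J : Ideal A := LinearMap.ker (LinearMap.toSpanSingleton A A b)
  have hJ : ∀ r, r * b = 0 ↔ r ∈ J := fun r => Iff.rfl
  have haJ : Ideal.span {a} ≤ J := by
    rw [Ideal.span_le, Set.singleton_subset_iff]
    change a * b = 0
    rw [mul_comm, G.hab]; exact Ideal.mem_span_singleton_self b
  have S1 := SE_mul J b hJ
  have S2 := SE_mul (Ideal.span {b}) a G.hab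
  obtain ⟨f, g, S3⟩ := SE_top J (Ideal.span {a}) haJ
  have e1 := ell_add K _ _ S1.inj S1.ex S1.surj
  have e2 := ell_add K _ _ S2.inj S2.ex S2.surj
  have e3 := ell_add K _ _ S3.inj S3.ex S3.surj
  obtain ⟨k1, hk1⟩ := G.fq J
  obtain ⟨k2, hk2⟩ := G.fq (Ideal.span {a})
  obtain ⟨k3, hk3⟩ := G.fq (Ideal.span {b})
  obtain ⟨k4, hk4⟩ := G.fqq J (Ideal.span {a}) haJ
  rw [e1, hk1, hk2, hk3] at e2
  rw [hk1, hk2, hk4] at e3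
  have h0 : k4 = 0 := by norm_cast at e2 e3; omega
  rw [h0] at hk4
  rw [hJ]
  exact ⟨fun h => ell_zero_le (by simpa using hk4) h, fun h => haJ h⟩

lemma am2 (G : Gor0 K m n s a b) : ∃ w ∈ m ^ 2, a * w = s := by
  suffices h : ∃ w ∈ m ^ 2, a * w ≠ 0 by
    obtain ⟨w, hw, h⟩ := h
    obtain ⟨t, ht⟩ := G.s_of h
    exact ⟨w * t, Ideal.mul_mem_right _ _ hw, by rw [← ht]; ring⟩
  by_contra hc
  push Not at hc
  have hle : m ^ 2 ≤ Ideal.span {b} := fun w hw => by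
    rw [← G.hab, mul_comm]; exact hc w hw
  have hbm : Ideal.span {b} ≤ m := by
    rw [Ideal.span_le, Set.singleton_subset_iff]; exact G.bm
  obtain ⟨f, g, S⟩ := SE_top (Ideal.span {b}) (m ^ 2) hle
  obtain ⟨f', g', S'⟩ := SE_top m (Ideal.span {b}) hbm
  have e1 := ell_add K _ _ S.inj S.ex S.surj
  have e2 := ell_add K _ _ S'.inj S'.ex S'.surj
  obtain ⟨ψ, hψ⟩ := G.kfun
  have h1 : _root_.ell K A (qq m (Ideal.span {b})) ≤ (1 : ℕ) := by
    refine ell_le_one (ψ ∘ₗ LinearMap.mulRight K a) ?_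
    intro r hr h0
    rw [← G.hab]
    obtain ⟨c, hc⟩ := (G.soc (r * a)).mp (fun x hx => by
      rw [mul_right_comm, mul_comm]
      exact hc _ (by rw [pow_two]; exact Ideal.mul_mem_mul hr hx))
    have : c = 0 := by
      have : ψ (r * a) = 0 := h0
      rw [hc] at this; simpa [hψ] using this
    rw [hc, this, zero_smul]
  have h2 : _root_.ell K A (qq (Ideal.span {b}) (m ^ 2)) ≤ (1 : ℕ) := by
    rw [← G.ell_m]
    refine ell_surj K (mulq m (Submodule.Quotient.mk ⟨b, Ideal.mem_span_singleton_self b⟩) ?_) ?_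
    · intro r hr
      rw [← Submodule.Quotient.mk_smul, Submodule.Quotient.mk_eq_zero]
      change r * b ∈ m ^ 2
      rw [pow_two]; exact Ideal.mul_mem_mul hr G.bm
    · intro y
      obtain ⟨⟨y, hy⟩, rfl⟩ := Submodule.Quotient.mk_surjective _ y
      obtain ⟨r, rfl⟩ := Ideal.mem_span_singleton'.mp hy
      exact ⟨Submodule.Quotient.mk r, by rw [mulq_mk]; rfl⟩
  obtain ⟨k1, hk1⟩ := G.fqq _ _ hbm
  obtain ⟨k2, hk2⟩ := G.fqq _ _ hle
  obtain ⟨k3, hk3⟩ := G.fq (Ideal.span {b})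
  rw [G.dim, hk2, hk3] at e1
  rw [hk1, hk3, G.ell_m] at e2
  rw [hk1] at h1
  rw [hk2] at h2
  have := G.hn
  norm_cast at e1 e2 h1 h2
  omega

lemma symm (G : Gor0 K m n s a b) : Gor0 K m n s b a :=
  { G with 
    a0 := by
      rintro rfl
      obtain ⟨w, hw, h⟩ := G.am2
      have h1 := (G.hba 1).mp (by simp)
      rw [← Ideal.eq_top_iff_one] at h1
      exact G.ne (top_le_iff.mp (by
        rw [← h1, Ideal.span_le, Set.singleton_subset_iff]; exact G.am))
    am := G.bm
    hab := G.hba }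

lemma s3 (G : Gor0 K m n s a b) : s ∈ m ^ 3 := by
  obtain ⟨w, hw, rfl⟩ := G.am2
  rw [show 3 = 1 + 2 from rfl, pow_add, pow_one]
  exact Ideal.mul_mem_mul G.am hw

lemma mul2 (_ : Gor0 K m n s a b) {x y : A} (hx : x ∈ m) (hy : y ∈ m) : x * y ∈ m ^ 2 := by
  rw [pow_two]; exact Ideal.mul_mem_mul hx hy

lemma mul4 (G : Gor0 K m n s a b) {x y : A} (hx : x ∈ m ^ 2) (hy : y ∈ m ^ 2) : x * y = 0 := by
  apply G.four; rw [show 4 = 2 + 2 from rfl, pow_add]; exact Ideal.mul_mem_mul hx hy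

lemma mul4' (G : Gor0 K m n s a b) {x y : A} (hx : x ∈ m) (hy : y ∈ m ^ 3) : x * y = 0 := by
  apply G.four; rw [show 4 = 1 + 3 from rfl, pow_add, pow_one]; exact Ideal.mul_mem_mul hx hy

lemma mul3 (_ : Gor0 K m n s a b) {x y : A} (hx : x ∈ m) (hy : y ∈ m ^ 2) : x * y ∈ m ^ 3 := by
  rw [show 3 = 1 + 2 from rfl, pow_add, pow_one]; exact Ideal.mul_mem_mul hx hy

lemma a_nm2 (G : Gor0 K m n s a b) : a ∉ m ^ 2 := by
  intro h
  obtain ⟨w, hw, h'⟩ := G.am2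
  exact G.s0 (by rw [← h']; exact G.mul4 h hw)

/-- Claim B -/
lemma clB (G : Gor0 K m n s a b) {v : A} (h : ∀ w ∈ m ^ 2, v * w = 0) : v ∈ m ^ 2 := by
  have hv : v ∈ m := by
    by_contra hc
    obtain ⟨u, rfl⟩ := G.unit hc
    have := h s (Ideal.pow_le_pow_right (by norm_num : 2 ≤ 3) G.s3)
    exact G.s0 (by simpa using this)
  obtain ⟨c, hc⟩ := (G.soc (v * a)).mp (fun x hx => by
    rw [mul_assoc]; exact h _ (G.mul2 G.am hx))
  obtain ⟨w, hw, hs⟩ := G.am2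
  have h1 : (v - c • w) * a = 0 := by
    rw [sub_mul, hc, smul_mul_assoc, mul_comm w, hs, sub_self]
  rw [G.hab, Ideal.mem_span_singleton'] at h1
  obtain ⟨r, hr⟩ := h1
  have hcw : c • w ∈ m ^ 2 := by rw [Algebra.smul_def]; exact Ideal.mul_mem_left _ _ hw
  have hrm : r ∈ m := by
    by_contra hn
    obtain ⟨u, rfl⟩ := G.unit hn
    obtain ⟨w', hw', hs'⟩ := G.symm.am2
    have h2 : (↑u : A) * b * w' = 0 := by
      rw [hr, sub_mul, h _ hw', G.mul4 hcw hw', sub_zero]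
    rw [mul_assoc, hs'] at h2
    exact G.s0 (by simpa using h2)
  have : v = c • w + r * b := by rw [hr]; ring
  rw [this]
  exact Ideal.add_mem _ hcw (G.mul2 hrm G.bm)

lemma func (G : Gor0 K m n s a b) {kk : Type u} [AddCommGroup kk] [Module A kk]
    {π : A →ₗ[A] kk} (hR : Res K m π) : ∃ la : m →ₗ[A] kk, la ⟨a, G.am⟩ = π 1 := by
  obtain ⟨φ, h1, h2⟩ := exists_fun (K := K) (Submodule.restrictScalars K (m ^ 2 : Ideal A)) a
    (fun h => G.a_nm2 ((Submodule.restrictScalars_mem K (m ^ 2) a).mp h))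
  refine ⟨{ toFun := fun y => π (algebraMap K A (φ y)), map_add' := ?_, map_smul' := ?_ }, ?_⟩
  · intro x y; simp
  · intro r x
    obtain ⟨c, hc⟩ := G.res r
    have h3 : φ (r * x) = c * φ x := by
      have h4 : r * (x : A) = c • (x : A) + (r - algebraMap K A c) * x := by
        rw [Algebra.smul_def]; ring
      rw [h4, map_add, h2 _ (G.mul2 hc x.2), map_smul, add_zero, smul_eq_mul]
    have h4 : r * algebraMap K A (φ x) = algebraMap K A (c * φ x)
      + (r - algebraMap K A c) * algebraMap K A (φ x) := by rw [map_mul]; ring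
    change π (algebraMap K A (φ (r * x))) = r • π (algebraMap K A (φ x))
    rw [h3, ← map_smul, smul_eq_mul, h4, map_add,
      (hR.ker _).mpr (Ideal.mul_mem_right _ _ hc), add_zero]
  · change π (algebraMap K A (φ a)) = _
    rw [h1, map_one]

end Gor0
end Alg

set_option linter.style.haveILetI false
section Alg2
open CategoryTheory
universe u
variable {K : Type u} [Field K] {A : Type u} [CommRing A] [Algebra K A]
  {m : Ideal A} {n : ℕ} {s a b : A}

lemma two_indep {J J' : Ideal A} (k : ℕ) (h : _root_.ell K A (qq J J') = (k + 2 : ℕ)) :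
    ∃ u ∈ J, ∃ v ∈ J, ∀ c d : K, c • u + d • v ∈ J' → c = 0 ∧ d = 0 := by
  letI i := km K A (qq J J')
  have h' : Module.length K (qq J J') = (k + 2 : ℕ) := h
  have hfin : Module.Finite K (qq J J') := by
    have h1 : Module.length K (qq J J') ≠ ⊤ := by rw [h']; simp
    rw [Module.length_ne_top_iff] at h1
    have := (isFiniteLength_iff_isNoetherian_isArtinian.mp h1).1
    infer_instance
  rw [Module.length_eq_finrank] at h'
  have hr : @Module.finrank K (qq J J') _ _ i = k + 2 := by exact_mod_cast h'
  have := Module.finBasisOfFinrankEq K (qq J J') hr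
  have hl := this.linearIndependent
  obtain ⟨⟨u, hu⟩, hu'⟩ := Submodule.Quotient.mk_surjective _ (this 0)
  obtain ⟨⟨v, hv⟩, hv'⟩ := Submodule.Quotient.mk_surjective _ (this 1)
  refine ⟨u, hu, v, hv, fun c d hcd => ?_⟩
  have h2 : LinearIndependent K ![this 0, this 1] := by
    have := hl.comp ![(0 : Fin (k+2)), 1] (by
      intro x y; fin_cases x <;> fin_cases y <;> simp)
    convert this using 1
    ext x; fin_cases x <;> rfl
  rw [LinearIndependent.pair_iff] at h2
  apply h2
  rw [← hu', ← hv']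
  change algebraMap K A c • (Submodule.Quotient.mk ⟨u, hu⟩ : qq J J') +
    algebraMap K A d • (Submodule.Quotient.mk ⟨v, hv⟩ : qq J J') = 0
  rw [← Submodule.Quotient.mk_smul, ← Submodule.Quotient.mk_smul, ← Submodule.Quotient.mk_add,
    Submodule.Quotient.mk_eq_zero]
  change algebraMap K A c * u + algebraMap K A d * v ∈ J'
  rwa [← Algebra.smul_def, ← Algebra.smul_def]

lemma SE.el {X Y Z : Type u} [AddCommGroup X] [Module A X] [AddCommGroup Y] [Module A Y]
    [AddCommGroup Z] [Module A Z] {f : X →ₗ[A] Y} {g : Y →ₗ[A] Z} (S : SE f g) :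
    _root_.ell K A Y = _root_.ell K A X + _root_.ell K A Z := ell_add K _ _ S.inj S.ex S.surj

theorem Gor0.main [IsAlgClosed K] [CharZero K] {e : ℕ} (G : Gor0 K m (e + 3) s a b)
    {kk : Type u} [AddCommGroup kk] [Module A kk] {π : A →ₗ[A] kk} (hR : Res K m π)
    (P : ProjectiveResolution (ModuleCat.of A kk)) (j : ℕ) : tt P K j kk = (cseq e j).2 := by
  obtain ⟨la, hla⟩ := G.func hR
  obtain ⟨lb, hlb⟩ := G.symm.func hR
  obtain ⟨w, hw, hws⟩ := G.am2
  obtain ⟨w', hw', hws'⟩ := G.symm.am2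
  obtain ⟨ψ, hψ⟩ := G.kfun
  obtain ⟨Q, hQdef⟩ : ∃ Q : Ideal A, Q = m ^ 2 ⊔ Ideal.span {a} := ⟨_, rfl⟩
  have hm2m : m ^ 2 ≤ m := Ideal.pow_le_self (by norm_num)
  have ham : Ideal.span {a} ≤ m := by
    rw [Ideal.span_le, Set.singleton_subset_iff]; exact G.am
  have haQ : Ideal.span {a} ≤ Q := hQdef ▸ le_sup_right
  have h2Q : m ^ 2 ≤ Q := hQdef ▸ le_sup_left
  have hQm : Q ≤ m := hQdef ▸ sup_le hm2m ham
  have hmm : ∀ r ∈ m, ∀ y ∈ m, r * y ∈ Q := fun r hr y hy => h2Q (G.mul2 hr hy)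
  have hQmem : ∀ q, q ∈ Q → ∃ v ∈ m ^ 2, ∃ r, q = v + r * a := by
    intro q hq
    rw [hQdef, Submodule.mem_sup] at hq
    obtain ⟨v, hv, z, hz, rfl⟩ := hq
    obtain ⟨r, rfl⟩ := Ideal.mem_span_singleton'.mp hz
    exact ⟨v, hv, r, rfl⟩
  have hba0 : a * b = 0 := (G.hba a).mpr (Ideal.mem_span_singleton_self a)
  have hQb : ∀ q ∈ Q, ∃ v ∈ m ^ 2, q * b = v * b := by
    intro q hq
    obtain ⟨v, hv, r, rfl⟩ := hQmem q hq
    exact ⟨v, hv, by rw [add_mul, mul_assoc, hba0]; ring⟩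
  have hmQ : ∀ r ∈ m, ∀ y ∈ Q, r * y ∈ Ideal.span {a} := by
    intro r hr y hy
    rw [← G.hba, mul_assoc]
    obtain ⟨v, hv, h⟩ := hQb y hy
    rw [h]
    exact G.mul4' hr (by rw [mul_comm]; exact G.mul3 G.bm hv)
  -- the functional on Q
  have hQψ : ∀ q ∈ Q, ψ (q * b) = 0 → q ∈ Ideal.span {a} := by
    intro q hq h0
    rw [← G.hba]
    obtain ⟨v, hv, h⟩ := hQb q hq
    obtain ⟨c, hc⟩ := G.m3soc (r := q * b) (by rw [h, mul_comm]; exact G.mul3 G.bm hv)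
    rw [hc] at h0 ⊢
    have : c = 0 := by simpa [hψ] using h0
    rw [this, zero_smul]
  have haψ : ∀ q ∈ Ideal.span {a}, ψ (q * b) = 0 := by
    intro q hq; rw [(G.hba q).mpr hq, map_zero]
  have hw'Q : w' ∈ Q ∧ ψ (w' * b) = 1 := ⟨h2Q hw', by rw [mul_comm, hws', hψ]⟩
  have hQ1 : _root_.ell K A (qq Q (Ideal.span {a})) = (1 : ℕ) := by
    refine ell_one (ψ ∘ₗ LinearMap.mulRight K b) hQψ ⟨w', hw'Q.1, fun h => ?_⟩
    have := haψ _ h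
    rw [hw'Q.2] at this
    exact one_ne_zero this
  -- the quotient m/Q
  have hQ2 : _root_.ell K A (qq Q (m ^ 2)) = (1 : ℕ) := by
    obtain ⟨φ, h1, h2⟩ := exists_fun (K := K) (Submodule.restrictScalars K (m ^ 2 : Ideal A)) a
      (fun h => G.a_nm2 ((Submodule.restrictScalars_mem K (m ^ 2) a).mp h))
    refine ell_one φ ?_ ⟨a, haQ (Ideal.mem_span_singleton_self a), G.a_nm2⟩
    intro q hq h0
    obtain ⟨v, hv, r, rfl⟩ := hQmem q hq
    obtain ⟨c, hc⟩ := G.res r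
    have h3 := G.mul2 hc G.am
    have h4 : v + r * a = (v + (r - algebraMap K A c) * a) + c • a := by
      rw [Algebra.smul_def]; ring
    rw [h4] at h0 ⊢
    rw [map_add, h2 _ (Ideal.add_mem _ hv h3), zero_add, map_smul, h1] at h0
    have : c = 0 := by simpa using h0
    rw [this] at h3
    rw [this, zero_smul, add_zero]
    exact Ideal.add_mem _ hv h3
  obtain ⟨_, _, S1⟩ := SE_top m (m ^ 2) hm2m
  obtain ⟨_, _, S2⟩ := SE_qq m Q (m ^ 2) h2Q hQm
  have hQe : _root_.ell K A (qq m Q) = (e + 2 : ℕ) := by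
    have e1 := S1.el (K := K)
    have e2 := S2.el (K := K)
    obtain ⟨k1, hk1⟩ := G.fqq m Q hQm
    rw [e2, hQ2, G.dim, G.ell_m, hk1] at e1
    rw [hk1]
    norm_cast at e1 ⊢
    omega
  -- choice of x
  obtain ⟨x, hxm, hxQ, hxx⟩ : ∃ x ∈ m, x ∉ Q ∧ x * x ∈ Ideal.span {a} := by
    obtain ⟨u, hu, v, hv, huv⟩ := two_indep e hQe
    by_cases hvv : ψ (v * v * b) = 0
    · refine ⟨v, hv, fun h => ?_, hQψ _ (hmm v hv v hv) hvv⟩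
      have := huv 0 1 (by simpa using h)
      exact one_ne_zero this.2
    · obtain ⟨d, hd⟩ := IsAlgClosed.exists_eq_mul_self
        (discrim (ψ (v * v * b)) (2 * ψ (u * v * b)) (ψ (u * u * b)))
      obtain ⟨t, ht⟩ := exists_quadratic_eq_zero hvv ⟨d, hd⟩
      have hxm : u + t • v ∈ m := by
        rw [Algebra.smul_def]; exact Ideal.add_mem _ hu (Ideal.mul_mem_left _ _ hv)
      refine ⟨u + t • v, hxm, fun h => ?_, hQψ _ (hmm _ hxm _ hxm) ?_⟩
      · have := huv 1 t (by simpa using h)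
        exact one_ne_zero this.1
      · have : (u + t • v) * (u + t • v) * b = (t * t) • (v * v * b) + (2 * t) • (u * v * b)
          + u * u * b := by
          simp only [Algebra.smul_def, map_mul, map_ofNat]; ring
        rw [this, map_add, map_add, map_smul, map_smul, smul_eq_mul, smul_eq_mul, ← ht]
        ring
  obtain ⟨W, hW⟩ : ∃ W : Ideal A, ∀ r, r ∈ W ↔ r * x ∈ Ideal.span {a} :=
    ⟨Submodule.comap (LinearMap.toSpanSingleton A A x) (Ideal.span {a}), fun r => Iff.rfl⟩
  obtain ⟨L, hL⟩ : ∃ L : Ideal A, ∀ r, r ∈ L ↔ ∃ s, r - s * x ∈ Ideal.span {a} := by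
    refine ⟨Ideal.span {x} ⊔ Ideal.span {a}, fun r => ?_⟩
    rw [Submodule.mem_sup]
    constructor
    · rintro ⟨y, hy, z, hz, rfl⟩
      obtain ⟨s, rfl⟩ := Ideal.mem_span_singleton'.mp hy
      exact ⟨s, by simpa using hz⟩
    · rintro ⟨s, hs⟩
      exact ⟨s * x, Ideal.mem_span_singleton'.mpr ⟨s, rfl⟩, _, hs, by ring⟩
  have hWm : W ≤ m := by
    intro r hr
    by_contra hc
    obtain ⟨u, rfl⟩ := G.unit hc
    have h1 := Ideal.mul_mem_left _ (↑u⁻¹ : A) ((hW _).mp hr)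
    rw [← mul_assoc, Units.inv_mul, one_mul] at h1
    exact hxQ (haQ h1)
  have hQW : Q ≤ W := fun q hq => by
    rw [hW, mul_comm]; exact hmQ x hxm q hq
  have hxW : x ∈ W := (hW x).mpr hxx
  have haW := haQ.trans hQW
  obtain ⟨y, hym, hy⟩ : ∃ y ∈ m, y * x ∉ Ideal.span {a} := by
    by_contra hc
    push Not at hc
    obtain ⟨c, hc⟩ := (G.soc (x * b)).mp (fun y hy => by
      have := (G.hba _).mpr (hc y hy)
      rw [← this]; ring)
    have h1 : (x - c • w') * b = 0 := by
      rw [sub_mul, hc, smul_mul_assoc, mul_comm w', hws', sub_self]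
    rw [G.hba] at h1
    apply hxQ
    have h2 : x = (x - c • w') + c • w' := by ring
    rw [h2]
    refine Ideal.add_mem _ (haQ h1) ?_
    rw [Algebra.smul_def]
    exact Ideal.mul_mem_left _ _ hw'Q.1
  have hyx : ψ (y * x * b) ≠ 0 := fun h => hy (hQψ _ (hmm y hym x hxm) h)
  have hQL : Q ≤ L := by
    intro q hq
    rw [hL]
    refine ⟨algebraMap K A (ψ (q * b) / ψ (y * x * b)) * y, hQψ _ ?_ ?_⟩
    · rw [mul_assoc]
      exact Ideal.sub_mem _ hq (Ideal.mul_mem_left _ _ (hmm y hym x hxm))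
    · rw [mul_assoc, ← Algebra.smul_def, sub_mul, map_sub, smul_mul_assoc, map_smul, smul_eq_mul,
        div_mul_cancel₀ _ hyx, sub_self]
  have hW1 : _root_.ell K A (qq m W) = (1 : ℕ) := by
    refine ell_one (ψ ∘ₗ LinearMap.mulRight K (x * b)) ?_ ⟨y, hym, fun h => hy ((hW y).mp h)⟩
    intro r hr h0
    rw [hW]
    refine hQψ _ (hmm r hr x hxm) ?_
    rw [mul_assoc]; exact h0
  have hWe : _root_.ell K A (qq W L) = e := by
    obtain ⟨_, _, T1⟩ := SE_x W (Ideal.span {a}) L x hxW hW hL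
    obtain ⟨_, _, T2⟩ := SE_top m W hWm
    obtain ⟨_, _, T3⟩ := SE_qq m W (Ideal.span {a}) haW hWm
    obtain ⟨_, _, T4⟩ := SE_qq m Q (Ideal.span {a}) haQ hQm
    have e1 := T1.el (K := K)
    have e2 := T2.el (K := K)
    have e3 := T3.el (K := K)
    have e4 := T4.el (K := K)
    have hLW : L ≤ W := by
      intro r hr
      obtain ⟨s, hs⟩ := (hL r).mp hr
      have : r = (r - s * x) + s * x := by ring
      rw [this]
      exact Ideal.add_mem _ (haW hs) (Ideal.mul_mem_left _ _ hxW)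
    obtain ⟨k1, hk1⟩ := G.fqq W L hLW
    rw [hW1, G.ell_m] at e2
    rw [e4, e1, hQ1, hQe, hW1, e2, hk1] at e3
    rw [hk1]
    norm_cast at e3 ⊢
    omega
  exact numeric P hR e a b G.am G.bm G.hab G.hba la lb hla hlb Q haQ hQm hmm hmQ hQ1 hQe x W L
    hW hxW hWm hQW hL hQL hW1 hWe j

end Alg2

section Grad
variable {K : Type*} [Field K] {n : ℕ}

lemma degM_add (α β : Fin n →₀ ℕ) : degM (α + β) = degM α + degM β := by
  simp [degM, Finset.sum_add_distrib]

lemma degM_single (i : Fin n) : degM (Finsupp.single i 1) = 1 := by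
  simp [degM, Finsupp.single_apply]

lemma degM_eq_zero (α : Fin n →₀ ℕ) : degM α = 0 ↔ α = 0 := by
  simp [degM, Finsupp.ext_iff]

/-- homogeneous components -/
noncomputable def hc (d : ℕ) (f : MvPowerSeries (Fin n) K) : MvPowerSeries (Fin n) K :=
  fun α => if degM α = d then MvPowerSeries.coeff α f else 0

lemma coeff_hc (d : ℕ) (f : MvPowerSeries (Fin n) K) (α) : MvPowerSeries.coeff α (hc d f) =
    if degM α = d then MvPowerSeries.coeff α f else 0 := rfl

lemma hc_add (d : ℕ) (f g : MvPowerSeries (Fin n) K) : hc d (f + g) = hc d f + hc d g := by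
  ext α; simp only [coeff_hc, map_add]; split_ifs <;> simp

lemma hc_sub (d : ℕ) (f g : MvPowerSeries (Fin n) K) : hc d (f - g) = hc d f - hc d g := by
  ext α; simp only [coeff_hc, map_sub]; split_ifs <;> simp

lemma hc_zero (d : ℕ) : hc d (0 : MvPowerSeries (Fin n) K) = 0 := by
  ext α; simp [coeff_hc]

lemma hc_hc (d e : ℕ) (f : MvPowerSeries (Fin n) K) :
    hc d (hc e f) = if d = e then hc d f else 0 := by
  ext α
  by_cases h : d = e
  · subst h; simp only [coeff_hc, if_true]; split_ifs <;> rfl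
  · rw [if_neg h, coeff_hc, coeff_hc]
    split_ifs with h1 h2
    · exact absurd (h1.symm.trans h2) h
    · simp
    · simp

lemma hc_mul (d : ℕ) (f g : MvPowerSeries (Fin n) K) :
    hc d (f * g) = ∑ p ∈ Finset.HasAntidiagonal.antidiagonal d, hc p.1 f * hc p.2 g := by
  classical
  ext α
  rw [map_sum]
  simp only [coeff_hc, MvPowerSeries.coeff_mul]
  rw [Finset.sum_comm]
  have key : ∀ β ∈ Finset.HasAntidiagonal.antidiagonal α,
      (∑ p ∈ Finset.HasAntidiagonal.antidiagonal d,
        (if degM β.1 = p.1 then MvPowerSeries.coeff β.1 f else 0) *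
        (if degM β.2 = p.2 then MvPowerSeries.coeff β.2 g else 0)) =
      if degM α = d then MvPowerSeries.coeff β.1 f * MvPowerSeries.coeff β.2 g else 0 := by
    intro β hβ
    have hβ' := Finset.HasAntidiagonal.mem_antidiagonal.mp hβ
    have hd : degM β.1 + degM β.2 = degM α := by rw [← degM_add, hβ']
    by_cases h : degM α = d
    · rw [if_pos h, Finset.sum_eq_single (degM β.1, degM β.2)]
      · simp only [if_true]
      · rintro ⟨i, j⟩ _ hne
        by_cases h1 : degM β.1 = i
        · by_cases h2 : degM β.2 = j
          · exact absurd (by rw [h1, h2]) hne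
          · simp [h2]
        · simp [h1]
      · intro h'
        rw [Finset.HasAntidiagonal.mem_antidiagonal] at h'
        exact absurd (hd.trans h) h'
    · rw [if_neg h]
      refine Finset.sum_eq_zero ?_
      rintro ⟨i, j⟩ hij
      have hij' := Finset.HasAntidiagonal.mem_antidiagonal.mp hij
      simp only at hij'
      by_cases h1 : degM β.1 = i
      · by_cases h2 : degM β.2 = j
        · omega
        · simp [h2]
      · simp [h1]
  rw [Finset.sum_congr rfl key]
  split_ifs
  · rfl
  · simp

def V (d : ℕ) (f : MvPowerSeries (Fin n) K) : Prop :=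
  ∀ α : Fin n →₀ ℕ, degM α < d → MvPowerSeries.coeff α f = 0

lemma V_mul {d e : ℕ} {f g : MvPowerSeries (Fin n) K} (hf : V d f) (hg : V e g) :
    V (d + e) (f * g) := by
  classical
  intro α hα
  rw [MvPowerSeries.coeff_mul]
  apply Finset.sum_eq_zero
  intro p hp
  rw [Finset.HasAntidiagonal.mem_antidiagonal] at hp
  rw [← hp, degM_add] at hα
  by_cases h : degM p.1 < d
  · rw [hf _ h, zero_mul]
  · rw [hg _ (by omega), mul_zero]

lemma mem_M (f : MvPowerSeries (Fin n) K) : f ∈ mxR K n ↔ V 1 f := by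
  rw [mxR, RingHom.mem_ker, ← MvPowerSeries.coeff_zero_eq_constantCoeff_apply]
  constructor
  · intro h α hα
    rw [(degM_eq_zero α).mp (by omega)]; exact h
  · intro h
    exact h 0 (by rw [(degM_eq_zero _).mpr rfl]; norm_num)

lemma X_mem (i : Fin n) : (MvPowerSeries.X i : MvPowerSeries (Fin n) K) ∈ mxR K n := by
  rw [mxR, RingHom.mem_ker]; simp

lemma V_split {d : ℕ} {f : MvPowerSeries (Fin n) K} (hf : V (d + 1) f) :
    ∃ g : Fin n → MvPowerSeries (Fin n) K, (∀ i, V d (g i)) ∧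
      f = ∑ i, MvPowerSeries.X i * g i := by
  classical
  have : ∀ α : Fin n →₀ ℕ, α ≠ 0 → ∃ i, α i ≠ 0 := fun α h => by
    by_contra hc; push Not at hc; exact h (Finsupp.ext hc)
  choose ι hι using this
  have hne : ∀ (β : Fin n →₀ ℕ) (i : Fin n), β + Finsupp.single i 1 ≠ 0 := fun β i h => by
    have := congrArg (fun x => x i) h
    simp at this
  obtain ⟨g, hg⟩ : ∃ g : Fin n → MvPowerSeries (Fin n) K, ∀ i β, MvPowerSeries.coeff β (g i) =
      if ι (β + Finsupp.single i 1) (hne β i) = i then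
        MvPowerSeries.coeff (β + Finsupp.single i 1) f else 0 :=
    ⟨fun i β => if ι (β + Finsupp.single i 1) (hne β i) = i then
        MvPowerSeries.coeff (β + Finsupp.single i 1) f else 0, fun i β => rfl⟩
  refine ⟨g, ?_, ?_⟩
  · intro i α hα
    rw [hg]
    split_ifs
    · exact hf _ (by rw [degM_add, degM_single]; omega)
    · rfl
  · ext α
    rw [map_sum]
    by_cases hα : α = 0
    · subst hα
      rw [hf 0 (by rw [(degM_eq_zero _).mpr rfl]; omega), Finset.sum_eq_zero]
      intro i _
      rw [MvPowerSeries.coeff_zero_X_mul]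
    · rw [Finset.sum_eq_single (ι α hα)]
      · have h1 : Finsupp.single (ι α hα) 1 ≤ α := by
          rw [Finsupp.single_le_iff]; have := hι α hα; omega
        obtain ⟨β, hβ⟩ := exists_add_of_le h1
        have h2 : ∀ β' i (h : β' + Finsupp.single i 1 = α), ι α hα = i → MvPowerSeries.coeff α f =
          (if ι (β' + Finsupp.single i 1) (hne β' i) = i then
            MvPowerSeries.coeff (β' + Finsupp.single i 1) f else 0) := by
          intro β' i h hi
          subst h
          rw [if_pos hi]
        conv_rhs => rw [MvPowerSeries.X, MvPowerSeries.coeff_monomial_mul, if_pos h1, one_mul, hg]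
        exact h2 _ _ (tsub_add_cancel_of_le h1) rfl
      · intro i _ hi
        rw [MvPowerSeries.X, MvPowerSeries.coeff_monomial_mul]
        split_ifs with h1
        · rw [one_mul, hg]
          have h2 : ∀ β' (h : β' + Finsupp.single i 1 = α), 
            (if ι (β' + Finsupp.single i 1) (hne β' i) = i then
            MvPowerSeries.coeff (β' + Finsupp.single i 1) f else 0) = 0 := by
            intro β' h
            subst h
            rw [if_neg (fun h => hi h.symm)]
          exact h2 _ (tsub_add_cancel_of_le h1)
        · rfl
      · simp

lemma mem_Mpow (d : ℕ) (f : MvPowerSeries (Fin n) K) : f ∈ mxR K n ^ d ↔ V d f := by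
  induction d generalizing f with
  | zero => simp [V]
  | succ d ih =>
    constructor
    · rw [pow_succ]
      intro h
      refine Submodule.mul_induction_on h ?_ ?_
      · intro p hp q hq
        exact V_mul ((ih p).mp hp) ((mem_M q).mp hq)
      · intro p q hp hq α hα
        rw [map_add, hp α hα, hq α hα, add_zero]
    · intro h
      obtain ⟨g, hg, rfl⟩ := V_split h
      refine Ideal.sum_mem _ fun i _ => ?_
      rw [pow_succ']
      exact Ideal.mul_mem_mul (X_mem i) ((ih _).mpr (hg i))

lemma hc_mem (d : ℕ) (f : MvPowerSeries (Fin n) K) : hc d f ∈ mxR K n ^ d := by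
  rw [mem_Mpow]; intro α hα; rw [coeff_hc, if_neg (by omega)]

lemma sub_hc_mem {d : ℕ} {f : MvPowerSeries (Fin n) K} (hf : f ∈ mxR K n ^ d) :
    f - hc d f ∈ mxR K n ^ (d + 1) := by
  rw [mem_Mpow] at hf ⊢
  intro α hα
  rw [map_sub, coeff_hc]
  split_ifs with h
  · simp
  · rw [hf α (by omega), sub_zero]

lemma hc_of_mem {d e : ℕ} (h : d < e) {f : MvPowerSeries (Fin n) K} (hf : f ∈ mxR K n ^ e) :
    hc d f = 0 := by
  rw [mem_Mpow] at hf
  ext α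
  rw [coeff_hc]
  split_ifs with h1
  · rw [hf α (by omega)]; simp
  · simp

lemma hc_mul_hom {d e : ℕ} (f g : MvPowerSeries (Fin n) K) (hg : hc e g = g) :
    hc (d + e) (f * g) = hc d f * g := by
  rw [hc_mul, Finset.sum_eq_single (d, e)]
  · rw [hg]
  · rintro ⟨i, j⟩ hp hne
    have : j ≠ e := by
      rintro rfl
      rw [Finset.HasAntidiagonal.mem_antidiagonal] at hp
      simp at hp
      exact hne (by rw [hp])
    simp only
    rw [← hg, hc_hc, if_neg this, mul_zero]
  · intro h; simp at h

lemma hc_mul_lt {d e : ℕ} (h : d < e) (f g : MvPowerSeries (Fin n) K) (hg : hc e g = g) :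
    hc d (f * g) = 0 := by
  refine hc_of_mem h ?_
  rw [← hg]; exact Ideal.mul_mem_left _ _ (hc_mem e g)

lemma trunc4 (f : MvPowerSeries (Fin n) K) :
    f - (hc 0 f + hc 1 f + hc 2 f + hc 3 f) ∈ mxR K n ^ 4 := by
  rw [mem_Mpow]
  intro α hα
  simp only [map_sub, map_add, coeff_hc]
  have : degM α = 0 ∨ degM α = 1 ∨ degM α = 2 ∨ degM α = 3 := by omega
  rcases this with h | h | h | h <;> simp [h]

lemma Mpow_span (d : ℕ) : mxR K n ^ d ≤ Ideal.span {g | hc d g = g} := by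
  induction d with
  | zero =>
    rw [pow_zero, Ideal.one_eq_top]
    refine le_of_eq (Eq.symm ?_)
    rw [Ideal.eq_top_iff_one]
    refine Ideal.subset_span ?_
    change hc 0 1 = 1
    classical
    ext α
    rw [coeff_hc]
    split_ifs with h
    · rfl
    · rw [MvPowerSeries.coeff_one, if_neg]
      rintro rfl
      exact h ((degM_eq_zero _).mpr rfl)
  | succ d ih =>
    rw [pow_succ]
    have h1 : mxR K n ≤ Ideal.span {g | hc 1 g = g} := by
      intro f hf
      obtain ⟨g, _, rfl⟩ := V_split (d := 0) ((mem_M f).mp hf)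
      refine Ideal.sum_mem _ fun i _ => Ideal.mul_mem_right _ _ (Ideal.subset_span ?_)
      change hc 1 _ = _
      classical
      ext α
      rw [coeff_hc]
      split_ifs with h
      · rfl
      · rw [MvPowerSeries.coeff_X, if_neg]
        rintro rfl
        exact h (degM_single i)
    refine (Ideal.mul_mono ih h1).trans ?_
    rw [Ideal.span_mul_span']
    refine Ideal.span_mono ?_
    rintro _ ⟨f, hf, g, hg, rfl⟩
    change hc (d + 1) (f * g) = f * g
    rw [hc_mul_hom f g hg, show hc d f = f from hf]

lemma hc_mem_initial {I : Ideal (MvPowerSeries (Fin n) K)} {d : ℕ} {f : MvPowerSeries (Fin n) K}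
    (h : hc d f ∈ I ⊔ mxR K n ^ (d + 1)) : hc d f ∈ initialIdeal I := by
  obtain ⟨p, hp, q, hq, hpq⟩ := Submodule.mem_sup.mp h
  refine Ideal.subset_span ⟨p, hp, d, ?_, ?_⟩
  · have : p ∈ mxR K n ^ d := by
      have : p = hc d f - q := by rw [← hpq]; ring
      rw [this]
      exact Ideal.sub_mem _ (hc_mem d f) (Ideal.pow_le_pow_right (Nat.le_succ d) hq)
    exact (mem_Mpow d p).mp this
  · have h1 : hc d p = hc d f := by
      have := congrArg (hc d) hpq
      rw [hc_add, hc_of_mem (Nat.lt_succ_self d) hq, add_zero, hc_hc, if_pos rfl] at this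
      exact this
    intro α
    rw [← coeff_hc, h1]

lemma M4_initial {I : Ideal (MvPowerSeries (Fin n) K)} (h : mxR K n ^ 4 ≤ I) :
    mxR K n ^ 4 ≤ initialIdeal I := by
  refine (Mpow_span 4).trans ?_
  rw [Ideal.span_le]
  intro g hg
  have hg : hc 4 g = g := hg
  rw [SetLike.mem_coe, ← hg]
  refine hc_mem_initial (Ideal.mem_sup_left (h (hc_mem 4 g)))

lemma hc_of_initial {I : Ideal (MvPowerSeries (Fin n) K)} {f : MvPowerSeries (Fin n) K}
    (hf : f ∈ initialIdeal I) (d : ℕ) : hc d f ∈ I ⊔ mxR K n ^ (d + 1) := by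
  revert d
  refine Submodule.span_induction ?_ ?_ ?_ ?_ hf
  · rintro g ⟨p, hp, e, h1, h2⟩ d
    have hg : g = hc e p := by ext α; rw [h2, coeff_hc]
    rw [hg, hc_hc]
    split_ifs with h
    · subst h
      have h3 := sub_hc_mem ((mem_Mpow d p).mpr h1)
      have h4 : hc d p = p - (p - hc d p) := by ring
      rw [h4]
      exact Ideal.sub_mem _ (Ideal.mem_sup_left hp) (Ideal.mem_sup_right h3)
    · exact Ideal.zero_mem _
  · intro d; rw [hc_zero]; exact Ideal.zero_mem _
  · intro x y _ _ hx hy d; rw [hc_add]; exact Ideal.add_mem _ (hx d) (hy d)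
  · intro r x _ hx d
    rw [smul_eq_mul, hc_mul]
    refine Ideal.sum_mem _ fun p hp => ?_
    rw [Finset.HasAntidiagonal.mem_antidiagonal] at hp
    obtain ⟨u, hu, v, hv, huv⟩ := Submodule.mem_sup.mp (hx p.2)
    rw [← huv, mul_add]
    refine Ideal.add_mem _ (Ideal.mem_sup_left (Ideal.mul_mem_left _ _ hu))
      (Ideal.mem_sup_right ?_)
    rw [← hp, add_assoc, pow_add]
    exact Ideal.mul_mem_mul (hc_mem _ _) hv

lemma mem_initial {I : Ideal (MvPowerSeries (Fin n) K)} (h : mxR K n ^ 4 ≤ I)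
    {f : MvPowerSeries (Fin n) K} (h0 : hc 0 f ∈ I ⊔ mxR K n ^ 1) (h1 : hc 1 f ∈ I ⊔ mxR K n ^ 2)
    (h2 : hc 2 f ∈ I ⊔ mxR K n ^ 3) (h3 : hc 3 f ∈ I ⊔ mxR K n ^ 4) : f ∈ initialIdeal I := by
  have h4 := M4_initial h (trunc4 f)
  have h5 : f = (f - (hc 0 f + hc 1 f + hc 2 f + hc 3 f)) + 
    (hc 0 f + hc 1 f + hc 2 f + hc 3 f) := by ring
  rw [h5]
  exact Ideal.add_mem _ h4 (Ideal.add_mem _ (Ideal.add_mem _ (Ideal.add_mem _ (hc_mem_initial h0)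
    (hc_mem_initial h1)) (hc_mem_initial h2)) (hc_mem_initial h3))

end Grad

set_option linter.style.haveILetI false
section HypS
open CategoryTheory
universe u
variable {K : Type u} [Field K] {n : ℕ}

structure Hyp (I : Ideal (MvPowerSeries (Fin n) K)) (s a b : MvPowerSeries (Fin n) K) : Prop where
  IM : I ≤ mxR K n
  M4 : mxR K n ^ 4 ≤ I
  s0 : s ∉ I
  soc : ∀ r, (∀ x ∈ mxR K n, r * x ∈ I) ↔ ∃ c : K, r - c • s ∈ I
  hn : 3 ≤ n
  dim : Module.finrank K (MvPowerSeries (Fin n) K ⧸ (I ⊔ mxR K n ^ 2)) = n + 1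
  a0 : a ∉ I
  am : a ∈ mxR K n
  hab : ∀ r, r * a ∈ I ↔ ∃ t, r - t * b ∈ I

lemma finT : {α : Fin n →₀ ℕ | degM α < 4}.Finite := by
  refine (Set.finite_Iic (Finsupp.equivFunOnFinite.symm (fun _ : Fin n => 4))).subset ?_
  intro α hα i
  have : degM α < 4 := hα
  have h2 : α i ≤ degM α := Finset.single_le_sum (f := fun i => α i) (fun _ _ => Nat.zero_le _) (Finset.mem_univ i)
  simp
  omega

lemma finQ {I : Ideal (MvPowerSeries (Fin n) K)} (h : mxR K n ^ 4 ≤ I) :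
    Module.Finite K (MvPowerSeries (Fin n) K ⧸ I) := by
  have := (finT (n := n)).to_subtype
  let φ : MvPowerSeries (Fin n) K →ₗ[K] ({α : Fin n →₀ ℕ | degM α < 4} → K) :=
    LinearMap.pi fun α => MvPowerSeries.coeff α.1
  have h1 : LinearMap.ker φ ≤ LinearMap.ker (Ideal.Quotient.mkₐ K I).toLinearMap := by
    intro f hf
    rw [LinearMap.mem_ker] at hf ⊢
    change Ideal.Quotient.mk I f = 0
    rw [Ideal.Quotient.eq_zero_iff_mem]
    refine h ((mem_Mpow 4 f).mpr fun α hα => ?_)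
    exact congrFun hf ⟨α, hα⟩
  have h2 : Module.Finite K (MvPowerSeries (Fin n) K ⧸ LinearMap.ker φ) :=
    Module.Finite.equiv φ.quotKerEquivRange.symm
  refine Module.Finite.of_surjective ((LinearMap.ker φ).liftQ _ h1) ?_
  intro x
  obtain ⟨r, rfl⟩ := Ideal.Quotient.mk_surjective x
  exact ⟨Submodule.Quotient.mk r, rfl⟩

lemma M_res (r : MvPowerSeries (Fin n) K) : ∃ c : K, r - algebraMap K _ c ∈ mxR K n := by
  refine ⟨MvPowerSeries.constantCoeff r, ?_⟩
  rw [mxR, RingHom.mem_ker, map_sub]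
  simp [MvPowerSeries.algebraMap_apply]

lemma M_ne : mxR K n ≠ ⊤ := by
  rw [Ideal.ne_top_iff_one, mxR, RingHom.mem_ker]; simp

lemma mem_map_pow {I : Ideal (MvPowerSeries (Fin n) K)} (k : ℕ) (r : MvPowerSeries (Fin n) K) :
    Ideal.Quotient.mk I r ∈ ((mxR K n).map (Ideal.Quotient.mk I)) ^ k ↔ r ∈ I ⊔ mxR K n ^ k := by
  rw [← Ideal.map_pow, Ideal.mem_quotient_iff_mem_sup, sup_comm]

lemma ell_finrank (A : Type u) [CommRing A] [Algebra K A] (X : Type u) [AddCommGroup X] [Module A X]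
    (k : ℕ) (h : ell K A X = k) : letI := km K A X; Module.finrank K X = k := by
  letI := km K A X
  have h' : Module.length K X = k := h
  have h1 : Module.length K X ≠ ⊤ := by rw [h']; exact ENat.natCast_ne_top k
  have h2 : IsFiniteLength K X := Module.length_ne_top_iff.mp h1
  have h3 : IsNoetherian K X := (isFiniteLength_iff_isNoetherian_isArtinian.mp h2).1
  have h4 := Module.length_eq_finrank K X
  rw [h4] at h'
  exact_mod_cast h'

lemma ell_eq_length (A : Type u) [CommRing A] [Algebra K A] (X : Type u) [AddCommGroup X] [Module A X]
    [i : Module K X] [IsScalarTower K A X] : ell K A X = Module.length K X := by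
  have h : km K A X = i := Module.ext' _ _ fun c x => by
    change algebraMap K A c • x = c • x
    rw [algebraMap_smul]
  rw [← h]
  rfl

lemma Hyp.gor {I : Ideal (MvPowerSeries (Fin n) K)} {s a b : MvPowerSeries (Fin n) K}
    (H : Hyp I s a b) : Gor0 K ((mxR K n).map (Ideal.Quotient.mk I)) n (Ideal.Quotient.mk I s)
      (Ideal.Quotient.mk I a) (Ideal.Quotient.mk I b) := by
  have hfin := finQ H.M4
  have hm : ∀ r, Ideal.Quotient.mk I r ∈ (mxR K n).map (Ideal.Quotient.mk I) ↔ r ∈ mxR K n := by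
    intro r
    rw [Ideal.mem_quotient_iff_mem_sup, sup_eq_left.mpr H.IM]
  have hz : ∀ r, Ideal.Quotient.mk I r = 0 ↔ r ∈ I := fun r => Ideal.Quotient.eq_zero_iff_mem
  refine ⟨?_, ?_, ?_, ?_, ?_, ?_, H.hn, ?_, ?_, ?_, ?_⟩
  · rw [ell_eq_length, Module.length_eq_finrank]
    exact ENat.natCast_ne_top _
  · rw [Ideal.ne_top_iff_one, ← map_one (Ideal.Quotient.mk I), hm, ← Ideal.ne_top_iff_one]
    exact M_ne
  · intro r
    obtain ⟨r, rfl⟩ := Ideal.Quotient.mk_surjective r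
    obtain ⟨c, hc⟩ := M_res r
    exact ⟨c, (hm _).mpr hc⟩
  · rw [eq_bot_iff]
    intro r hr
    obtain ⟨r, rfl⟩ := Ideal.Quotient.mk_surjective r
    rw [mem_map_pow, sup_eq_left.mpr H.M4] at hr
    exact (hz r).mpr hr
  · rw [Ne, hz]; exact H.s0
  · intro r
    obtain ⟨r, rfl⟩ := Ideal.Quotient.mk_surjective r
    have h1 := H.soc r
    constructor
    · intro h
      obtain ⟨c, hc⟩ := h1.mp (fun x hx => by
        rw [← hz, map_mul]; exact h _ ((hm x).mpr hx))
      exact ⟨c, sub_eq_zero.mp ((hz _).mpr hc)⟩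
    · rintro ⟨c, hc⟩ x hx
      obtain ⟨x, rfl⟩ := Ideal.Quotient.mk_surjective x
      rw [← map_mul, hz]
      refine h1.mpr ⟨c, ?_⟩ x ((hm x).mp hx)
      rw [← hz]
      exact sub_eq_zero.mpr hc
  · have e1 := (DoubleQuot.quotQuotEquivQuotSupₐ K I (mxR K n ^ 2)).toLinearEquiv
    have e2 := e1.finrank_eq
    rw [H.dim] at e2
    have h3 : ((mxR K n).map (Ideal.Quotient.mk I)) ^ 2 = (mxR K n ^ 2).map (Ideal.Quotient.mkₐ K I) :=
      (Ideal.map_pow _ _ _).symm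
    rw [ell_eq_length, Module.length_eq_finrank, h3]
    exact congrArg _ e2
  · rw [Ne, hz]; exact H.a0
  · exact (hm _).mpr H.am
  · intro r
    obtain ⟨r, rfl⟩ := Ideal.Quotient.mk_surjective r
    rw [← map_mul, hz, H.hab, Ideal.mem_span_singleton']
    constructor
    · rintro ⟨t, ht⟩
      refine ⟨Ideal.Quotient.mk I t, ?_⟩
      rw [← hz, map_sub, map_mul, sub_eq_zero] at ht
      exact ht.symm
    · rintro ⟨t, ht⟩
      obtain ⟨t, rfl⟩ := Ideal.Quotient.mk_surjective t
      refine ⟨t, ?_⟩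
      rw [← hz, map_sub, map_mul, sub_eq_zero]
      exact ht.symm

theorem Hyp.betti [IsAlgClosed K] [CharZero K] {I : Ideal (MvPowerSeries (Fin n) K)}
    {s a b : MvPowerSeries (Fin n) K}
    (H : Hyp I s a b) (j : ℕ) : bettiQ I j = (cseq (n - 3) j).2 := by
  obtain ⟨e, rfl⟩ : ∃ e, n = e + 3 := ⟨n - 3, by have := H.hn; omega⟩
  have G := H.gor
  rw [Nat.add_sub_cancel]
  unfold bettiQ
  letI alg : Algebra (MvPowerSeries (Fin (e+3)) K ⧸ I)
      (MvPowerSeries (Fin (e+3)) K ⧸ (I ⊔ mxR K (e+3))) :=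
    (Ideal.Quotient.factor (S := I) (T := I ⊔ mxR K (e+3)) le_sup_left).toAlgebra
  let π : (MvPowerSeries (Fin (e+3)) K ⧸ I) →ₗ[(MvPowerSeries (Fin (e+3)) K ⧸ I)]
      (MvPowerSeries (Fin (e+3)) K ⧸ (I ⊔ mxR K (e+3))) := Algebra.linearMap _ _
  have hπ : ∀ r, π (Ideal.Quotient.mk I r) = Ideal.Quotient.mk _ r := fun r => rfl
  have hR : Res K ((mxR K (e+3)).map (Ideal.Quotient.mk I)) π := by
    refine ⟨?_, ?_, G.ne, G.res⟩
    · intro x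
      obtain ⟨r, rfl⟩ := Ideal.Quotient.mk_surjective x
      exact ⟨_, hπ r⟩
    · intro r
      obtain ⟨r, rfl⟩ := Ideal.Quotient.mk_surjective r
      rw [hπ, Ideal.Quotient.eq_zero_iff_mem]
      rw [Ideal.mem_quotient_iff_mem_sup, sup_comm]
  let P := ProjectiveResolution.of
    (ModuleCat.of (MvPowerSeries (Fin (e+3)) K ⧸ I) (MvPowerSeries (Fin (e+3)) K ⧸ (I ⊔ mxR K (e+3))))
  have h1 := G.main hR P j
  have h2 := ell_congr K (torIso P j (ModuleCat.of _ (MvPowerSeries (Fin (e+3)) K ⧸ (I ⊔ mxR K (e+3))))).toLinearEquiv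
  have h3 := ell_finrank _ _ _ (h2.trans h1)
  exact h3

end HypS

set_option linter.style.haveILetI false
section HypI
universe u
variable {K : Type u} [Field K] {n : ℕ}

lemma hc_smul (d : ℕ) (c : K) (f : MvPowerSeries (Fin n) K) : hc d (c • f) = c • hc d f := by
  ext α
  simp only [coeff_hc, map_smul, smul_eq_mul, mul_ite, mul_zero]

lemma smul_memI (J : Ideal (MvPowerSeries (Fin n) K)) (c : K) {f : MvPowerSeries (Fin n) K}
    (h : f ∈ J) : c • f ∈ J := Submodule.smul_of_tower_mem J c h

lemma M_isUnit {r : MvPowerSeries (Fin n) K} (h : r ∉ mxR K n) : IsUnit r := by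
  rw [mxR, RingHom.mem_ker] at h
  exact MvPowerSeries.isUnit_iff_constantCoeff.mpr (isUnit_iff_ne_zero.mpr h)

lemma M_pow_add {d e : ℕ} {f g : MvPowerSeries (Fin n) K} (hf : f ∈ mxR K n ^ d)
    (hg : g ∈ mxR K n ^ e) : f * g ∈ mxR K n ^ (d + e) := by
  rw [pow_add]; exact Ideal.mul_mem_mul hf hg

lemma mul_sub_hc {e : ℕ} {t b : MvPowerSeries (Fin n) K} (ht : t ∈ mxR K n ^ e)
    (hb : b ∈ mxR K n ^ 1) : t * b - hc e t * hc 1 b ∈ mxR K n ^ (e + 2) := by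
  have : t * b - hc e t * hc 1 b = (t - hc e t) * b + hc e t * (b - hc 1 b) := by ring
  rw [this]
  exact Ideal.add_mem _ (M_pow_add (d := e + 1) (e := 1) (sub_hc_mem ht) hb)
    (M_pow_add (hc_mem e t) (sub_hc_mem hb))

variable {I : Ideal (MvPowerSeries (Fin n) K)} {s a b : MvPowerSeries (Fin n) K}

lemma mul_mem_sup {J : Ideal (MvPowerSeries (Fin n) K)} {d e : ℕ} {f g : MvPowerSeries (Fin n) K}
    (hf : f ∈ J ⊔ mxR K n ^ d) (hg : g ∈ mxR K n ^ e) : f * g ∈ J ⊔ mxR K n ^ (d + e) := by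
  obtain ⟨p, hp, q, hq, rfl⟩ := Submodule.mem_sup.mp hf
  rw [add_mul]
  exact Ideal.add_mem _ (Ideal.mem_sup_left (Ideal.mul_mem_right _ _ hp))
    (Ideal.mem_sup_right (M_pow_add hq hg))

namespace Hyp

lemma bM (H : Hyp I s a b) : b ∈ mxR K n := by
  have := H.gor.bm
  rwa [Ideal.mem_quotient_iff_mem_sup, sup_eq_left.mpr H.IM] at this

lemma a2 (H : Hyp I s a b) : a ∉ I ⊔ mxR K n ^ 2 := by
  rw [← mem_map_pow]; exact H.gor.a_nm2

lemma b2 (H : Hyp I s a b) : b ∉ I ⊔ mxR K n ^ 2 := by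
  rw [← mem_map_pow]; exact H.gor.symm.a_nm2

lemma sup4 (H : Hyp I s a b) : I ⊔ mxR K n ^ 4 = I := sup_eq_left.mpr H.M4

lemma cl (H : Hyp I s a b) {v : MvPowerSeries (Fin n) K} (h : ∀ w ∈ mxR K n ^ 2, v * w ∈ I) :
    v ∈ I ⊔ mxR K n ^ 2 := by
  rw [← mem_map_pow]
  refine H.gor.clB ?_
  intro w hw
  obtain ⟨w, rfl⟩ := Ideal.Quotient.mk_surjective w
  rw [mem_map_pow] at hw
  obtain ⟨p, hp, q, hq, rfl⟩ := Submodule.mem_sup.mp hw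
  rw [← map_mul, Ideal.Quotient.eq_zero_iff_mem, mul_add]
  exact Ideal.add_mem _ (Ideal.mul_mem_left _ _ hp) (h q hq)

lemma soc3 (H : Hyp I s a b) {r : MvPowerSeries (Fin n) K} (h : r ∈ mxR K n ^ 3) :
    ∃ c : K, r - c • s ∈ I := by
  refine (H.soc r).mp fun x hx => H.M4 ?_
  exact M_pow_add (d := 3) (e := 1) h (by rwa [pow_one])

lemma w_aux {a' s' : MvPowerSeries (Fin n) K}
    (h : ∃ w ∈ ((mxR K n).map (Ideal.Quotient.mk I)) ^ 2,
      Ideal.Quotient.mk I a' * w = Ideal.Quotient.mk I s') :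
    ∃ w ∈ mxR K n ^ 2, w * a' - s' ∈ I := by
  obtain ⟨w, hw, hws⟩ := h
  obtain ⟨w, rfl⟩ := Ideal.Quotient.mk_surjective w
  rw [mem_map_pow] at hw
  obtain ⟨p, hp, q, hq, rfl⟩ := Submodule.mem_sup.mp hw
  refine ⟨q, hq, ?_⟩
  rw [← map_mul, ← sub_eq_zero, ← map_sub, Ideal.Quotient.eq_zero_iff_mem] at hws
  have : q * a' - s' = (a' * (p + q) - s') - a' * p := by ring
  rw [this]
  exact Ideal.sub_mem _ hws (Ideal.mul_mem_left _ _ hp)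

lemma unit_arg (_ : Hyp I s a b) {t x : MvPowerSeries (Fin n) K} (h : t * x ∈ I ⊔ mxR K n ^ 2)
    (hx : x ∉ I ⊔ mxR K n ^ 2) : t ∈ mxR K n := by
  by_contra hc
  obtain ⟨u, rfl⟩ := M_isUnit hc
  have := Ideal.mul_mem_left _ (↑u⁻¹ : MvPowerSeries (Fin n) K) h
  rw [← mul_assoc, Units.inv_mul, one_mul] at this
  exact hx this

lemma homog (H : Hyp I s a b) : ∃ s', hc 3 s' = s' ∧ Hyp I s' a b := by
  have h1 := H.gor.s3
  rw [mem_map_pow] at h1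
  obtain ⟨p, hp, q, hq, hpq⟩ := Submodule.mem_sup.mp h1
  have h2 : s - hc 3 q ∈ I := by
    have : s - hc 3 q = p + (q - hc 3 q) := by rw [← hpq]; ring
    rw [this]
    exact Ideal.add_mem _ hp (H.M4 (sub_hc_mem hq))
  refine ⟨hc 3 q, by rw [hc_hc, if_pos rfl], ⟨H.IM, H.M4, ?_, ?_, H.hn, H.dim, H.a0, H.am, H.hab⟩⟩
  · intro h
    have := Ideal.add_mem _ h2 h
    rw [sub_add_cancel] at this
    exact H.s0 this
  · intro r
    rw [H.soc]
    refine exists_congr fun c => ?_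
    have h3 : r - c • hc 3 q = (r - c • s) + c • (s - hc 3 q) := by rw [smul_sub]; ring
    rw [h3]
    exact (Ideal.add_mem_iff_left _ (smul_memI I c h2)).symm

lemma initial (H : Hyp I s a b) (hs : hc 3 s = s) : Hyp (initialIdeal I) s (hc 1 a) (hc 1 b) := by
  have hs3 : s ∈ mxR K n ^ 3 := by rw [← hs]; exact hc_mem 3 s
  have ha1 : a ∈ mxR K n ^ 1 := by rw [pow_one]; exact H.am
  have hb1 : b ∈ mxR K n ^ 1 := by rw [pow_one]; exact H.bM
  have hIM : initialIdeal I ≤ mxR K n := by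
    intro f hf
    have h1 := hc_of_initial hf 0
    have h0 : f - hc 0 f ∈ mxR K n ^ 1 := sub_hc_mem (by simp)
    rw [zero_add, pow_one, sup_eq_right.mpr H.IM] at h1
    rw [pow_one] at h0
    have := Ideal.add_mem _ h0 h1
    rwa [sub_add_cancel] at this
  have hh1 : ∀ f : MvPowerSeries (Fin n) K, hc 1 (hc 1 f) = hc 1 f := fun f => by rw [hc_hc, if_pos rfl]
  have hI : ∀ f ∈ initialIdeal I, f ∈ I ⊔ mxR K n ^ 2 := by
    intro f hf
    have h1 := hc_of_initial hf 1
    have h0 := sub_hc_mem (d := 1) (f := f) (by rw [pow_one]; exact hIM hf)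
    have := Ideal.add_mem _ (Ideal.mem_sup_right (S := I) h0) h1
    rwa [sub_add_cancel] at this
  have hsup : initialIdeal I ⊔ mxR K n ^ 2 = I ⊔ mxR K n ^ 2 := by
    refine le_antisymm (sup_le hI le_sup_right) (sup_le ?_ le_sup_right)
    intro f hf
    have h0 := sub_hc_mem (d := 1) (f := f) (by rw [pow_one]; exact H.IM hf)
    have h1 : hc 1 f ∈ initialIdeal I := by
      refine hc_mem_initial ?_
      have := Ideal.sub_mem _ (Ideal.mem_sup_left hf) (Ideal.mem_sup_right (S := I) h0)
      rwa [sub_sub_cancel] at this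
    have := Ideal.add_mem _ (Ideal.mem_sup_right h0) (Ideal.mem_sup_left (T := mxR K n ^ 2) h1)
    rwa [sub_add_cancel] at this
  have hsd : ∀ d, d ≠ 3 → hc d s = 0 := fun d hd => by rw [← hs, hc_hc, if_neg hd]
  refine ⟨hIM, M4_initial H.M4, ?_, ?_, H.hn, by rw [hsup]; exact H.dim, ?_, ?_, ?_⟩
  · intro h
    have := hc_of_initial h 3
    rw [hs, H.sup4] at this
    exact H.s0 this
  · intro r
    constructor
    · intro h
      have hx : ∀ d, ∀ x ∈ mxR K n, hc d r * x ∈ I ⊔ mxR K n ^ (d + 2) := by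
        intro d x hx
        have h1 := hc_of_initial (h (hc 1 x) (by simpa using hc_mem 1 x)) (d + 1)
        rw [hc_mul_hom r (hc 1 x) (hh1 x)] at h1
        have h2 := M_pow_add (hc_mem d r) (sub_hc_mem (d := 1) (f := x) (by rwa [pow_one]))
        have h3 : hc d r * x = hc d r * hc 1 x + hc d r * (x - hc 1 x) := by ring
        rw [h3]
        exact Ideal.add_mem _ h1 (Ideal.mem_sup_right h2)
      obtain ⟨c, hc3⟩ := H.soc3 (hc_mem 3 r)
      refine ⟨c, mem_initial H.M4 ?_ ?_ ?_ ?_⟩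
      · rw [hc_sub, hc_smul, hsd 0 (by norm_num), smul_zero, sub_zero, pow_one]
        exact Ideal.mem_sup_right (H.unit_arg (hx 0 a H.am) H.a2)
      · rw [hc_sub, hc_smul, hsd 1 (by norm_num), smul_zero, sub_zero]
        refine H.cl fun w hw => ?_
        rw [pow_two] at hw
        refine Submodule.mul_induction_on hw ?_ ?_
        · intro x hxm y hy
          have := mul_mem_sup (e := 1) (hx 1 x hxm) (g := y) (by rwa [pow_one])
          rw [← mul_assoc]
          rwa [show 1 + 2 + 1 = 4 from rfl, H.sup4] at this
        · intro x y hx hy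
          rw [mul_add]; exact Ideal.add_mem _ hx hy
      · rw [hc_sub, hc_smul, hsd 2 (by norm_num), smul_zero, sub_zero]
        obtain ⟨c', hc'⟩ := (H.soc (hc 2 r)).mp fun x hxm => by
          have := hx 2 x hxm
          rwa [show 2 + 2 = 4 from rfl, H.sup4] at this
        have := Ideal.add_mem _ (Ideal.mem_sup_left hc')
          (Ideal.mem_sup_right (S := I) (smul_memI _ c' hs3))
        rwa [sub_add_cancel] at this
      · rw [hc_sub, hc_smul, hs]
        exact Ideal.mem_sup_left hc3
    · rintro ⟨c, hc⟩ x hx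
      have h1 : r * x = (r - c • s) * x + (c • s) * x := by ring
      rw [h1]
      refine Ideal.add_mem _ (Ideal.mul_mem_right _ _ hc) (M4_initial H.M4 ?_)
      exact M_pow_add (d := 3) (e := 1) (smul_memI _ c hs3) (by rwa [pow_one])
  · intro h
    refine H.a2 ?_
    have := Ideal.add_mem _ (Ideal.mem_sup_right (S := I) (sub_hc_mem ha1)) (hI _ h)
    rwa [sub_add_cancel] at this
  · simpa using hc_mem 1 a
  · intro r
    constructor
    · intro h
      have hx : ∀ d, hc d r * a ∈ I ⊔ mxR K n ^ (d + 2) := by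
        intro d
        have h1 := hc_of_initial h (d + 1)
        rw [hc_mul_hom r (hc 1 a) (hh1 a)] at h1
        have h2 := M_pow_add (hc_mem d r) (sub_hc_mem ha1)
        have h3 : hc d r * a = hc d r * hc 1 a + hc d r * (a - hc 1 a) := by ring
        rw [h3]
        exact Ideal.add_mem _ h1 (Ideal.mem_sup_right h2)
      have fin : ∀ d t, t ∈ mxR K n ^ d → hc (d + 1) r - t * b ∈ I ⊔ mxR K n ^ (d + 2) →
          hc (d + 1) r - hc d t * hc 1 b ∈ I ⊔ mxR K n ^ (d + 2) := by
        intro d t ht h1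
        have := Ideal.add_mem _ h1 (Ideal.mem_sup_right (S := I) (mul_sub_hc ht hb1))
        rwa [sub_add_sub_cancel] at this
      obtain ⟨t0, ht0⟩ : ∃ t, hc 1 r - hc 0 t * hc 1 b ∈ I ⊔ mxR K n ^ 2 := by
        obtain ⟨i, hi, q, hq, hiq⟩ := Submodule.mem_sup.mp (hx 1)
        obtain ⟨c, hcq⟩ := H.soc3 hq
        obtain ⟨w, hw, hws⟩ := w_aux H.gor.am2
        obtain ⟨t, ht⟩ := (H.hab (hc 1 r - c • w)).mp (by
          have : (hc 1 r - c • w) * a = i + (q - c • s) - c • (w * a - s) := by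
            rw [sub_mul, ← hiq, smul_sub, smul_mul_assoc]; ring
          rw [this]
          exact Ideal.sub_mem _ (Ideal.add_mem _ hi hcq) (smul_memI _ _ hws))
        refine ⟨t, fin 0 t (by simp) ?_⟩
        have := Ideal.add_mem _ (Ideal.mem_sup_left ht)
          (Ideal.mem_sup_right (S := I) (smul_memI _ c hw))
        convert this using 1
        simp only [zero_add]
        ring
      obtain ⟨t1, ht1⟩ : ∃ t, hc 2 r - hc 1 t * hc 1 b ∈ I ⊔ mxR K n ^ 3 := by
        have h2 := hx 2
        rw [show 2 + 2 = 4 from rfl, H.sup4] at h2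
        obtain ⟨t, ht⟩ := (H.hab _).mp h2
        refine ⟨t, fin 1 t ?_ (Ideal.mem_sup_left ht)⟩
        rw [pow_one]
        refine H.unit_arg ?_ H.b2
        have := Ideal.sub_mem _ (Ideal.mem_sup_right (S := I) (hc_mem 2 r)) (Ideal.mem_sup_left ht)
        rwa [sub_sub_cancel] at this
      obtain ⟨t2, ht2⟩ : ∃ t, hc 3 r - hc 2 t * hc 1 b ∈ I ⊔ mxR K n ^ 4 := by
        obtain ⟨c, hc⟩ := H.soc3 (hc_mem 3 r)
        obtain ⟨w, hw, hws⟩ := w_aux H.gor.symm.am2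
        refine ⟨c • w, fin 2 _ (smul_memI _ c hw) (Ideal.mem_sup_left ?_)⟩
        have := Ideal.sub_mem _ hc (smul_memI _ c hws)
        convert this using 1
        rw [smul_sub, smul_mul_assoc]; simp only [Nat.reduceAdd]; ring
      have hT : ∀ d, hc d (hc 0 t0 + hc 1 t1 + hc 2 t2) = hc d (hc 0 t0) + hc d (hc 1 t1) +
        hc d (hc 2 t2) := fun d => by rw [hc_add, hc_add]
      refine ⟨hc 0 t0 + hc 1 t1 + hc 2 t2, mem_initial H.M4 ?_ ?_ ?_ ?_⟩
      · rw [hc_sub, hc_mul_lt (by norm_num) _ _ (hh1 b), sub_zero, pow_one]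
        exact Ideal.mem_sup_right (H.unit_arg (hx 0) H.a2)
      · rw [hc_sub, show hc 1 ((hc 0 t0 + hc 1 t1 + hc 2 t2) * hc 1 b) = _ from
          hc_mul_hom (d := 0) _ _ (hh1 b), hT, hc_hc, hc_hc, hc_hc]
        simpa using ht0
      · rw [hc_sub, show hc 2 ((hc 0 t0 + hc 1 t1 + hc 2 t2) * hc 1 b) = _ from
          hc_mul_hom (d := 1) _ _ (hh1 b), hT, hc_hc, hc_hc, hc_hc]
        simpa using ht1
      · rw [hc_sub, show hc 3 ((hc 0 t0 + hc 1 t1 + hc 2 t2) * hc 1 b) = _ from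
          hc_mul_hom (d := 2) _ _ (hh1 b), hT, hc_hc, hc_hc, hc_hc]
        simpa using ht2
    · rintro ⟨t, ht⟩
      have h1 : r * hc 1 a = (r - t * hc 1 b) * hc 1 a + t * (hc 1 b * hc 1 a) := by ring
      have h2 : hc 2 (hc 1 b * hc 1 a) = hc 1 b * hc 1 a := by
        rw [show hc 2 (hc 1 b * hc 1 a) = _ from hc_mul_hom (d := 1) _ _ (hh1 a), hh1]
      rw [h1]
      refine Ideal.add_mem _ (Ideal.mul_mem_right _ _ ht) (Ideal.mul_mem_left _ _ ?_)
      rw [← h2]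
      refine hc_mem_initial ?_
      rw [h2]
      have h3 : b * a ∈ I := (H.hab b).mpr ⟨1, by simp⟩
      have := Ideal.sub_mem _ (Ideal.mem_sup_left h3)
        (Ideal.mem_sup_right (S := I) (mul_sub_hc (e := 1) hb1 ha1))
      rwa [sub_sub_cancel] at this

end Hyp
end HypI

section Fin
universe u
lemma exists_hyp {K : Type u} [Field K] {n : ℕ} (hn : 3 ≤ n)
    (I : Ideal (MvPowerSeries (Fin n) K))
    (h0 : hilbQ I 0 = 1) (h1 : hilbQ I 1 = n)
    (hm4 : mxR K n ^ 4 ≤ I) (hGor : socDimQ I = 1)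
    (a : MvPowerSeries (Fin n) K ⧸ I) (ha0 : a ≠ 0)
    (ham : a ∈ (mxR K n).map (Ideal.Quotient.mk I))
    (hexact : ∃ b : MvPowerSeries (Fin n) K ⧸ I,
      Submodule.colon (⊥ : Ideal (MvPowerSeries (Fin n) K ⧸ I)) (Ideal.span {a}) =
        Ideal.span {b}) : ∃ s a b, Hyp I s a b := by
  have ht : ∀ J : Ideal (MvPowerSeries (Fin n) K), J = ⊤ →
      Module.finrank K (MvPowerSeries (Fin n) K ⧸ J) = 0 := by
    rintro J rfl
    have : Subsingleton (MvPowerSeries (Fin n) K ⧸ (⊤ : Ideal (MvPowerSeries (Fin n) K))) :=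
      Ideal.Quotient.subsingleton_iff.mpr rfl
    exact Module.finrank_zero_of_subsingleton
  unfold hilbQ at h0 h1
  rw [ht (I ⊔ mxR K n ^ 0) (by simp)] at h0
  have hIM : I ≤ mxR K n := by
    intro r hr
    by_contra hc
    rw [ht (I ⊔ mxR K n ^ (0 + 1))] at h0
    · omega
    · exact Ideal.eq_top_of_isUnit_mem _ (Ideal.mem_sup_left hr) (M_isUnit hc)
  have hz : ∀ r, Ideal.Quotient.mk I r = 0 ↔ r ∈ I := fun r => Ideal.Quotient.eq_zero_iff_mem
  obtain ⟨b, hb⟩ := hexact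
  obtain ⟨a, rfl⟩ := Ideal.Quotient.mk_surjective a
  obtain ⟨b, rfl⟩ := Ideal.Quotient.mk_surjective b
  have hm : ∀ r, Ideal.Quotient.mk I r ∈ (mxR K n).map (Ideal.Quotient.mk I) ↔ r ∈ mxR K n := by
    intro r
    rw [Ideal.mem_quotient_iff_mem_sup, sup_eq_left.mpr hIM]
  unfold socDimQ at hGor
  obtain ⟨⟨v, hv⟩, hv0, hvs⟩ := finrank_eq_one_iff'.mp hGor
  obtain ⟨s, rfl⟩ := Ideal.Quotient.mk_surjective v
  refine ⟨s, a, b, hIM, hm4, ?_, ?_, hn, ?_, ?_, ?_, ?_⟩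
  · intro h
    exact hv0 (Subtype.ext ((hz s).mpr h))
  · have key : ∀ r, Ideal.Quotient.mk I r ∈ (Submodule.colon (⊥ : Ideal (MvPowerSeries (Fin n) K ⧸ I))
      ((mxR K n).map (Ideal.Quotient.mk I))) ↔ ∀ x ∈ mxR K n, r * x ∈ I := by
      intro r
      rw [Submodule.mem_colon]
      constructor
      · intro h x hx
        rw [← hz, map_mul]
        exact h _ ((hm x).mpr hx)
      · intro h x hx
        obtain ⟨x, rfl⟩ := Ideal.Quotient.mk_surjective x
        exact (hz _).mpr (h x ((hm x).mp hx))
    intro r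
    rw [← key]
    constructor
    · intro h
      obtain ⟨c, hc⟩ := hvs ⟨_, h⟩
      refine ⟨c, ?_⟩
      have := congrArg Subtype.val hc
      rw [← hz, map_sub, sub_eq_zero]
      exact this.symm
    · rintro ⟨c, hc⟩
      rw [← hz, map_sub, sub_eq_zero] at hc
      rw [hc]
      exact Submodule.smul_of_tower_mem _ c hv
  · rw [Nat.sub_zero] at h0
    have h2 : Module.finrank K (MvPowerSeries (Fin n) K ⧸ (I ⊔ mxR K n ^ 2)) -
      Module.finrank K (MvPowerSeries (Fin n) K ⧸ (I ⊔ mxR K n ^ 1)) = n := h1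
    have h3 : Module.finrank K (MvPowerSeries (Fin n) K ⧸ (I ⊔ mxR K n ^ 1)) = 1 := h0
    omega
  · rwa [← hz]
  · exact (hm a).mp ham
  · intro r
    have h2 : Ideal.Quotient.mk I r ∈ Submodule.colon (⊥ : Ideal (MvPowerSeries (Fin n) K ⧸ I))
        (Ideal.span {Ideal.Quotient.mk I a}) ↔ r * a ∈ I := by
      rw [Submodule.mem_colon]
      constructor
      · intro h
        rw [← hz, map_mul]
        exact h _ (Ideal.subset_span rfl)
      · intro h x hx
        obtain ⟨y, rfl⟩ := Ideal.mem_span_singleton'.mp hx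
        change Ideal.Quotient.mk I r * (y * Ideal.Quotient.mk I a) = 0
        rw [mul_left_comm, ← map_mul, (hz _).mpr h, mul_zero]
    rw [← h2, hb, Ideal.mem_span_singleton']
    constructor
    · rintro ⟨t, ht⟩
      obtain ⟨t, rfl⟩ := Ideal.Quotient.mk_surjective t
      refine ⟨t, ?_⟩
      rw [← hz, map_sub, map_mul, sub_eq_zero]
      exact ht.symm
    · rintro ⟨t, ht⟩
      refine ⟨Ideal.Quotient.mk I t, ?_⟩
      rw [← hz, map_sub, map_mul, sub_eq_zero] at ht
      exact ht.symm

lemma cseq_rat (e : ℕ) : isRationalSeries (PowerSeries.mk fun j => ((cseq e j).2 : ℚ)) := by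
  have hr : ∀ j, ((cseq e (j+2)).2 : ℚ) + (cseq e j).2 = 1 + (e + 2) * (cseq e (j+1)).2 :=
    fun j => by exact_mod_cast cseq_rec e j
  have hr0 : ((cseq e 0).2 : ℚ) = 1 := by simp [cseq]
  have hr1 : ((cseq e 1).2 : ℚ) = e + 3 := by simp [cseq]; ring
  obtain ⟨N, hN⟩ : ∃ N : ℚ, N = e + 3 := ⟨_, rfl⟩
  refine ⟨1, 1 - Polynomial.C N * Polynomial.X + Polynomial.C N * Polynomial.X ^ 2
    - Polynomial.X ^ 3, ?_, ?_⟩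
  · intro h
    have := congrArg (Polynomial.eval 0) h
    simp at this
  · set P := PowerSeries.mk fun j => ((cseq e j).2 : ℚ) with hP
    have hc : ∀ j, PowerSeries.coeff j P = (cseq e j).2 := fun j => PowerSeries.coeff_mk _ _
    have h1 : ((1 - Polynomial.C N * Polynomial.X + Polynomial.C N * Polynomial.X ^ 2
      - Polynomial.X ^ 3 : Polynomial ℚ) : PowerSeries ℚ) * P =
      P - PowerSeries.C N * (PowerSeries.X ^ 1 * P) +
        PowerSeries.C N * (PowerSeries.X ^ 2 * P) - PowerSeries.X ^ 3 * P := by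
      push_cast
      ring
    rw [h1]
    ext j
    simp only [map_add, map_sub, PowerSeries.coeff_C_mul, PowerSeries.coeff_X_pow_mul', hc,
      Polynomial.coe_one, PowerSeries.coeff_one]
    match j with
    | 0 => simp [hr0]
    | 1 => simp [hr0, hr1, hN]
    | 2 => have := hr 0
           simp [hr0, hr1] at this ⊢
           rw [hN]; linarith
    | j + 3 =>
      have h2 := hr j
      have h3 := hr (j + 1)
      simp
      rw [hN]; linarith

end Fin

/-- (Henriques–Şega.)  Let `A = R/I` be an Artinian Gorenstein local `K`-algebra
with `m^4 = 0` and `HF_A(1) = n ≥ 3` admitting an exact zero divisor (a nonzero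
`a ∈ m` with `(0 : a)` principal).  Then the Poincaré series
`P^A_K(z) = Σ_j dim_K Tor_j^A(K,K) z^j` is rational, and it equals the Poincaré
series of the associated graded ring `gr_m(A) = R/I^*`. -/
theorem poincare_series_rational_of_exact_zero_divisor
    {K : Type*} [Field K] [IsAlgClosed K] [CharZero K] {n : ℕ} (hn : 3 ≤ n)
    (I : Ideal (MvPowerSeries (Fin n) K))
    (h0 : hilbQ I 0 = 1) (h1 : hilbQ I 1 = n)
    (hm4 : mxR K n ^ 4 ≤ I) (hGor : socDimQ I = 1)
    (a : MvPowerSeries (Fin n) K ⧸ I) (ha0 : a ≠ 0)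
    (ham : a ∈ (mxR K n).map (Ideal.Quotient.mk I))
    (hexact : ∃ b : MvPowerSeries (Fin n) K ⧸ I,
      Submodule.colon (⊥ : Ideal (MvPowerSeries (Fin n) K ⧸ I)) (Ideal.span {a}) =
        Ideal.span {b}) :
    isRationalSeries (PowerSeries.mk fun j => (bettiQ I j : ℚ)) ∧
      PowerSeries.mk (fun j => (bettiQ I j : ℚ)) =
        PowerSeries.mk (fun j => (bettiQ (initialIdeal I) j : ℚ)) := by
  obtain ⟨s, a', b, H0⟩ := exists_hyp hn I h0 h1 hm4 hGor a ha0 ham hexact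
  obtain ⟨s', hs, H⟩ := H0.homog
  have e1 : ∀ j, bettiQ I j = (cseq (n - 3) j).2 := H.betti
  have e2 : ∀ j, bettiQ (initialIdeal I) j = (cseq (n - 3) j).2 := (H.initial hs).betti
  simp only [e1, e2]
  exact ⟨cseq_rat (n - 3), trivial⟩
end
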